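/- Let q ≡ 1 (mod 6) be a fixed prime power. For every real s with 1/3 < s < 1, as g → ∞ one has (1/|𝔥(3g)|) ∑_{χ∈𝔥(3g)} L(s,χ) → M_q(s); that is, the average value of L(s,χ) over 𝔥(3g) is asymptotic to M_q(s). -/

import Mathlib

open Polynomial Finset Filter
open scoped Classical

noncomputable section

/-- The monic polynomial `X^n + ∑_{i<n} c i · X^i`; as `c` ranges over `Fin n → Fq`
this parametrizes the monic polynomials of degree `n` over `Fq`. -/
def monicOf {Fq : Type} [Field Fq] (n : ℕ) (c : Fin n → Fq) : Polynomial Fq :=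
  X ^ n + ∑ i : Fin n, C (c i) * X ^ (i : ℕ)

/-- Sum of `φ` over the monic polynomials of degree `n` in `Fq[T]`. -/
def sumMonic {Fq : Type} [Field Fq] [Fintype Fq] (n : ℕ) (φ : Polynomial Fq → ℂ) : ℂ :=
  ∑ c : Fin n → Fq, φ (monicOf n c)

/-- Sum of `φ` over the squarefree monic polynomials of degree `n` in `Fq[T]`. -/
def sumSqfree {Fq : Type} [Field Fq] [Fintype Fq] (n : ℕ) (φ : Polynomial Fq → ℂ) : ℂ :=
  ∑ c : Fin n → Fq, if Squarefree (monicOf n c) then φ (monicOf n c) else 0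

/-- `L(s,χ) = ∑_{F monic} χ(F)|F|^{-s}`, grouped by degree.  For the characters in this
paper the coefficient sums vanish in large degree, so this is a finite sum giving the
analytic continuation of the Dirichlet series. -/
def Lval {Fq : Type} [Field Fq] [Fintype Fq] (q : ℕ) (s : ℝ) (χ : Polynomial Fq → ℂ) : ℂ :=
  ∑' n : ℕ, sumMonic n χ * ((q : ℝ) ^ (-s * (n : ℝ)) : ℝ)

/-- `𝓛(u,χ) = ∑_{F monic} χ(F) u^{deg F}`, grouped by degree. -/
def Lu {Fq : Type} [Field Fq] [Fintype Fq] (u : ℂ) (χ : Polynomial Fq → ℂ) : ℂ :=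
  ∑' n : ℕ, sumMonic n χ * u ^ n

/-- `chi` is the family of cubic residue symbols `chi F = χ_F` on `Fq[T]` determined by the
isomorphism `Ω` from the cube roots of unity of `Fq^*` to `μ₃ ⊂ ℂ^*`. -/
structure IsCubicSymbol (q : ℕ) {Fq : Type} [Field Fq] [Fintype Fq]
    (Ω : Fq → ℂ) (chi : Polynomial Fq → Polynomial Fq → ℂ) : Prop where
  omega_mul : ∀ a b : Fq, a ^ 3 = 1 → b ^ 3 = 1 → Ω (a * b) = Ω a * Ω b
  omega_cube : ∀ a : Fq, a ^ 3 = 1 → (Ω a) ^ 3 = 1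
  omega_inj : ∀ a b : Fq, a ^ 3 = 1 → b ^ 3 = 1 → Ω a = Ω b → a = b
  omega_surj : ∀ z : ℂ, z ^ 3 = 1 → ∃ a : Fq, a ^ 3 = 1 ∧ Ω a = z
  chi_one : ∀ a : Polynomial Fq, chi 1 a = 1
  chi_mul_left : ∀ F G a : Polynomial Fq, F.Monic → G.Monic →
    chi (F * G) a = chi F a * chi G a
  chi_prime_dvd : ∀ P a : Polynomial Fq, P.Monic → Irreducible P → P ∣ a → chi P a = 0
  chi_prime_not_dvd : ∀ P a : Polynomial Fq, P.Monic → Irreducible P → ¬ P ∣ a →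
    ∃ c : Fq, c ^ 3 = 1 ∧ Ω c = chi P a ∧ P ∣ (a ^ ((q ^ P.natDegree - 1) / 3) - C c)

/-- The monic irreducible polynomials over `Fq`. -/
def MonicIrred (Fq : Type) [Field Fq] : Type := {P : Polynomial Fq // P.Monic ∧ Irreducible P}

/-- `|P| = q^{deg P}` as a real number. -/
def normP {Fq : Type} [Field Fq] (q : ℕ) (P : MonicIrred Fq) : ℝ := (q : ℝ) ^ P.1.natDegree

/-- `C_q = ∏_P (1 - 1/(|P|(|P|+1)))`. -/
def Cq (q : ℕ) (Fq : Type) [Field Fq] : ℝ :=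
  ∏' P : MonicIrred Fq, (1 - (normP q P * (normP q P + 1))⁻¹)

/-- `M_q(s) = ζ_q(3s) ∏_P (1 - |P|^{-3s}/(|P|+1))`. -/
def Mq (q : ℕ) (Fq : Type) [Field Fq] (s : ℝ) : ℝ :=
  (1 - (q : ℝ) ^ (1 - 3 * s))⁻¹ *
    ∏' P : MonicIrred Fq, (1 - (normP q P) ^ (-3 * s) * (normP q P + 1)⁻¹)

/-!
Over squarefree `F` of degree `N = 3g + 1` the sum of `L(s, χ_F)` is `∑ₙ charSum N n · q^{-sn}`,
where `charSum N n = ∑_F ∑_f χ_F(f)` with `f` monic of degree `n`; it vanishes for `n ≥ N` by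
orthogonality. For fixed `n` only the cubes `f = h³` contribute to the main term: they count the
`F` coprime to `h`, and summing the resulting densities over `h` gives the Euler product `M_q(s)`.

Exchanging limit and sum, by dominated convergence, needs the uniform bound
`charSum N n = O(q^{N + n/3})`, which makes the series converge for `s > 1/3`. This is elementary,
with no appeal to the Riemann hypothesis for curves. For `7n ≤ 3N`, sieving the squares out of `F`
and applying reciprocity leaves complete sums of `F ↦ χ_f(F)`, which vanish unless `f` is a constant
times a cube, and short ones. For larger `n` one bounds, by induction on `N`, the sums over all `F`
and all `f` in a ball around `aF/m`. Detecting squarefreeness of `F` by the Möbius function, and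
replacing the resulting twist by a square with an average over a residue class, reduces such a sum
to sums of the same shape with `N` replaced by `N - 3d`, and to sums of `χ_f(g)` over the vectors
`(g, f)` of a box in a two-dimensional lattice. Along a line of the lattice that symbol is a
constant times a symbol of fixed modulus, so the sum cancels on all but few lines. Sums over balls
around `0` vanish outright: scaling `f` by constants multiplies them by a nontrivial cubic
character, because `N ≡ 1 (mod 3)`.
-/

/-! ### The cubic residue symbol -/

lemma algebraNorm_adjoinRoot_mk_eq_resultant {K : Type*} [Field K] [PerfectField K] {P : K[X]}
    (hP : P.Monic) (hPi : Irreducible P) (Q : K[X]) :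
    Algebra.norm K (AdjoinRoot.mk P Q) = resultant P Q := by
  have : Fact (Irreducible P) := ⟨hPi⟩
  have : FiniteDimensional K (AdjoinRoot P) := (AdjoinRoot.powerBasis hPi.ne_zero).finite
  let E := AlgebraicClosure K
  let pb := AdjoinRoot.powerBasis hPi.ne_zero
  have minpoly_gen : minpoly K pb.gen = P := AdjoinRoot.minpoly_powerBasis_gen_of_monic hP
  have resultant_eq : algebraMap K E (resultant P Q) =
      ((P.map (algebraMap K E)).roots.map (Q.map (algebraMap K E)).eval).prod := by
    have := resultant_eq_prod_eval (P.map (algebraMap K E)) (Q.map (algebraMap K E)) Q.natDegree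
      natDegree_map_le (IsAlgClosed.splits _)
    rw [natDegree_map] at this
    rw [← resultant_map_map, this, (hP.map _).leadingCoeff, one_pow, one_mul]
  have roots_nodup : (P.map (algebraMap K E)).roots.Nodup :=
    nodup_roots (PerfectField.separable_of_irreducible hPi).map
  apply (algebraMap K E).injective
  rw [Algebra.norm_eq_prod_embeddings, resultant_eq,
    Finset.prod_equiv (t := Finset.univ) (pb.liftEquiv' : (AdjoinRoot P →ₐ[K] E) ≃ _)
      (g := fun x => (Q.map (algebraMap K E)).eval x.1)]
  · have roots_eq : (P.map (algebraMap K E)).roots =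
        ((minpoly K pb.gen).map (algebraMap K E)).roots := by rw [minpoly_gen]
    rw [roots_eq] at roots_nodup ⊢
    rw [Finset.prod_mem_multiset _ _ (fun x => (Q.map (algebraMap K E)).eval x)
      (fun x => rfl), Finset.prod_eq_multiset_prod, Multiset.toFinset_val,
      Multiset.dedup_eq_self.mpr roots_nodup]
  · simp only [Finset.mem_univ, implies_true]
  · intro σ _
    rw [PowerBasis.liftEquiv'_apply_coe, AdjoinRoot.powerBasis_gen, eval_map_algebraMap,
      ← AdjoinRoot.aeval_eq, ← aeval_algHom_apply]

@[elab_as_elim]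
lemma monic_induction_on_irreducible {K : Type*} [Field K] {p : K[X] → Prop} {F : K[X]}
    (hF : F.Monic) (one : p 1)
    (mul : ∀ P G : K[X], P.Monic → Irreducible P → G.Monic → p G → p (P * G)) : p F := by
  induction hn : F.natDegree using Nat.strong_induction_on generalizing F with
  | _ n ih =>
    by_cases hu : IsUnit F
    · rwa [hF.eq_one_of_isUnit hu]
    · obtain ⟨P, hP, hPi, G, rfl⟩ := exists_monic_irreducible_factor F hu
      have hG : G.Monic := hP.of_mul_monic_left hF
      refine mul P G hP hPi hG (ih _ ?_ hG rfl)
      rw [hP.natDegree_mul hG] at hn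
      have := hPi.natDegree_pos
      omega

lemma eq_of_dvd_sub_C {K : Type*} [Field K] {P x : K[X]} (hP : Irreducible P) {c d : K}
    (hc : P ∣ x - C c) (hd : P ∣ x - C d) : c = d := by
  by_contra hne
  have h : P ∣ C (c - d) := by
    simpa only [C_sub, sub_sub_sub_cancel_left] using dvd_sub hd hc
  exact hP.not_isUnit (isUnit_of_dvd_unit h (isUnit_C.mpr (sub_ne_zero.mpr hne).isUnit))

lemma finite_adjoinRoot {K : Type*} [Field K] [Finite K] {P : K[X]} (hPi : Irreducible P) :
    Finite (AdjoinRoot P) := by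
  have : FiniteDimensional K (AdjoinRoot P) := (AdjoinRoot.powerBasis hPi.ne_zero).finite
  exact Module.finite_of_finite K

lemma natCard_adjoinRoot {K : Type*} [Field K] {P : K[X]} (hPi : Irreducible P) :
    Nat.card (AdjoinRoot P) = Nat.card K ^ P.natDegree := by
  have : Fact (Irreducible P) := ⟨hPi⟩
  have : FiniteDimensional K (AdjoinRoot P) := (AdjoinRoot.powerBasis hPi.ne_zero).finite
  rw [Module.natCard_eq_pow_finrank (K := K), (AdjoinRoot.powerBasis hPi.ne_zero).finrank,
    AdjoinRoot.powerBasis_dim]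

lemma exists_ne_zero_pow_ne_one {L : Type*} [Field L] [Finite L] {n : ℕ} (hn : n ≠ 0)
    (hn2 : n < Nat.card L - 1) : ∃ x : L, x ≠ 0 ∧ x ^ n ≠ 1 := by
  obtain ⟨g, hg⟩ := exists_pow_ne_one_of_isCyclic (G := Lˣ) hn (by rwa [Nat.card_units])
  exact ⟨g, g.ne_zero, fun h1 => hg (Units.ext (by simpa using h1))⟩

lemma pow_sub_one_div_eq_mul {d q : ℕ} (hd : d ∣ q - 1) (hq : 1 < q) (n : ℕ) :
    (q ^ n - 1) / d = (q ^ n - 1) / (q - 1) * ((q - 1) / d) := by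
  have hdvd : q - 1 ∣ q ^ n - 1 := by simpa using Nat.sub_dvd_pow_sub_pow q 1 n
  rw [Nat.div_mul_div_comm hdvd hd, mul_comm, Nat.mul_div_mul_left _ _ (by omega)]

section Symbol

variable {q : ℕ} {Fq : Type} [Field Fq] [Fintype Fq] {Ω : Fq → ℂ}
  {chi : Fq[X] → Fq[X] → ℂ}

lemma IsCubicSymbol.omega_one (h : IsCubicSymbol q Ω chi) : Ω 1 = 1 := by
  have hmul := h.omega_mul 1 1 (one_pow 3) (one_pow 3)
  have hne : Ω 1 ≠ 0 := fun h0 => by simpa [h0] using h.omega_cube 1 (one_pow 3)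
  rwa [mul_one, left_eq_mul₀ hne] at hmul

lemma IsCubicSymbol.omega_pow (h : IsCubicSymbol q Ω chi) {a : Fq} (ha : a ^ 3 = 1) (n : ℕ) :
    Ω (a ^ n) = Ω a ^ n := by
  induction n with
  | zero => simpa only [pow_zero] using h.omega_one
  | succ n ih =>
    rw [pow_succ, pow_succ, h.omega_mul _ _ (by rw [pow_right_comm, ha, one_pow]) ha, ih]

lemma IsCubicSymbol.eq_omega_of_dvd (h : IsCubicSymbol q Ω chi) {P a : Fq[X]} (hP : P.Monic)
    (hPi : Irreducible P) {c : Fq} (ha : ¬ P ∣ a)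
    (hc : P ∣ a ^ ((q ^ P.natDegree - 1) / 3) - C c) : chi P a = Ω c := by
  obtain ⟨d, -, hd, hPd⟩ := h.chi_prime_not_dvd P a hP hPi ha
  rw [eq_of_dvd_sub_C hPi hc hPd, hd]

lemma IsCubicSymbol.irreducible_eq_zero_iff (h : IsCubicSymbol q Ω chi) {P a : Fq[X]}
    (hP : P.Monic) (hPi : Irreducible P) : chi P a = 0 ↔ P ∣ a := by
  refine ⟨fun h0 => ?_, h.chi_prime_dvd P a hP hPi⟩
  by_contra hna
  obtain ⟨d, hd, hchi, -⟩ := h.chi_prime_not_dvd P a hP hPi hna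
  simpa [hchi, h0] using h.omega_cube d hd

lemma IsCubicSymbol.irreducible_mul_right (h : IsCubicSymbol q Ω chi) {P : Fq[X]} (hP : P.Monic)
    (hPi : Irreducible P) (a b : Fq[X]) : chi P (a * b) = chi P a * chi P b := by
  by_cases ha : P ∣ a
  · rw [h.chi_prime_dvd P a hP hPi ha, h.chi_prime_dvd P _ hP hPi (ha.mul_right _), zero_mul]
  by_cases hb : P ∣ b
  · rw [h.chi_prime_dvd P b hP hPi hb, h.chi_prime_dvd P _ hP hPi (hb.mul_left _), mul_zero]
  obtain ⟨c, hc, hchi_a, hPc⟩ := h.chi_prime_not_dvd P a hP hPi ha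
  obtain ⟨d, hd, hchi_b, hPd⟩ := h.chi_prime_not_dvd P b hP hPi hb
  rw [← hchi_a, ← hchi_b, ← h.omega_mul c d hc hd]
  refine h.eq_omega_of_dvd hP hPi (fun hab => (hPi.prime.dvd_or_dvd hab).elim ha hb) ?_
  rw [mul_pow, C_mul]
  exact dvd_mul_sub_mul hPc hPd

lemma IsCubicSymbol.irreducible_congr (h : IsCubicSymbol q Ω chi) {P : Fq[X]} (hP : P.Monic)
    (hPi : Irreducible P) {a b : Fq[X]} (hab : P ∣ a - b) : chi P a = chi P b := by
  by_cases hb : P ∣ b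
  · rw [h.chi_prime_dvd P b hP hPi hb,
      h.chi_prime_dvd P a hP hPi ((dvd_iff_dvd_of_dvd_sub hab).mpr hb)]
  obtain ⟨d, -, hchi, hPd⟩ := h.chi_prime_not_dvd P b hP hPi hb
  rw [← hchi]
  refine h.eq_omega_of_dvd hP hPi (fun ha => hb ((dvd_iff_dvd_of_dvd_sub hab).mp ha)) ?_
  exact sub_add_sub_cancel (a ^ _) (b ^ _) (C d) ▸
    dvd_add (hab.trans (sub_dvd_pow_sub_pow a b _)) hPd

lemma IsCubicSymbol.mul_right (h : IsCubicSymbol q Ω chi) {F : Fq[X]} (hF : F.Monic)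
    (a b : Fq[X]) : chi F (a * b) = chi F a * chi F b := by
  refine monic_induction_on_irreducible hF ?_ fun P G hP hPi hG ih => ?_
  · simp only [h.chi_one, mul_one]
  · rw [h.chi_mul_left P G _ hP hG, h.chi_mul_left P G _ hP hG, h.chi_mul_left P G _ hP hG, ih,
      h.irreducible_mul_right hP hPi]
    ring

lemma IsCubicSymbol.congr (h : IsCubicSymbol q Ω chi) {F : Fq[X]} (hF : F.Monic)
    {a b : Fq[X]} (hab : F ∣ a - b) : chi F a = chi F b := by
  revert hab
  refine monic_induction_on_irreducible hF ?_ fun P G hP hPi hG ih hab => ?_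
  · simp only [h.chi_one, implies_true]
  · rw [h.chi_mul_left P G _ hP hG, h.chi_mul_left P G _ hP hG, ih ((dvd_mul_left _ _).trans hab),
      h.irreducible_congr hP hPi ((dvd_mul_right _ _).trans hab)]

lemma IsCubicSymbol.eq_zero_iff (h : IsCubicSymbol q Ω chi) {F : Fq[X]} (hF : F.Monic)
    (a : Fq[X]) : chi F a = 0 ↔ ¬ IsCoprime F a := by
  refine monic_induction_on_irreducible hF ?_ fun P G hP hPi hG ih => ?_
  · simp [h.chi_one, isCoprime_one_left]
  · rw [h.chi_mul_left P G _ hP hG, mul_eq_zero, ih, h.irreducible_eq_zero_iff hP hPi,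
      IsCoprime.mul_left_iff, hPi.coprime_iff_not_dvd]
    tauto

lemma IsCubicSymbol.cube_eq_one (h : IsCubicSymbol q Ω chi) {F : Fq[X]} (hF : F.Monic)
    {a : Fq[X]} (hFa : IsCoprime F a) : chi F a ^ 3 = 1 := by
  revert hFa
  refine monic_induction_on_irreducible hF ?_ fun P G hP hPi hG ih hFa => ?_
  · simp only [h.chi_one, one_pow, implies_true]
  · rw [IsCoprime.mul_left_iff, hPi.coprime_iff_not_dvd] at hFa
    obtain ⟨d, hd, hchi, -⟩ := h.chi_prime_not_dvd P a hP hPi hFa.1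
    rw [h.chi_mul_left P G _ hP hG, mul_pow, ih hFa.2, mul_one, ← hchi, h.omega_cube d hd]

lemma IsCubicSymbol.one_right (h : IsCubicSymbol q Ω chi) {F : Fq[X]} (hF : F.Monic) :
    chi F 1 = 1 := by
  have hne : chi F 1 ≠ 0 := fun h0 => (h.eq_zero_iff hF 1).mp h0 isCoprime_one_right
  have hmul := h.mul_right hF 1 1
  rwa [mul_one, left_eq_mul₀ hne] at hmul

lemma IsCubicSymbol.irreducible_eq_resultant (h : IsCubicSymbol q Ω chi)
    (hcard : Fintype.card Fq = q) (h3 : 3 ∣ q - 1) {P a : Fq[X]} (hP : P.Monic)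
    (hPi : Irreducible P) (ha : ¬ P ∣ a) : chi P a = Ω (resultant P a ^ ((q - 1) / 3)) := by
  refine h.eq_omega_of_dvd hP hPi ha ?_
  have : Fact (Irreducible P) := ⟨hPi⟩
  have := finite_adjoinRoot hPi
  rw [← AdjoinRoot.mk_eq_mk, ← algebraNorm_adjoinRoot_mk_eq_resultant hP hPi, AdjoinRoot.mk_C,
    ← AdjoinRoot.algebraMap_eq, map_pow, map_pow, FiniteField.algebraMap_norm_eq_pow,
    natCard_adjoinRoot hPi, Nat.card_eq_fintype_card, hcard, ← pow_mul,
    pow_sub_one_div_eq_mul h3 (hcard ▸ Fintype.one_lt_card)]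

lemma IsCubicSymbol.irreducible_nontrivial (h : IsCubicSymbol q Ω chi)
    (hcard : Fintype.card Fq = q) (h3 : 3 ∣ q - 1) {P : Fq[X]} (hP : P.Monic)
    (hPi : Irreducible P) : ∃ a, chi P a ≠ 0 ∧ chi P a ≠ 1 := by
  have : Fact (Irreducible P) := ⟨hPi⟩
  have := finite_adjoinRoot hPi
  have hq : 1 < q := hcard ▸ Fintype.one_lt_card
  have hle : q ≤ q ^ P.natDegree := Nat.le_self_pow hPi.natDegree_pos.ne' q
  obtain ⟨x, hx0, hx⟩ := exists_ne_zero_pow_ne_one (L := AdjoinRoot P)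
    (n := (q ^ P.natDegree - 1) / 3) (by omega)
    (by rw [natCard_adjoinRoot hPi, Nat.card_eq_fintype_card, hcard]; omega)
  obtain ⟨a, rfl⟩ := AdjoinRoot.mk_surjective x
  have ha : ¬ P ∣ a := fun hd => hx0 (AdjoinRoot.mk_eq_zero.mpr hd)
  obtain ⟨c, hc, hchi, hPc⟩ := h.chi_prime_not_dvd P a hP hPi ha
  refine ⟨a, fun h0 => ha ((h.irreducible_eq_zero_iff hP hPi).mp h0), fun h1 => hx ?_⟩
  have hc1 : c = 1 := h.omega_inj c 1 hc (one_pow 3) (by rw [hchi, h1, h.omega_one])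
  rw [hc1, ← AdjoinRoot.mk_eq_mk] at hPc
  simpa using hPc

lemma IsCubicSymbol.irreducible_reciprocity (h : IsCubicSymbol q Ω chi)
    (hcard : Fintype.card Fq = q) (h6 : 6 ∣ q - 1) {P Q : Fq[X]} (hP : P.Monic)
    (hPi : Irreducible P) (hQ : Q.Monic) (hQi : Irreducible Q) : chi P Q = chi Q P := by
  by_cases hPQ : P ∣ Q
  · rw [eq_of_monic_of_associated hP hQ (hPi.associated_of_dvd hQi hPQ)]
  have hQP : ¬ Q ∣ P := fun hd => hPQ (hQi.associated_of_dvd hPi hd).symm.dvd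
  have h3 : 3 ∣ q - 1 := (by norm_num : 3 ∣ 6).trans h6
  have heven : Even (P.natDegree * Q.natDegree * ((q - 1) / 3)) :=
    (even_iff_two_dvd.mpr (by omega)).mul_left _
  rw [h.irreducible_eq_resultant hcard h3 hP hPi hPQ,
    h.irreducible_eq_resultant hcard h3 hQ hQi hQP, resultant_comm, mul_pow, ← pow_mul,
    heven.neg_one_pow, one_mul]

lemma IsCubicSymbol.reciprocity (h : IsCubicSymbol q Ω chi) (hcard : Fintype.card Fq = q)
    (h6 : 6 ∣ q - 1) {F G : Fq[X]} (hF : F.Monic) (hG : G.Monic) : chi F G = chi G F := by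
  refine monic_induction_on_irreducible hF ?_ fun P F' hP hPi hF' ihF => ?_
  · rw [h.chi_one, h.one_right hG]
  rw [h.chi_mul_left P F' _ hP hF', h.mul_right hG, ihF]
  congr 1
  refine monic_induction_on_irreducible hG ?_ fun Q G' hQ hQi hG' ihG => ?_
  · rw [h.chi_one, h.one_right hP]
  rw [h.chi_mul_left Q G' _ hQ hG', h.mul_right hP, ihG,
    h.irreducible_reciprocity hcard h6 hP hPi hQ hQi]

lemma pow_card_sub_one_div_three_cube (hcard : Fintype.card Fq = q) (h3 : 3 ∣ q - 1) {c : Fq}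
    (hc : c ≠ 0) : (c ^ ((q - 1) / 3)) ^ 3 = 1 := by
  rw [← pow_mul, Nat.div_mul_cancel h3, ← hcard, FiniteField.pow_card_sub_one_eq_one c hc]

lemma IsCubicSymbol.apply_C (h : IsCubicSymbol q Ω chi) (hcard : Fintype.card Fq = q)
    (h3 : 3 ∣ q - 1) {F : Fq[X]} (hF : F.Monic) {c : Fq} (hc : c ≠ 0) :
    chi F (C c) = Ω (c ^ ((q - 1) / 3)) ^ F.natDegree := by
  refine monic_induction_on_irreducible hF ?_ fun P G hP hPi hG ih => ?_
  · simp only [h.chi_one, natDegree_one, pow_zero]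
  have hndvd : ¬ P ∣ C c := fun hd =>
    hPi.not_isUnit (isUnit_of_dvd_unit hd (isUnit_C.mpr hc.isUnit))
  rw [h.chi_mul_left P G _ hP hG, ih, hP.natDegree_mul hG, pow_add,
    h.irreducible_eq_resultant hcard h3 hP hPi hndvd, natDegree_C, resultant_C_zero_right,
    pow_right_comm, h.omega_pow (pow_card_sub_one_div_three_cube hcard h3 hc)]

end Symbol

/-- The formal properties of the cubic residue symbol `br f g = (g / f)₃`, extended to all
nonzero `f` by ignoring the leading coefficient, and of the cubic character `ω` of the constants
that measures the failure of reciprocity for non-monic arguments. -/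
structure CubicSymbolLaws {K : Type*} [Field K] (br : K[X] → K[X] → ℂ) (ω : K → ℂ) : Prop where
  zero_left : ∀ g, br 0 g = 0
  one_left : ∀ g, br 1 g = 1
  mul_left : ∀ f h g, br (f * h) g = br f g * br h g
  mul_right : ∀ f g h, f ≠ 0 → br f (g * h) = br f g * br f h
  unit_left : ∀ c g, c ≠ 0 → br (C c) g = 1
  congr : ∀ f g h, f ∣ g - h → br f g = br f h
  eq_zero_iff : ∀ f g, f ≠ 0 → (br f g = 0 ↔ ¬ IsCoprime f g)
  cube : ∀ f g, f ≠ 0 → IsCoprime f g → br f g ^ 3 = 1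
  nontrivial : ∀ P, Irreducible P → ∃ a, br P a ≠ 0 ∧ br P a ≠ 1
  reciprocity : ∀ f g, f ≠ 0 → g ≠ 0 →
    br f g * ω f.leadingCoeff ^ g.natDegree = br g f * ω g.leadingCoeff ^ f.natDegree
  omega_cube : ∀ c, c ≠ 0 → ω c ^ 3 = 1
  omega_mul : ∀ c d, c ≠ 0 → d ≠ 0 → ω (c * d) = ω c * ω d
  omega_nontrivial : ∃ c, c ≠ 0 ∧ ω c ≠ 1

/-- The extension of a family of symbols `chi f g`, given for monic `f`, to all `f` by normalizing
`f`; the value at `f = 0` is `0`. -/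
def normalizedSymbol {K : Type*} [Field K] (chi : K[X] → K[X] → ℂ) (f g : K[X]) : ℂ :=
  if f = 0 then 0 else chi (normalize f) g

section NormalizedSymbol

variable {K : Type*} [Field K]

lemma normalizedSymbol_of_ne_zero (chi : K[X] → K[X] → ℂ) {f : K[X]} (hf : f ≠ 0) (g : K[X]) :
    normalizedSymbol chi f g = chi (normalize f) g := if_neg hf

lemma normalizedSymbol_of_monic (chi : K[X] → K[X] → ℂ) {f : K[X]} (hf : f.Monic)
    (g : K[X]) : normalizedSymbol chi f g = chi f g := by
  rw [normalizedSymbol_of_ne_zero chi hf.ne_zero, hf.normalize_eq_self]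

lemma C_leadingCoeff_mul_normalize {f : K[X]} (hf : f ≠ 0) :
    C f.leadingCoeff * normalize f = f := by
  rw [normalize_apply, coe_normUnit_of_ne_zero hf, mul_left_comm, ← C_mul,
    mul_inv_cancel₀ (leadingCoeff_ne_zero.mpr hf), C_1, mul_one]

lemma isCoprime_normalize_left {f g : K[X]} : IsCoprime (normalize f) g ↔ IsCoprime f g :=
  ⟨fun h => h.of_isCoprime_of_dvd_left (normalize_associated f).symm.dvd,
    fun h => h.of_isCoprime_of_dvd_left (normalize_associated f).dvd⟩

end NormalizedSymbol

section NormalizedCubicSymbol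

variable {q : ℕ} {Fq : Type} [Field Fq] [Fintype Fq] {Ω : Fq → ℂ} {chi : Fq[X] → Fq[X] → ℂ}

lemma IsCubicSymbol.normalizedSymbol_mul_left (h : IsCubicSymbol q Ω chi) (f k g : Fq[X]) :
    normalizedSymbol chi (f * k) g = normalizedSymbol chi f g * normalizedSymbol chi k g := by
  by_cases hf : f = 0
  · simp only [hf, normalizedSymbol, zero_mul, if_true]
  by_cases hk : k = 0
  · simp only [hk, normalizedSymbol, mul_zero, if_true]
  simp only [normalizedSymbol, hf, hk, mul_eq_zero, or_self, if_false, normalize_mul]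
  exact h.chi_mul_left _ _ _ (monic_normalize hf) (monic_normalize hk)

lemma IsCubicSymbol.normalizedSymbol_eq_omega_mul (h : IsCubicSymbol q Ω chi)
    (hcard : Fintype.card Fq = q) (h3 : 3 ∣ q - 1) {f g : Fq[X]} (hf : f ≠ 0) (hg : g ≠ 0) :
    normalizedSymbol chi f g =
      Ω (g.leadingCoeff ^ ((q - 1) / 3)) ^ f.natDegree * chi (normalize f) (normalize g) := by
  rw [normalizedSymbol_of_ne_zero chi hf]
  conv_lhs => rw [← C_leadingCoeff_mul_normalize hg]
  rw [h.mul_right (monic_normalize hf),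
    h.apply_C hcard h3 (monic_normalize hf) (leadingCoeff_ne_zero.mpr hg),
    natDegree_eq_of_degree_eq degree_normalize]

lemma IsCubicSymbol.normalizedSymbol_reciprocity (h : IsCubicSymbol q Ω chi)
    (hcard : Fintype.card Fq = q) (h6 : 6 ∣ q - 1) {f g : Fq[X]} (hf : f ≠ 0) (hg : g ≠ 0) :
    normalizedSymbol chi f g * Ω (f.leadingCoeff ^ ((q - 1) / 3)) ^ g.natDegree =
      normalizedSymbol chi g f * Ω (g.leadingCoeff ^ ((q - 1) / 3)) ^ f.natDegree := by
  have h3 : 3 ∣ q - 1 := (by norm_num : 3 ∣ 6).trans h6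
  rw [h.normalizedSymbol_eq_omega_mul hcard h3 hf hg,
    h.normalizedSymbol_eq_omega_mul hcard h3 hg hf,
    h.reciprocity hcard h6 (monic_normalize hf) (monic_normalize hg)]
  ring

theorem IsCubicSymbol.cubicSymbolLaws (h : IsCubicSymbol q Ω chi)
    (hcard : Fintype.card Fq = q) (h6 : 6 ∣ q - 1) :
    CubicSymbolLaws (normalizedSymbol chi) (fun c => Ω (c ^ ((q - 1) / 3))) :=
  have h3 : 3 ∣ q - 1 := (by norm_num : 3 ∣ 6).trans h6
  have hcube {c : Fq} (hc : c ≠ 0) := pow_card_sub_one_div_three_cube hcard h3 hc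
  { zero_left := fun _ => if_pos rfl
    one_left := fun g => by rw [normalizedSymbol_of_monic chi monic_one, h.chi_one]
    mul_left := h.normalizedSymbol_mul_left
    mul_right := fun f g k hf => by
      simp only [normalizedSymbol_of_ne_zero chi hf, h.mul_right (monic_normalize hf)]
    unit_left := fun c g hc => by
      rw [normalizedSymbol_of_ne_zero chi (C_ne_zero.mpr hc),
        normalize_eq_one.mpr (isUnit_C.mpr hc.isUnit), h.chi_one]
    congr := fun f g k hd => by
      by_cases hf : f = 0
      · simp only [hf, normalizedSymbol, if_true]
      simp only [normalizedSymbol_of_ne_zero chi hf]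
      exact h.congr (monic_normalize hf) ((normalize_associated f).dvd.trans hd)
    eq_zero_iff := fun f g hf => by
      rw [normalizedSymbol_of_ne_zero chi hf, h.eq_zero_iff (monic_normalize hf),
        isCoprime_normalize_left]
    cube := fun f g hf hfg => by
      rw [normalizedSymbol_of_ne_zero chi hf]
      exact h.cube_eq_one (monic_normalize hf) (isCoprime_normalize_left.mpr hfg)
    nontrivial := fun P hP => by
      simp only [normalizedSymbol_of_ne_zero chi hP.ne_zero]
      exact h.irreducible_nontrivial hcard h3 (monic_normalize hP.ne_zero)
        ((normalize_associated P).symm.irreducible hP)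
    reciprocity := fun f g hf hg => h.normalizedSymbol_reciprocity hcard h6 hf hg
    omega_cube := fun c hc => h.omega_cube _ (hcube hc)
    omega_mul := fun c d hc hd => by rw [mul_pow, h.omega_mul _ _ (hcube hc) (hcube hd)]
    omega_nontrivial := by
      have hq : 1 < q := hcard ▸ Fintype.one_lt_card
      obtain ⟨c, hc0, hc⟩ := exists_ne_zero_pow_ne_one (L := Fq) (n := (q - 1) / 3) (by omega)
        (by rw [Nat.card_eq_fintype_card, hcard]; omega)
      exact ⟨c, hc0, fun h1 => hc
        (h.omega_inj _ _ (hcube hc0) (one_pow 3) (h1.trans h.omega_one.symm))⟩ }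

end NormalizedCubicSymbol

/-! ### Polynomials of bounded degree -/

/-- The elements of a finite set as a finset; the value on an infinite set is `∅`. -/
def finsetOf {α : Type*} (s : Set α) : Finset α := if h : s.Finite then h.toFinset else ∅

lemma mem_finsetOf {α : Type*} {s : Set α} (h : s.Finite) {x : α} : x ∈ finsetOf s ↔ x ∈ s := by
  rw [finsetOf, dif_pos h, Set.Finite.mem_toFinset]

section DegreeLT

variable {K : Type*} [Field K]

lemma mem_degreeLT_iff_natDegree_lt {p : K[X]} {n : ℕ} :
    p ∈ degreeLT K n ↔ p = 0 ∨ p.natDegree < n := by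
  rw [mem_degreeLT]
  by_cases h : p = 0
  · simp [h]
  · rw [← natDegree_lt_iff_degree_lt h, or_iff_right h]

lemma mul_mem_degreeLT_iff {m p : K[X]} (hm : m ≠ 0) {n : ℕ} :
    m * p ∈ degreeLT K n ↔ p ∈ degreeLT K (n - m.natDegree) := by
  rw [mem_degreeLT_iff_natDegree_lt, mem_degreeLT_iff_natDegree_lt]
  by_cases h : p = 0
  · simp [h]
  · simp only [mul_eq_zero, hm, h, natDegree_mul hm h, false_or]
    omega

lemma mod_mem_degreeLT {y : K[X]} (hy : y ≠ 0) (p : K[X]) : p % y ∈ degreeLT K y.natDegree := by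
  rw [mem_degreeLT, ← degree_eq_natDegree hy]
  exact EuclideanDomain.mod_lt p hy

lemma div_mem_degreeLT {y : K[X]} (hy : y ≠ 0) {p : K[X]} {n : ℕ} (hp : p ∈ degreeLT K n) :
    p / y ∈ degreeLT K (n - y.natDegree) := by
  rw [mem_degreeLT_iff_natDegree_lt] at hp ⊢
  rcases hp with rfl | hp
  · simp
  by_cases h : p / y = 0
  · exact Or.inl h
  have hle : y.degree ≤ p.degree := not_lt.mp fun hlt => h ((Polynomial.div_eq_zero_iff hy).mpr hlt)
  have hp0 : p ≠ 0 := fun h0 => h (by rw [h0, EuclideanDomain.zero_div])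
  have hadd : y.natDegree + (p / y).natDegree = p.natDegree := by
    have hdeg := degree_add_div hy hle
    rw [degree_eq_natDegree hy, degree_eq_natDegree h, degree_eq_natDegree hp0] at hdeg
    exact_mod_cast hdeg
  right
  omega

lemma mod_eq_of_dvd_sub_of_mem_degreeLT {y p r : K[X]} (hy : y ≠ 0) (hd : y ∣ p - r)
    (hr : r ∈ degreeLT K y.natDegree) : p % y = r := by
  rw [mem_degreeLT, ← degree_eq_natDegree hy] at hr
  rw [mod_eq_of_dvd_sub hd, (mod_eq_self_iff hy).mpr hr]

lemma dvd_sub_mod (y p : K[X]) : y ∣ p - p % y :=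
  ⟨p / y, by rw [EuclideanDomain.mod_eq_sub_mul_div]; ring⟩

end DegreeLT

section FiniteSets

variable {K : Type*} [Field K]

variable (K) in
/-- The polynomials of degree less than `n` over a finite field. -/
def lowDegree (n : ℕ) : Finset K[X] := finsetOf {p | p ∈ degreeLT K n}

variable (K) in
/-- The monic polynomials of degree `n` over a finite field. -/
def monics (n : ℕ) : Finset K[X] := finsetOf {p | p.Monic ∧ p.natDegree = n}

/-- The polynomials `f` over a finite field such that `m * f - c` has degree less than `M`, that
is, those close to `c / m` at the place at infinity. Meaningful for `m ≠ 0` only. -/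
def approxBall (m c : K[X]) (M : ℕ) : Finset K[X] := finsetOf {f | m * f - c ∈ degreeLT K M}

section Finite

variable [Finite K]

lemma finite_degreeLT (n : ℕ) : {p : K[X] | p ∈ degreeLT K n}.Finite := by
  have : Finite (degreeLT K n) := Finite.of_equiv _ (degreeLTEquiv K n).symm.toEquiv
  exact Set.toFinite (degreeLT K n : Set K[X])

@[simp] lemma mem_lowDegree {n : ℕ} {p : K[X]} : p ∈ lowDegree K n ↔ p ∈ degreeLT K n :=
  mem_finsetOf (finite_degreeLT n)

@[simp] lemma mem_monics {n : ℕ} {p : K[X]} : p ∈ monics K n ↔ p.Monic ∧ p.natDegree = n := by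
  refine mem_finsetOf ((finite_degreeLT (n + 1)).subset fun p hp => ?_)
  exact mem_degreeLT_iff_natDegree_lt.mpr (Or.inr (Nat.lt_succ_of_le hp.2.le))

lemma lowDegree_zero : lowDegree K 0 = {0} :=
  Finset.ext fun p => by
    rw [mem_lowDegree, mem_degreeLT_iff_natDegree_lt, Finset.mem_singleton]
    simp only [not_lt_zero, or_false]

lemma monics_zero : monics K 0 = {1} :=
  Finset.ext fun p => by
    rw [mem_monics, Finset.mem_singleton]
    exact ⟨fun h => h.1.natDegree_eq_zero.mp h.2, fun h => by simp [h]⟩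

lemma mem_approxBall {m c f : K[X]} (hm : m ≠ 0) {M : ℕ} :
    f ∈ approxBall m c M ↔ m * f - c ∈ degreeLT K M :=
  mem_finsetOf <| Set.Finite.preimage (f := fun f => m * f - c)
    (fun _ _ _ _ h => mul_left_cancel₀ hm (sub_left_injective h)) (finite_degreeLT M)

lemma X_pow_add_mem_monics {n : ℕ} {r : K[X]} (hr : r ∈ lowDegree K n) :
    X ^ n + r ∈ monics K n := by
  rw [mem_lowDegree, mem_degreeLT] at hr
  rw [mem_monics, natDegree_add_eq_left_of_degree_lt (by rwa [degree_X_pow]), natDegree_X_pow]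
  exact ⟨monic_X_pow_add hr, rfl⟩

lemma sub_mem_lowDegree_of_mem_monics {n : ℕ} {p r : K[X]} (hp : p ∈ monics K n)
    (hr : r ∈ monics K n) : p - r ∈ lowDegree K n := by
  rw [mem_monics] at hp hr
  have hdeg : p.degree = n := by rw [degree_eq_natDegree hp.1.ne_zero, hp.2]
  rw [mem_lowDegree, mem_degreeLT, ← hdeg]
  refine degree_sub_lt_left ?_ hp.1.ne_zero (by rw [hp.1.leadingCoeff, hr.1.leadingCoeff])
  rw [hdeg, degree_eq_natDegree hr.1.ne_zero, hr.2]

lemma sum_monics_eq_sum_lowDegree {A : Type*} [AddCommMonoid A] (n : ℕ) (φ : K[X] → A) :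
    ∑ p ∈ monics K n, φ p = ∑ r ∈ lowDegree K n, φ (X ^ n + r) :=
  Finset.sum_bij' (fun p _ => p - X ^ n) (fun r _ => X ^ n + r)
    (fun _ hp => sub_mem_lowDegree_of_mem_monics hp
      (mem_monics.mpr ⟨monic_X_pow n, natDegree_X_pow n⟩))
    (fun _ => X_pow_add_mem_monics)
    (fun p _ => add_sub_cancel (X ^ n) p) (fun r _ => add_sub_cancel_left (X ^ n) r)
    (fun p _ => by rw [add_sub_cancel])

lemma sum_lowDegree_eq_sum_mul_add {A : Type*} [AddCommMonoid A] {y : K[X]} (hy : y ≠ 0)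
    (φ : K[X] → A) {u : ℕ} (hu : y.natDegree ≤ u) :
    ∑ r ∈ lowDegree K u, φ r =
      ∑ s ∈ lowDegree K (u - y.natDegree), ∑ r ∈ lowDegree K y.natDegree, φ (y * s + r) := by
  rw [← Finset.sum_product']
  refine Finset.sum_bij' (fun p _ => (p / y, p % y)) (fun sr _ => y * sr.1 + sr.2) ?_ ?_ ?_ ?_ ?_
  · intro p hp
    simp only [Finset.mem_product, mem_lowDegree] at hp ⊢
    exact ⟨div_mem_degreeLT hy hp, mod_mem_degreeLT hy p⟩
  · intro sr hsr
    simp only [Finset.mem_product, mem_lowDegree] at hsr ⊢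
    exact Submodule.add_mem _ ((mul_mem_degreeLT_iff hy).mpr hsr.1) (degreeLT_mono hu hsr.2)
  · exact fun p _ => EuclideanDomain.div_add_mod p y
  · intro sr hsr
    simp only [Finset.mem_product, mem_lowDegree] at hsr
    have hmod : (y * sr.1 + sr.2) % y = sr.2 :=
      mod_eq_of_dvd_sub_of_mem_degreeLT hy (by simp) hsr.2
    refine Prod.ext (mul_left_cancel₀ hy (add_right_cancel (b := sr.2) ?_)) hmod
    simpa only [hmod] using EuclideanDomain.div_add_mod (y * sr.1 + sr.2) y
  · exact fun p _ => by rw [EuclideanDomain.div_add_mod p y]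

lemma sum_lowDegree_natDegree_add {A : Type*} [AddCommMonoid A] {y : K[X]} (hy : y ≠ 0)
    (φ : K[X] → A) (hφ : ∀ g h, y ∣ g - h → φ g = φ h) (z : K[X]) :
    ∑ r ∈ lowDegree K y.natDegree, φ (z + r) = ∑ r ∈ lowDegree K y.natDegree, φ r := by
  refine Finset.sum_bij' (fun r _ => (z + r) % y) (fun r _ => (r - z) % y) ?_ ?_ ?_ ?_ ?_
  · exact fun r _ => mem_lowDegree.mpr (mod_mem_degreeLT hy _)
  · exact fun r _ => mem_lowDegree.mpr (mod_mem_degreeLT hy _)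
  · intro r hr
    refine mod_eq_of_dvd_sub_of_mem_degreeLT hy ?_ (mem_lowDegree.mp hr)
    convert (dvd_sub_mod y (z + r)).neg_right using 1
    ring
  · intro r hr
    refine mod_eq_of_dvd_sub_of_mem_degreeLT hy ?_ (mem_lowDegree.mp hr)
    convert (dvd_sub_mod y (r - z)).neg_right using 1
    ring
  · exact fun r _ => hφ _ _ (dvd_sub_mod y (z + r))

end Finite

variable [Fintype K]

lemma card_lowDegree (n : ℕ) : (lowDegree K n).card = Fintype.card K ^ n := by
  have hcard : Nat.card (lowDegree K n) = Nat.card (Fin n → K) :=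
    Nat.card_congr ((Equiv.subtypeEquivRight fun _ => mem_lowDegree).trans
      (degreeLTEquiv K n).toEquiv)
  rw [Nat.card_eq_fintype_card, Fintype.card_coe] at hcard
  simpa using hcard

lemma card_monics (n : ℕ) : (monics K n).card = Fintype.card K ^ n := by
  simp only [Finset.card_eq_sum_ones, sum_monics_eq_sum_lowDegree, ← card_lowDegree (K := K) n]

lemma sum_lowDegree_of_periodic {A : Type*} [Semiring A] {y : K[X]} (hy : y ≠ 0) (φ : K[X] → A)
    (hφ : ∀ g h, y ∣ g - h → φ g = φ h) (z : K[X]) {u : ℕ} (hu : y.natDegree ≤ u) :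
    ∑ r ∈ lowDegree K u, φ (z + r) =
      (Fintype.card K : A) ^ (u - y.natDegree) * ∑ r ∈ lowDegree K y.natDegree, φ r := by
  have hshift : ∀ s ∈ lowDegree K (u - y.natDegree),
      ∑ r ∈ lowDegree K y.natDegree, φ (z + (y * s + r)) =
        ∑ r ∈ lowDegree K y.natDegree, φ r := fun s _ => by
    simp only [← add_assoc, sum_lowDegree_natDegree_add hy φ hφ]
  rw [sum_lowDegree_eq_sum_mul_add hy (fun r => φ (z + r)) hu, Finset.sum_congr rfl hshift,
    Finset.sum_const, card_lowDegree, nsmul_eq_mul, Nat.cast_pow]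

end FiniteSets

lemma sumMonic_eq_sum_monics {Fq : Type} [Field Fq] [Fintype Fq] (n : ℕ) (φ : Fq[X] → ℂ) :
    sumMonic n φ = ∑ p ∈ monics Fq n, φ p := by
  rw [sum_monics_eq_sum_lowDegree, sumMonic]
  refine Finset.sum_bij' (fun c _ => ∑ i : Fin n, C (c i) * X ^ (i : ℕ))
    (fun r _ i => r.coeff i) ?_ ?_ ?_ ?_ ?_
  · intro c _
    rw [mem_lowDegree]
    refine Submodule.sum_mem _ fun i _ => ?_
    rw [mem_degreeLT]
    exact (degree_C_mul_X_pow_le _ _).trans_lt (by exact_mod_cast i.2)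
  · exact fun r _ => Finset.mem_univ _
  · intro c _
    funext i
    simp [finsetSum_coeff, coeff_C_mul, coeff_X_pow, Fin.val_inj]
  · intro r hr
    rw [mem_lowDegree, mem_degreeLT] at hr
    rw [Fin.sum_univ_eq_sum_range (fun i => C (r.coeff i) * X ^ i) n]
    ext k
    by_cases hk : k < n
    · simp [finsetSum_coeff, coeff_C_mul, coeff_X_pow, hk]
    · have := coeff_eq_zero_of_degree_lt (p := r) (n := k)
        (hr.trans_le (by exact_mod_cast not_lt.mp hk))
      simp [finsetSum_coeff, coeff_C_mul, coeff_X_pow, hk, this]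
  · exact fun c _ => rfl

/-! ### Sums of a cubic symbol over residue classes -/

/-- `y` is a nonzero constant times a cube. These are the moduli `y ≠ 0` for which the cubic symbol
of denominator `y` is trivial. -/
def IsConstMulCube {K : Type*} [Field K] (y : K[X]) : Prop :=
  ∃ (c : K) (e : K[X]), c ≠ 0 ∧ y = C c * e ^ 3

lemma IsConstMulCube.three_dvd_natDegree {K : Type*} [Field K] {y : K[X]}
    (h : IsConstMulCube y) : 3 ∣ y.natDegree := by
  obtain ⟨c, e, hc, rfl⟩ := h
  rw [natDegree_C_mul hc, natDegree_pow]
  exact dvd_mul_right _ _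

lemma IsConstMulCube.isUnit_of_squarefree {K : Type*} [Field K] {y : K[X]}
    (h : IsConstMulCube y) (hs : Squarefree y) : IsUnit y := by
  obtain ⟨c, e, hc, rfl⟩ := h
  have he : IsUnit e := hs e ⟨C c * e, by ring⟩
  exact (isUnit_C.mpr hc.isUnit).mul (he.pow 3)

lemma isCoprime_of_dvd_sub {R : Type*} [CommRing R] {f g h : R} (hd : f ∣ g - h)
    (hc : IsCoprime f h) : IsCoprime f g := by
  obtain ⟨k, hk⟩ := hd
  rw [sub_eq_iff_eq_add'.mp hk]
  exact hc.add_mul_left_right k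

lemma exists_dvd_sub_and_dvd_sub_of_isCoprime {R : Type*} [CommRing R] {f h : R}
    (hfh : IsCoprime f h) (a b : R) : ∃ x, f ∣ x - a ∧ h ∣ x - b := by
  obtain ⟨s, t, hst⟩ := hfh
  exact ⟨a * (t * h) + b * (s * f), ⟨s * (b - a), by linear_combination a * hst⟩,
    ⟨t * (a - b), by linear_combination b * hst⟩⟩

namespace CubicSymbolLaws

variable {K : Type*} [Field K] {br : K[X] → K[X] → ℂ} {ω : K → ℂ}

lemma one_right (S : CubicSymbolLaws br ω) {f : K[X]} (hf : f ≠ 0) : br f 1 = 1 := by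
  have h0 : br f 1 ≠ 0 := fun h => (S.eq_zero_iff f 1 hf).mp h isCoprime_one_right
  have h1 := S.mul_right f 1 1 hf
  rw [mul_one] at h1
  exact (mul_eq_left₀ h0).mp h1.symm

lemma omega_ne_zero (S : CubicSymbolLaws br ω) {c : K} (hc : c ≠ 0) : ω c ≠ 0 := fun h0 => by
  simpa [h0] using S.omega_cube c hc

lemma norm_omega (S : CubicSymbolLaws br ω) {c : K} (hc : c ≠ 0) : ‖ω c‖ = 1 :=
  Complex.norm_eq_one_of_pow_eq_one (S.omega_cube c hc) three_ne_zero

lemma omega_one (S : CubicSymbolLaws br ω) : ω 1 = 1 := by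
  have h1 := S.omega_mul 1 1 one_ne_zero one_ne_zero
  rw [mul_one] at h1
  exact (mul_eq_left₀ (S.omega_ne_zero one_ne_zero)).mp h1.symm

lemma norm_le_one (S : CubicSymbolLaws br ω) (f g : K[X]) : ‖br f g‖ ≤ 1 := by
  by_cases hf : f = 0
  · simp [hf, S.zero_left]
  by_cases hc : IsCoprime f g
  · exact (Complex.norm_eq_one_of_pow_eq_one (S.cube f g hf hc) three_ne_zero).le
  · simp [(S.eq_zero_iff f g hf).mpr hc]

lemma pow_left (S : CubicSymbolLaws br ω) (f g : K[X]) (n : ℕ) : br (f ^ n) g = br f g ^ n := by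
  induction n with
  | zero => simp [S.one_left]
  | succ n ih => rw [pow_succ, S.mul_left, ih, pow_succ]

lemma C_right (S : CubicSymbolLaws br ω) {f : K[X]} (hf : f ≠ 0) {c : K} (hc : c ≠ 0) :
    br f (C c) = ω c ^ f.natDegree := by
  simpa [S.unit_left c f hc] using S.reciprocity f (C c) hf (C_ne_zero.mpr hc)

lemma eq_one_of_mul_eq_one (S : CubicSymbolLaws br ω) {f h : K[X]} (hh : h ≠ 0)
    (hfh : IsCoprime f h) (htriv : ∀ a, IsCoprime (f * h) a → br (f * h) a = 1) {a : K[X]}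
    (ha : IsCoprime f a) : br f a = 1 := by
  obtain ⟨x, hxa, hx1⟩ := exists_dvd_sub_and_dvd_sub_of_isCoprime hfh a 1
  have hx := htriv x <|
    (isCoprime_of_dvd_sub hxa ha).mul_left (isCoprime_of_dvd_sub hx1 isCoprime_one_right)
  rwa [S.mul_left, S.congr f x a hxa, S.congr h x 1 hx1, S.one_right hh, mul_one] at hx

lemma three_dvd_of_pow_eq_one (S : CubicSymbolLaws br ω) {P : K[X]} (hP : Irreducible P) {v : ℕ}
    (htriv : ∀ a, IsCoprime P a → br P a ^ v = 1) : 3 ∣ v := by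
  obtain ⟨a, ha0, ha1⟩ := S.nontrivial P hP
  have hPa : IsCoprime P a := by
    by_contra h
    exact ha0 ((S.eq_zero_iff P a hP.ne_zero).mpr h)
  rw [← orderOf_eq_prime (S.cube P a hP.ne_zero hPa) ha1]
  exact orderOf_dvd_of_pow_eq_one (htriv a hPa)

lemma isConstMulCube_of_eq_one (S : CubicSymbolLaws br ω) {y : K[X]} (hy : y ≠ 0)
    (htriv : ∀ a, IsCoprime y a → br y a = 1) : IsConstMulCube y := by
  induction hn : y.natDegree using Nat.strong_induction_on generalizing y with
  | _ n ih =>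
    by_cases hu : IsUnit y
    · obtain ⟨c, hc, rfl⟩ := Polynomial.isUnit_iff.mp hu
      exact ⟨c, 1, hc.ne_zero, by simp⟩
    obtain ⟨P, -, hP, hPy⟩ := exists_monic_irreducible_factor y hu
    obtain ⟨w, hyw, hPw⟩ :=
      (FiniteMultiplicity.of_not_isUnit hP.not_isUnit hy).exists_eq_pow_mul_and_not_dvd
    have hv : multiplicity P y ≠ 0 := fun h0 => hPw (by
      rw [h0, pow_zero, one_mul] at hyw
      exact hyw ▸ hPy)
    generalize multiplicity P y = v at hyw hv
    subst hyw
    have hw : w ≠ 0 := right_ne_zero_of_mul hy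
    have hcop : IsCoprime (P ^ v) w := (hP.coprime_iff_not_dvd.mpr hPw).pow_left
    obtain ⟨k, rfl⟩ : 3 ∣ v := S.three_dvd_of_pow_eq_one hP fun a ha => by
      rw [← S.pow_left]
      exact S.eq_one_of_mul_eq_one hw hcop htriv ha.pow_left
    have hlt : w.natDegree < n := by
      rw [← hn, natDegree_mul (pow_ne_zero _ hP.ne_zero) hw, natDegree_pow]
      exact Nat.lt_add_of_pos_left (Nat.mul_pos (Nat.pos_of_ne_zero hv) hP.natDegree_pos)
    obtain ⟨c, e, hc, he⟩ := ih w.natDegree hlt hw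
      (fun a => S.eq_one_of_mul_eq_one (pow_ne_zero _ hP.ne_zero) hcop.symm
        (by rwa [mul_comm w])) rfl
    exact ⟨c, P ^ k * e, hc, by rw [he]; ring⟩

variable [Finite K]

lemma sum_lowDegree_natDegree_eq_zero (S : CubicSymbolLaws br ω) {y : K[X]} (hy : y ≠ 0)
    (hc : ¬ IsConstMulCube y) : ∑ r ∈ lowDegree K y.natDegree, br y r = 0 := by
  obtain ⟨a, ⟨s, t, hst⟩, ha1⟩ : ∃ a, IsCoprime y a ∧ br y a ≠ 1 := by
    by_contra! h
    exact hc (S.isConstMulCube_of_eq_one hy h)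
  have hmul : br y a * ∑ r ∈ lowDegree K y.natDegree, br y r =
      ∑ r ∈ lowDegree K y.natDegree, br y r := by
    rw [Finset.mul_sum]
    refine Finset.sum_bij' (fun r _ => (a * r) % y) (fun r _ => (t * r) % y) ?_ ?_ ?_ ?_ ?_
    · exact fun r _ => mem_lowDegree.mpr (mod_mem_degreeLT hy _)
    · exact fun r _ => mem_lowDegree.mpr (mod_mem_degreeLT hy _)
    · intro r hr
      refine mod_eq_of_dvd_sub_of_mem_degreeLT hy ?_ (mem_lowDegree.mp hr)
      obtain ⟨k, hk⟩ := dvd_sub_mod y (a * r)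
      exact ⟨-t * k - s * r, by linear_combination -t * hk + r * hst⟩
    · intro r hr
      refine mod_eq_of_dvd_sub_of_mem_degreeLT hy ?_ (mem_lowDegree.mp hr)
      obtain ⟨k, hk⟩ := dvd_sub_mod y (t * r)
      exact ⟨-a * k - s * r, by linear_combination -a * hk + r * hst⟩
    · intro r _
      rw [← S.mul_right y a r hy]
      exact S.congr _ _ _ (dvd_sub_mod y _)
  by_contra h0
  exact ha1 ((mul_eq_right₀ h0).mp hmul)

lemma sum_lowDegree_add_eq_zero (S : CubicSymbolLaws br ω) {y : K[X]} (hy : y ≠ 0)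
    (hc : ¬ IsConstMulCube y) (z : K[X]) {u : ℕ} (hu : y.natDegree ≤ u) :
    ∑ r ∈ lowDegree K u, br y (z + r) = 0 := by
  have := Fintype.ofFinite K
  rw [sum_lowDegree_of_periodic hy (br y) (S.congr y) z hu,
    S.sum_lowDegree_natDegree_eq_zero hy hc, mul_zero]

lemma sum_monics_eq_zero (S : CubicSymbolLaws br ω) {y : K[X]} (hy : y ≠ 0)
    (hc : ¬ IsConstMulCube y) {n : ℕ} (hn : y.natDegree ≤ n) : ∑ f ∈ monics K n, br y f = 0 := by
  rw [sum_monics_eq_sum_lowDegree]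
  exact S.sum_lowDegree_add_eq_zero hy hc _ hn

end CubicSymbolLaws

/-! ### The symbol along lines of a lattice -/

section Reciprocity

variable {K : Type*} [Field K] {br : K[X] → K[X] → ℂ} {ω : K → ℂ}

/-- The determinant of the pair of vectors `v`, `w`. -/
def wedge {R : Type*} [CommRing R] (v w : R × R) : R := v.1 * w.2 - v.2 * w.1

lemma eq_wedge_smul_add_wedge_smul {R : Type*} [CommRing R] {v v' : R × R}
    (hdet : wedge v v' = 1) (w : R × R) : w = wedge w v' • v + wedge v w • v' := by
  rw [wedge] at hdet
  refine Prod.ext ?_ ?_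
  · simp only [wedge, Prod.fst_add, Prod.smul_fst, smul_eq_mul]
    linear_combination -w.1 * hdet
  · simp only [wedge, Prod.snd_add, Prod.smul_snd, smul_eq_mul]
    linear_combination -w.2 * hdet

lemma exists_isCoprime_add_mul {R : Type*} [CommRing R] [IsDomain R] [IsPrincipalIdealRing R]
    {g f y : R} (h : IsCoprime g f) (hy : y ≠ 0) : ∃ s, IsCoprime y (g + s * f) := by
  let _ := UniqueFactorizationMonoid.strongNormalizationMonoid (α := R)
  let T := (UniqueFactorizationMonoid.normalizedFactors y).toFinset.filter (fun P => ¬ P ∣ g)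
  refine ⟨∏ P ∈ T, P, isCoprime_of_irreducible_dvd (fun h0 => hy h0.1) fun Q hQ hQy hQd => ?_⟩
  obtain ⟨P, hP, hQP⟩ := UniqueFactorizationMonoid.exists_mem_normalizedFactors_of_dvd hy hQ hQy
  have hPirr := UniqueFactorizationMonoid.irreducible_of_normalized_factor P hP
  have hPd : P ∣ g + (∏ P ∈ T, P) * f := hQP.symm.dvd.trans hQd
  by_cases hPg : P ∣ g
  · rcases hPirr.prime.dvd_or_dvd ((dvd_add_right hPg).mp hPd) with hPT | hPf
    · obtain ⟨R, hR, hPR⟩ := hPirr.prime.exists_mem_finset_dvd hPT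
      rw [Finset.mem_filter, Multiset.mem_toFinset] at hR
      have hRirr := UniqueFactorizationMonoid.irreducible_of_normalized_factor R hR.1
      exact hR.2 ((hPirr.associated_of_dvd hRirr hPR).symm.dvd.trans hPg)
    · exact hPirr.not_isUnit (h.isUnit_of_dvd' hPg hPf)
  · have hPT : P ∈ T := Finset.mem_filter.mpr ⟨Multiset.mem_toFinset.mpr hP, hPg⟩
    exact hPg ((dvd_add_left ((Finset.dvd_prod_of_mem _ hPT).mul_right f)).mp hPd)

lemma exists_isCoprime_add_mul_of_lt_natDegree {g f y : K[X]} (h : IsCoprime g f) (hy : y ≠ 0)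
    (k : ℕ) : ∃ s, k < s.natDegree ∧ g + s * f ≠ 0 ∧ IsCoprime y (g + s * f) := by
  obtain ⟨s₀, hs₀⟩ := exists_isCoprime_add_mul h hy
  let j := s₀.natDegree + g.natDegree + k + 1
  have hj : (y * X ^ j).natDegree = y.natDegree + j := natDegree_mul_X_pow j hy
  have hdeg : (s₀ + y * X ^ j).natDegree = y.natDegree + j := by
    rw [natDegree_add_eq_right_of_natDegree_lt (by rw [hj]; omega), hj]
  have hs : s₀ + y * X ^ j ≠ 0 := ne_zero_of_natDegree_gt (n := 0) (by rw [hdeg]; omega)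
  refine ⟨s₀ + y * X ^ j, by rw [hdeg]; omega, fun h0 => ?_, ?_⟩
  · by_cases hf : f = 0
    · rw [hf, mul_zero, add_zero] at h0
      rw [hf, h0] at h
      exact not_isCoprime_zero_zero h
    · have hg := congrArg natDegree (eq_neg_of_add_eq_zero_left h0)
      rw [natDegree_neg, natDegree_mul hs hf, hdeg] at hg
      omega
  · have : g + (s₀ + y * X ^ j) * f = g + s₀ * f + y * (X ^ j * f) := by ring
    rw [this]
    exact hs₀.add_mul_left_right _

lemma CubicSymbolLaws.eq_div_mul_swap (S : CubicSymbolLaws br ω) {f g : K[X]} (hf : f ≠ 0)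
    (hg : g ≠ 0) :
    br f g = ω g.leadingCoeff ^ f.natDegree / ω f.leadingCoeff ^ g.natDegree * br g f := by
  have h := S.omega_ne_zero (leadingCoeff_ne_zero.mpr hf)
  have := S.reciprocity f g hf hg
  field_simp
  linear_combination this

/- If `w = z v + y v'` then `v.1 w.2 - v.2 w.1 = y`, so `br w.1 w.2` is the quotient of
`br w.1 y` and `br w.1 v.1`; after reciprocity, the former only depends on `w.1` modulo `y` and the
latter on `w.1` modulo `v.1`. -/
lemma CubicSymbolLaws.exists_eq_const_mul_of_isCoprime (S : CubicSymbolLaws br ω)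
    {v v' : K[X] × K[X]} {y : K[X]} (hdet : wedge v v' = 1) (hy : y ≠ 0) (hv : v.1 ≠ 0)
    (hyv : IsCoprime y v.1) (d n : ℕ) {k l : K} (hk : k ≠ 0) (hl : l ≠ 0) :
    ∃ κ : ℂ, ∀ w : K[X] × K[X], wedge v w = y → w.1.natDegree = d → w.1.leadingCoeff = k →
      w.2.natDegree = n → w.2.leadingCoeff = l → br w.2 w.1 = κ * br y (wedge w v') := by
  refine ⟨ω k ^ n / ω l ^ d * (ω y.leadingCoeff ^ d / ω k ^ y.natDegree * br y v.1) /
    (ω v.1.leadingCoeff ^ d / ω k ^ v.1.natDegree * br v.1 (v'.1 * y)),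
    fun w hwy hwd hwk hwn hwl => ?_⟩
  have hw := eq_wedge_smul_add_wedge_smul hdet w
  rw [hwy] at hw
  generalize wedge w v' = z at hw ⊢
  have hw1 : w.1 = z * v.1 + y * v'.1 := congrArg Prod.fst hw
  have hw10 : w.1 ≠ 0 := leadingCoeff_ne_zero.mp (hwk ▸ hk)
  have hw20 : w.2 ≠ 0 := leadingCoeff_ne_zero.mp (hwl ▸ hl)
  have hvy : br w.1 v.1 = ω v.1.leadingCoeff ^ d / ω k ^ v.1.natDegree * br v.1 (v'.1 * y) := by
    rw [S.eq_div_mul_swap hw10 hv, hwd, hwk,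
      S.congr v.1 w.1 (v'.1 * y) ⟨z, by rw [hw1]; ring⟩]
  have hyy : br w.1 y = ω y.leadingCoeff ^ d / ω k ^ y.natDegree * br y v.1 * br y z := by
    rw [S.eq_div_mul_swap hw10 hy, hwd, hwk, mul_assoc, ← S.mul_right y v.1 z hy,
      S.congr y w.1 (v.1 * z) ⟨v'.1, by rw [hw1]; ring⟩]
  have hprod : br w.1 v.1 * br w.1 w.2 = br w.1 y := by
    rw [← S.mul_right w.1 v.1 w.2 hw10]
    exact S.congr w.1 _ _ ⟨v.2, by rw [← hwy, wedge]; ring⟩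
  have hne : br w.1 v.1 ≠ 0 := by
    have hvv' : IsCoprime v.1 v'.1 := ⟨v'.2, -v.2, by rw [wedge] at hdet; linear_combination hdet⟩
    rw [hvy]
    refine mul_ne_zero (div_ne_zero ?_ ?_)
      fun h => (S.eq_zero_iff _ _ hv).mp h (hvv'.mul_right hyv.symm)
    · exact pow_ne_zero _ (S.omega_ne_zero (leadingCoeff_ne_zero.mpr hv))
    · exact pow_ne_zero _ (S.omega_ne_zero hk)
  rw [S.eq_div_mul_swap hw20 hw10, hwd, hwk, hwn, hwl, ← hvy, eq_div_of_mul_eq hne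
    ((mul_comm _ _).trans hprod), hyy]
  ring

/- Shearing the lattice by `(g, f) ↦ (g + s f, f)` does not change the symbol; for `s` of large
degree it makes the degree and the leading coefficient of the first entry constant. -/
lemma CubicSymbolLaws.exists_eq_const_mul (S : CubicSymbolLaws br ω) {v v' : K[X] × K[X]}
    {y : K[X]} (hdet : wedge v v' = 1) (hy : y ≠ 0) (R : Finset (K[X] × K[X])) {n : ℕ} {l : K}
    (hl : l ≠ 0) (hR : ∀ w ∈ R, wedge v w = y ∧ w.2.natDegree = n ∧ w.2.leadingCoeff = l) :
    ∃ κ : ℂ, ∀ w ∈ R, br w.2 w.1 = κ * br y (wedge w v') := by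
  have hcop : IsCoprime v.1 v.2 := ⟨v'.2, -v'.1, by rw [wedge] at hdet; linear_combination hdet⟩
  obtain ⟨s, hsdeg, hv0, hyv⟩ := exists_isCoprime_add_mul_of_lt_natDegree hcop hy
    (∑ w ∈ R, w.1.natDegree)
  have hs : s ≠ 0 := ne_zero_of_natDegree_gt hsdeg
  let shear : K[X] × K[X] → K[X] × K[X] := fun w => (w.1 + s * w.2, w.2)
  have wedge_shear : ∀ w₁ w₂, wedge (shear w₁) (shear w₂) = wedge w₁ w₂ := fun w₁ w₂ => by
    simp only [wedge, shear]
    ring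
  obtain ⟨κ, hκ⟩ := S.exists_eq_const_mul_of_isCoprime (v := shear v) (v' := shear v')
    (by rw [wedge_shear, hdet]) hy hv0 hyv (s.natDegree + n) n
    (mul_ne_zero (leadingCoeff_ne_zero.mpr hs) hl) hl
  refine ⟨κ, fun w hw => ?_⟩
  obtain ⟨hwy, hwn, hwl⟩ := hR w hw
  have hw2 : w.2 ≠ 0 := leadingCoeff_ne_zero.mp (hwl ▸ hl)
  have hlt : w.1.natDegree < (s * w.2).natDegree := by
    rw [natDegree_mul hs hw2]
    have := Finset.single_le_sum (f := fun w : K[X] × K[X] => w.1.natDegree)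
      (fun _ _ => Nat.zero_le _) hw
    omega
  have h := hκ (shear w) (by rw [wedge_shear, hwy])
    (by rw [natDegree_add_eq_right_of_natDegree_lt hlt, natDegree_mul hs hw2, hwn])
    (by rw [leadingCoeff_add_of_degree_lt (degree_lt_degree hlt), leadingCoeff_mul, hwl]) hwn hwl
  rw [wedge_shear] at h
  rw [← h]
  exact S.congr _ _ _ ⟨-s, by simp only [shear]; ring⟩

end Reciprocity

section Line

variable {K : Type*} [Field K] {br : K[X] → K[X] → ℂ} {ω : K → ℂ}
  {v v' : K[X] × K[X]} {R : Finset (K[X] × K[X])} {u : ℕ}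

lemma sum_line_eq_sum_lowDegree {A : Type*} [AddCommMonoid A] [Finite K] {y : K[X]}
    (hdet : wedge v v' = 1) (hR : ∀ w ∈ R, wedge v w = y)
    (hline : ∀ w ∈ R, ∀ ζ : K[X], w + ζ • v ∈ R ↔ ζ ∈ degreeLT K u) {w₀ : K[X] × K[X]}
    (hw₀ : w₀ ∈ R) (φ : K[X] × K[X] → A) :
    ∑ w ∈ R, φ w = ∑ ζ ∈ lowDegree K u, φ (w₀ + ζ • v) := by
  have hrep : ∀ w ∈ R, w₀ + (wedge w v' - wedge w₀ v') • v = w := fun w hw => by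
    have h := eq_wedge_smul_add_wedge_smul hdet w
    have h₀ := eq_wedge_smul_add_wedge_smul hdet w₀
    rw [hR w hw] at h
    rw [hR w₀ hw₀] at h₀
    linear_combination (norm := module) h₀ - h
  refine Finset.sum_bij' (fun w _ => wedge w v' - wedge w₀ v') (fun ζ _ => w₀ + ζ • v)
    (fun w hw => ?_) (fun ζ hζ => (hline w₀ hw₀ ζ).mpr (mem_lowDegree.mp hζ)) hrep
    (fun ζ _ => ?_) (fun w hw => by rw [hrep w hw])
  · rw [mem_lowDegree, ← hline w₀ hw₀, hrep w hw]
    exact hw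
  · simp only [wedge, Prod.fst_add, Prod.snd_add, Prod.smul_fst, Prod.smul_snd,
      smul_eq_mul] at hdet ⊢
    linear_combination ζ * hdet

variable [Fintype K]

lemma CubicSymbolLaws.norm_sum_le_card_of_wedge_eq_zero (S : CubicSymbolLaws br ω)
    (hdet : wedge v v' = 1) (hR : ∀ w ∈ R, wedge v w = 0) (hR2 : ∀ w ∈ R, w.2 ≠ 0) :
    ‖∑ w ∈ R, br w.2 w.1‖ ≤ Fintype.card K := by
  have hcoprime : ∀ w ∈ R, br w.2 w.1 ≠ 0 →
      w ∈ (Finset.univ : Finset K).image fun c => C c • v := fun w hw hne => by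
    have hrep : w = wedge w v' • v := by
      simpa only [hR w hw, zero_smul, add_zero] using eq_wedge_smul_add_wedge_smul hdet w
    have hcop : IsCoprime w.2 w.1 := by
      by_contra h
      exact hne ((S.eq_zero_iff _ _ (hR2 w hw)).mpr h)
    have hunit : IsUnit (wedge w v') := hcop.isUnit_of_dvd'
      ⟨v.2, congrArg Prod.snd hrep⟩ ⟨v.1, congrArg Prod.fst hrep⟩
    obtain ⟨c, -, hc⟩ := Polynomial.isUnit_iff.mp hunit
    exact Finset.mem_image.mpr ⟨c, Finset.mem_univ _, by rw [hc, ← hrep]⟩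
  rw [← Finset.sum_filter_of_ne hcoprime]
  refine (norm_sum_le_of_le _ (fun w _ => S.norm_le_one w.2 w.1)).trans ?_
  rw [Finset.sum_const, nsmul_eq_mul, mul_one]
  have hcard : (R.filter fun w => w ∈ (Finset.univ : Finset K).image fun c => C c • v).card ≤
      Fintype.card K :=
    (Finset.card_le_card fun w hw => (Finset.mem_filter.mp hw).2).trans Finset.card_image_le
  exact_mod_cast hcard

lemma CubicSymbolLaws.norm_sum_line_le (S : CubicSymbolLaws br ω) (hdet : wedge v v' = 1)
    {y : K[X]} {n : ℕ} {l : K} (hl : l ≠ 0)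
    (hR : ∀ w ∈ R, wedge v w = y ∧ w.2.natDegree = n ∧ w.2.leadingCoeff = l)
    (hline : ∀ w ∈ R, ∀ ζ : K[X], w + ζ • v ∈ R ↔ ζ ∈ degreeLT K u) (hyu : y.natDegree ≤ u) :
    ‖∑ w ∈ R, br w.2 w.1‖ ≤ (if y = 0 then (Fintype.card K : ℝ) else 0) +
      if y ≠ 0 ∧ IsConstMulCube y then (Fintype.card K : ℝ) ^ u else 0 := by
  by_cases hy : y = 0
  · subst hy
    simpa using S.norm_sum_le_card_of_wedge_eq_zero hdet (fun w hw => (hR w hw).1)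
      fun w hw => leadingCoeff_ne_zero.mp ((hR w hw).2.2 ▸ hl)
  simp only [ne_eq, hy, not_false_eq_true, true_and, ↓reduceIte, zero_add]
  rcases R.eq_empty_or_nonempty with rfl | ⟨w₀, hw₀⟩
  · rw [Finset.sum_empty, norm_zero]
    positivity
  have hsum := fun φ : K[X] × K[X] → ℂ =>
    sum_line_eq_sum_lowDegree hdet (fun w hw => (hR w hw).1) hline hw₀ φ
  split_ifs with hcube
  · rw [hsum]
    refine (norm_sum_le_of_le _ (fun ζ _ => S.norm_le_one _ _)).trans ?_
    rw [Finset.sum_const, nsmul_eq_mul, mul_one, card_lowDegree]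
    push_cast
    exact le_rfl
  · obtain ⟨κ, hκ⟩ := S.exists_eq_const_mul hdet hy R hl hR
    have hwedge : ∀ ζ : K[X], wedge (w₀ + ζ • v) v' = wedge w₀ v' + ζ := fun ζ => by
      simp only [wedge, Prod.fst_add, Prod.snd_add, Prod.smul_fst, Prod.smul_snd,
        smul_eq_mul] at hdet ⊢
      linear_combination ζ * hdet
    rw [Finset.sum_congr rfl hκ, hsum fun w => κ * br y (wedge w v'), ← Finset.mul_sum]
    simp only [hwedge]
    rw [S.sum_lowDegree_add_eq_zero hy hcube _ hyu, mul_zero, norm_zero]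

end Line

/-! ### Lattice sums of the symbol -/

section LatticeForms

variable {K : Type*} [Field K]

/-- The linear form `(g, f) ↦ B g + t f` on the lattice `K[X]²`. -/
def valueForm (B t : K[X]) : K[X] × K[X] →ₗ[K[X]] K[X] :=
  B • LinearMap.fst K[X] K[X] K[X] + t • LinearMap.snd K[X] K[X] K[X]

/-- The linear form `(g, f) ↦ m f - c (B g + t f)` on the lattice `K[X]²`. -/
def errorForm (B t m c : K[X]) : K[X] × K[X] →ₗ[K[X]] K[X] :=
  m • LinearMap.snd K[X] K[X] K[X] - c • valueForm B t

lemma valueForm_apply (B t : K[X]) (w : K[X] × K[X]) :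
    valueForm B t w = B * w.1 + t * w.2 := rfl

lemma errorForm_apply (B t m c : K[X]) (w : K[X] × K[X]) :
    errorForm B t m c w = m * w.2 - c * valueForm B t w := rfl

lemma valueForm_mul_errorForm_sub (B t m c : K[X]) (v w : K[X] × K[X]) :
    valueForm B t v * errorForm B t m c w - errorForm B t m c v * valueForm B t w =
      B * m * wedge v w := by
  simp only [errorForm_apply, valueForm_apply, wedge]
  ring

lemma eq_zero_of_valueForm_eq_zero_of_errorForm_eq_zero {B t m c : K[X]} {w : K[X] × K[X]}
    (hB : B ≠ 0) (hm : m ≠ 0) (h1 : valueForm B t w = 0) (h2 : errorForm B t m c w = 0) :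
    w = 0 := by
  rw [errorForm_apply, h1, mul_zero, sub_zero] at h2
  have hw2 : w.2 = 0 := (mul_eq_zero.mp h2).resolve_left hm
  rw [valueForm_apply, hw2, mul_zero, add_zero] at h1
  exact Prod.ext ((mul_eq_zero.mp h1).resolve_left hB) hw2

lemma mul_mem_degreeLT {p r : K[X]} {a b n : ℕ} (hp : p ∈ degreeLT K a) (hr : r ∈ degreeLT K b)
    (h : 0 < a → 0 < b → a + b ≤ n + 1) : p * r ∈ degreeLT K n := by
  rw [mem_degreeLT_iff_natDegree_lt] at hp hr ⊢
  rcases hp with rfl | hp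
  · simp
  rcases hr with rfl | hr
  · simp
  have := natDegree_mul_le (p := p) (q := r)
  omega

lemma mem_degreeLT_of_mul_mem {z p : K[X]} (hz : z ≠ 0) {n u : ℕ} (hu : u ≤ z.natDegree)
    (h : z * p ∈ degreeLT K n) : p ∈ degreeLT K (n - u) :=
  degreeLT_mono (by omega) ((mul_mem_degreeLT_iff hz).mp h)

lemma add_mem_monics_iff [Finite K] {p r : K[X]} {n : ℕ} (hp : p ∈ monics K n) :
    p + r ∈ monics K n ↔ r ∈ degreeLT K n := by
  refine ⟨fun h => ?_, fun h => ?_⟩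
  · simpa using sub_mem_lowDegree_of_mem_monics h hp
  · rw [mem_monics] at hp ⊢
    have hlt : r.degree < p.degree := by
      rw [degree_eq_natDegree hp.1.ne_zero, hp.2]
      exact mem_degreeLT.mp h
    exact ⟨hp.1.add_of_left hlt, by rw [natDegree_add_eq_left_of_degree_lt hlt, hp.2]⟩

/-- The vectors `w` of the lattice `K[X]²` for which `valueForm B t w` is monic of degree `N` and
`errorForm B t m c w` has degree less than `M`. Meaningful for finite `K` and `B, m ≠ 0` only. -/
def latticeBox (B t m c : K[X]) (N M : ℕ) : Finset (K[X] × K[X]) :=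
  finsetOf {w | valueForm B t w ∈ monics K N ∧ errorForm B t m c w ∈ degreeLT K M}

lemma mem_latticeBox [Finite K] {B t m c : K[X]} (hB : B ≠ 0) (hm : m ≠ 0) {N M : ℕ}
    {w : K[X] × K[X]} : w ∈ latticeBox B t m c N M ↔
      valueForm B t w ∈ monics K N ∧ errorForm B t m c w ∈ degreeLT K M := by
  refine mem_finsetOf (Set.Finite.of_finite_image
    (f := fun w => (valueForm B t w, errorForm B t m c w)) ?_ fun w _ w' _ h => ?_)
  · refine ((monics K N ×ˢ lowDegree K M).finite_toSet).subset ?_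
    rintro _ ⟨w, hw, rfl⟩
    simpa using hw
  · rw [Prod.mk.injEq] at h
    exact sub_eq_zero.mp (eq_zero_of_valueForm_eq_zero_of_errorForm_eq_zero hB hm
      (by rw [map_sub, h.1, sub_self]) (by rw [map_sub, h.2, sub_self]))

lemma natDegree_eq_and_leadingCoeff_eq_of_mul_sub_mem {m c A f : K[X]} (hm : m ≠ 0) (hc : c ≠ 0)
    {M : ℕ} (hM : M ≤ c.natDegree + A.natDegree) (hA : A.Monic)
    (h : m * f - c * A ∈ degreeLT K M) :
    f.natDegree = c.natDegree + A.natDegree - m.natDegree ∧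
      f.leadingCoeff = c.leadingCoeff / m.leadingCoeff := by
  have hcA : (c * A).natDegree = c.natDegree + A.natDegree := natDegree_mul hc hA.ne_zero
  have hlt : (m * f - c * A).degree < (c * A).degree := by
    rw [degree_eq_natDegree (mul_ne_zero hc hA.ne_zero), hcA]
    exact (mem_degreeLT.mp h).trans_le (by exact_mod_cast hM)
  have hmf : m * f = c * A + (m * f - c * A) := by ring
  have hdeg : (m * f).natDegree = c.natDegree + A.natDegree := by
    rw [hmf, natDegree_add_eq_left_of_degree_lt hlt, hcA]
  have hlead : (m * f).leadingCoeff = c.leadingCoeff := by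
    rw [hmf, leadingCoeff_add_of_degree_lt' hlt, leadingCoeff_mul, hA.leadingCoeff, mul_one]
  have hf : f ≠ 0 := by
    rintro rfl
    rw [mul_zero, leadingCoeff_zero] at hlead
    exact hc (leadingCoeff_eq_zero.mp hlead.symm)
  rw [natDegree_mul hm hf] at hdeg
  refine ⟨by omega, ?_⟩
  rw [eq_div_iff (leadingCoeff_ne_zero.mpr hm), ← hlead, leadingCoeff_mul, mul_comm]

variable [Finite K]

-- The pigeonhole principle on the quotient of `K[X]²` by the image of the two forms.
lemma exists_ne_zero_forms_mem_degreeLT {B m : K[X]} (hB : B ≠ 0) (hm : m ≠ 0) (t c : K[X])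
    {h₁ h₂ : ℕ} (h : m.natDegree + B.natDegree + 1 ≤ h₁ + h₂) :
    ∃ w : K[X] × K[X], w ≠ 0 ∧ valueForm B t w ∈ degreeLT K h₁ ∧
      errorForm B t m c w ∈ degreeLT K h₂ := by
  have := Fintype.ofFinite K
  let quot : K[X] × K[X] → K[X] × K[X] := fun p =>
    ((p.1 - t * ((p.2 + c * p.1) / m)) / B, (p.2 + c * p.1) / m)
  let rem : K[X] × K[X] → K[X] × K[X] := fun p =>
    ((p.2 + c * p.1) % m, (p.1 - t * (quot p).2) % B)
  have hvalue : ∀ p, valueForm B t (quot p) = p.1 - (rem p).2 := fun p => by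
    rw [valueForm_apply]
    linear_combination EuclideanDomain.div_add_mod (p.1 - t * (quot p).2) B
  have herror : ∀ p, errorForm B t m c (quot p) = p.2 - (rem p).1 + c * (rem p).2 := fun p => by
    rw [errorForm_apply, hvalue]
    linear_combination EuclideanDomain.div_add_mod (p.2 + c * p.1) m
  obtain ⟨p, hp, p', hp', hne, heq⟩ := Finset.exists_ne_map_eq_of_card_lt_of_maps_to
    (s := lowDegree K h₁ ×ˢ lowDegree K h₂)
    (t := lowDegree K m.natDegree ×ˢ lowDegree K B.natDegree) (f := rem)
    (by
      simp only [Finset.card_product, card_lowDegree, ← pow_add]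
      exact Nat.pow_lt_pow_right Fintype.one_lt_card (by omega))
    (fun p _ => by
      simp only [Finset.coe_product, Set.mem_prod, Finset.mem_coe, mem_lowDegree]
      exact ⟨mod_mem_degreeLT hm _, mod_mem_degreeLT hB _⟩)
  simp only [Finset.mem_product, mem_lowDegree] at hp hp'
  have hvalue' : valueForm B t (quot p - quot p') = p.1 - p'.1 := by
    rw [map_sub, hvalue, hvalue, heq]
    ring
  have herror' : errorForm B t m c (quot p - quot p') = p.2 - p'.2 := by
    rw [map_sub, herror, herror, heq]
    ring
  refine ⟨quot p - quot p', fun h0 => hne ?_, ?_, ?_⟩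
  · rw [h0, map_zero] at hvalue' herror'
    exact Prod.ext (sub_eq_zero.mp hvalue'.symm) (sub_eq_zero.mp herror'.symm)
  · rw [hvalue']
    exact Submodule.sub_mem _ hp.1 hp'.1
  · rw [herror']
    exact Submodule.sub_mem _ hp.2 hp'.2

end LatticeForms

section ExtremalVector

variable {K : Type*} [Field K] {B t m c : K[X]} {N M u : ℕ} {v w : K[X] × K[X]}

/-- `v` is a primitive vector of `K[X]²` that realizes the first successive minimum of the lattice
with respect to boxes of size `(N, M)`: `u` is the largest integer such that a nonzero vector lies
in the box of size `(N + 1 - u, M + 1 - u)`, and `v` is such a vector. -/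
structure IsExtremalVector (B t m c : K[X]) (N M u : ℕ) (v : K[X] × K[X]) : Prop where
  isCoprime : IsCoprime v.1 v.2
  valueForm_mem : valueForm B t v ∈ degreeLT K (N + 1 - u)
  errorForm_mem : errorForm B t m c v ∈ degreeLT K (M + 1 - u)
  le_two_mul : N + M ≤ 2 * u + m.natDegree + B.natDegree
  mem_degreeLT_of_smul : ∀ ζ : K[X], valueForm B t (ζ • v) ∈ degreeLT K N →
    errorForm B t m c (ζ • v) ∈ degreeLT K M → ζ ∈ degreeLT K u

lemma exists_isExtremalVector [Finite K] (hB : B ≠ 0) (hm : m ≠ 0) (t c : K[X])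
    (hw : ∃ w : K[X] × K[X], w ≠ 0 ∧ valueForm B t w ∈ degreeLT K (N + 1) ∧
      errorForm B t m c w ∈ degreeLT K (M + 1)) :
    ∃ u v, IsExtremalVector B t m c N M u v := by
  let Good : ℕ → Prop := fun u => ∃ w : K[X] × K[X], w ≠ 0 ∧
    valueForm B t w ∈ degreeLT K (N + 1 - u) ∧ errorForm B t m c w ∈ degreeLT K (M + 1 - u)
  have hbad : ∃ u, ¬ Good (u + 1) := by
    refine ⟨N + M, fun ⟨w, hne, h1, h2⟩ => hne ?_⟩
    rw [mem_degreeLT_iff_natDegree_lt] at h1 h2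
    exact eq_zero_of_valueForm_eq_zero_of_errorForm_eq_zero hB hm
      (h1.resolve_right (by omega)) (h2.resolve_right (by omega))
  obtain ⟨u, hnot, hgood⟩ : ∃ u, ¬ Good (u + 1) ∧ Good u := by
    refine ⟨Nat.find hbad, Nat.find_spec hbad, ?_⟩
    rcases hfind : Nat.find hbad with _ | k
    · exact hw
    · exact not_not.mp (Nat.find_min hbad (by omega))
  have hdivide : ∀ {z : K[X]} {w}, z ≠ 0 → w ≠ 0 → valueForm B t (z • w) ∈ degreeLT K (N + 1 - u) →
      errorForm B t m c (z • w) ∈ degreeLT K (M + 1 - u) → z.natDegree = 0 := by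
    intro z w hz hne h1 h2
    by_contra hdeg
    rw [map_smul, smul_eq_mul] at h1 h2
    have hdeg' := Nat.one_le_iff_ne_zero.mpr hdeg
    exact hnot ⟨w, hne, degreeLT_mono (by omega) (mem_degreeLT_of_mul_mem hz hdeg' h1),
      degreeLT_mono (by omega) (mem_degreeLT_of_mul_mem hz hdeg' h2)⟩
  obtain ⟨v, hne, h1, h2⟩ := hgood
  refine ⟨u, v, ?_, h1, h2, ?_, fun ζ h3 h4 => ?_⟩
  · refine isCoprime_of_irreducible_dvd (fun h => hne (Prod.ext h.1 h.2)) ?_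
    rintro z hz ⟨g, hg⟩ ⟨f, hf⟩
    obtain rfl : v = z • (g, f) := Prod.ext hg hf
    exact hz.natDegree_pos.ne' (hdivide hz.ne_zero (right_ne_zero_of_smul hne) h1 h2)
  · by_contra hlt
    exact hnot (exists_ne_zero_forms_mem_degreeLT hB hm t c (by omega))
  · by_contra h5
    rw [mem_degreeLT_iff_natDegree_lt, not_or, not_lt] at h5
    rw [map_smul, smul_eq_mul] at h3 h4
    exact hnot ⟨v, hne, degreeLT_mono (by omega) (mem_degreeLT_of_mul_mem h5.1 h5.2 h3),
      degreeLT_mono (by omega) (mem_degreeLT_of_mul_mem h5.1 h5.2 h4)⟩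

namespace IsExtremalVector

lemma le_or_exists_common_divisor (hv : IsExtremalVector B t m c N M u v) (hB : B ≠ 0)
    (hm : m ≠ 0) : u ≤ N ∨ ∃ E : K[X], E.Monic ∧ E ∣ B ∧ E ∣ t ∧
      u + m.natDegree + B.natDegree ≤ M + E.natDegree := by
  have hvalue := hv.valueForm_mem
  rw [mem_degreeLT_iff_natDegree_lt] at hvalue
  rcases hvalue with h0 | hlt
  swap
  · exact Or.inl (by omega)
  right
  have herror := hv.errorForm_mem
  rw [errorForm_apply, h0, mul_zero, sub_zero] at herror
  rw [valueForm_apply] at h0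
  have hv2 : v.2 ≠ 0 := fun h => by
    have hv1 : v.1 = 0 := by simpa [h, hB] using h0
    have := hv.isCoprime
    rw [h, hv1] at this
    exact not_isCoprime_zero_zero this
  obtain ⟨E, rfl⟩ : v.2 ∣ B := hv.isCoprime.symm.dvd_of_dvd_mul_right
    ⟨-t, by linear_combination h0⟩
  have hE : E ≠ 0 := right_ne_zero_of_mul hB
  have hEt : E ∣ t := ⟨-v.1, mul_left_cancel₀ hv2 (by linear_combination h0)⟩
  rw [mem_degreeLT_iff_natDegree_lt, natDegree_mul hm hv2] at herror
  have hdeg := herror.resolve_left (mul_ne_zero hm hv2)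
  refine ⟨normalize E, monic_normalize hE, normalize_dvd_iff.mpr (dvd_mul_left _ _),
    normalize_dvd_iff.mpr hEt, ?_⟩
  rw [natDegree_mul hv2 hE, natDegree_eq_of_degree_eq degree_normalize]
  omega

variable [Finite K]

lemma natDegree_wedge_add_le (hv : IsExtremalVector B t m c N M u v) (hB : B ≠ 0) (hm : m ≠ 0)
    (hw : w ∈ latticeBox B t m c N M) (h0 : wedge v w ≠ 0) :
    B.natDegree + m.natDegree + (wedge v w).natDegree + u ≤ N + M := by
  rw [mem_latticeBox hB hm, mem_monics] at hw
  have hvalue : valueForm B t w ∈ degreeLT K (N + 1) := by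
    rw [mem_degreeLT_iff_natDegree_lt]
    omega
  have hmem : B * m * wedge v w ∈ degreeLT K (N + M + 1 - u) := by
    rw [← valueForm_mul_errorForm_sub B t m c]
    exact Submodule.sub_mem _
      (mul_mem_degreeLT hv.valueForm_mem hw.2 fun _ _ => by omega)
      (mul_mem_degreeLT hv.errorForm_mem hvalue fun _ _ => by omega)
  rw [mem_degreeLT_iff_natDegree_lt, natDegree_mul (mul_ne_zero hB hm) h0,
    natDegree_mul hB hm] at hmem
  have := hmem.resolve_left (mul_ne_zero (mul_ne_zero hB hm) h0)
  omega

lemma add_smul_mem_latticeBox_iff (hv : IsExtremalVector B t m c N M u v) (hB : B ≠ 0)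
    (hm : m ≠ 0) (hw : w ∈ latticeBox B t m c N M) (ζ : K[X]) :
    w + ζ • v ∈ latticeBox B t m c N M ↔ ζ ∈ degreeLT K u := by
  rw [mem_latticeBox hB hm] at hw ⊢
  rw [map_add, map_add, add_mem_monics_iff hw.1, Submodule.add_mem_iff_right _ hw.2]
  refine ⟨fun h => hv.mem_degreeLT_of_smul ζ h.1 h.2, fun hζ => ?_⟩
  rw [map_smul, map_smul, smul_eq_mul, smul_eq_mul]
  exact ⟨mul_mem_degreeLT hζ hv.valueForm_mem fun _ _ => by omega,
    mul_mem_degreeLT hζ hv.errorForm_mem fun _ _ => by omega⟩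

end IsExtremalVector

end ExtremalVector

section LatticeSumBound

variable {K : Type*} [Field K] [Fintype K] {br : K[X] → K[X] → ℂ} {ω : K → ℂ}
  {B t m c : K[X]} {N M u : ℕ} {v : K[X] × K[X]}

lemma card_le_of_isConstMulCube (Y : Finset K[X]) (k : ℕ)
    (hY : ∀ y ∈ Y, y ≠ 0 ∧ IsConstMulCube y ∧ y.natDegree / 3 ≤ k) :
    Y.card ≤ Fintype.card K ^ (k + 2) := by
  have hsub : Y ⊆ ((Finset.univ : Finset K) ×ˢ lowDegree K (k + 1)).image
      fun p => C p.1 * p.2 ^ 3 := fun y hy => by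
    obtain ⟨-, ⟨c, e, hc, rfl⟩, hk⟩ := hY y hy
    rw [natDegree_C_mul hc, natDegree_pow] at hk
    refine Finset.mem_image.mpr ⟨(c, e), Finset.mem_product.mpr ⟨Finset.mem_univ _, ?_⟩, rfl⟩
    rw [mem_lowDegree, mem_degreeLT_iff_natDegree_lt]
    exact Or.inr (by dsimp only; omega)
  refine (Finset.card_le_card hsub).trans (Finset.card_image_le.trans ?_)
  rw [Finset.card_product, Finset.card_univ, card_lowDegree, pow_succ (n := k + 1), mul_comm]

lemma CubicSymbolLaws.norm_sum_latticeBox_filter_le (S : CubicSymbolLaws br ω) (hB : B ≠ 0)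
    (hm : m ≠ 0) (hc : c ≠ 0) (hM : M ≤ c.natDegree + N)
    (hv : IsExtremalVector B t m c N M u v) {w₀ : K[X] × K[X]}
    (hw₀ : w₀ ∈ latticeBox B t m c N M) :
    ‖∑ w ∈ latticeBox B t m c N M with wedge v w = wedge v w₀, br w.2 w.1‖ ≤
      (if wedge v w₀ = 0 then (Fintype.card K : ℝ) else 0) +
      if wedge v w₀ ≠ 0 ∧ IsConstMulCube (wedge v w₀) then (Fintype.card K : ℝ) ^ u else 0 := by
  obtain ⟨a, b, hab⟩ := hv.isCoprime
  have hdet : wedge v (-b, a) = 1 := by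
    rw [wedge]
    linear_combination hab
  refine S.norm_sum_line_le hdet (n := c.natDegree + N - m.natDegree)
    (div_ne_zero (leadingCoeff_ne_zero.mpr hc) (leadingCoeff_ne_zero.mpr hm)) ?_ ?_ ?_
  · intro w hw
    rw [Finset.mem_filter, mem_latticeBox hB hm, mem_monics] at hw
    obtain ⟨⟨⟨hmonic, hdeg⟩, herror⟩, hwy⟩ := hw
    have := natDegree_eq_and_leadingCoeff_eq_of_mul_sub_mem hm hc (hM.trans_eq (by rw [hdeg]))
      hmonic herror
    rw [hdeg] at this
    exact ⟨hwy, this⟩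
  · intro w hw ζ
    rw [Finset.mem_filter] at hw ⊢
    have hwedge : wedge v (w + ζ • v) = wedge v w := by
      simp only [wedge, Prod.fst_add, Prod.snd_add, Prod.smul_fst, Prod.smul_snd, smul_eq_mul]
      ring
    rw [hwedge, and_iff_left hw.2, hv.add_smul_mem_latticeBox_iff hB hm hw.1]
  · by_cases h0 : wedge v w₀ = 0
    · simp [h0]
    · have := hv.natDegree_wedge_add_le hB hm hw₀ h0
      have := hv.le_two_mul
      omega

lemma card_isConstMulCube_mul_le (Z : Finset K[X]) (D : ℕ)
    (hZ : ∀ y ∈ Z, y ≠ 0 ∧ IsConstMulCube y ∧ D + y.natDegree + u ≤ N) :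
    Z.card * (Fintype.card K : ℝ) ^ u ≤ (Fintype.card K : ℝ) ^ 2 *
      (Fintype.card K : ℝ) ^ (((N : ℝ) - D + 2 * u) / 3) := by
  have hq1 : (1 : ℝ) ≤ Fintype.card K := by exact_mod_cast Fintype.card_pos
  rcases Z.eq_empty_or_nonempty with rfl | ⟨z, hz⟩
  · rw [Finset.card_empty, Nat.cast_zero, zero_mul]
    positivity
  obtain ⟨k, hk, hdegk⟩ : ∃ k, 3 * k + D + u ≤ N ∧ ∀ y ∈ Z, y.natDegree / 3 ≤ k :=
    ⟨(N - D - u) / 3, by have := (hZ z hz).2.2; omega, fun y hy => by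
      have := (hZ y hy).2.2
      omega⟩
  have hcard : (Z.card : ℝ) ≤ (Fintype.card K : ℝ) ^ (k + 2) := by
    exact_mod_cast card_le_of_isConstMulCube Z k
      fun y hy => ⟨(hZ y hy).1, (hZ y hy).2.1, hdegk y hy⟩
  have hkR : 3 * (k : ℝ) + D + u ≤ N := by exact_mod_cast hk
  calc (Z.card : ℝ) * (Fintype.card K : ℝ) ^ u
      ≤ (Fintype.card K : ℝ) ^ (k + 2) * (Fintype.card K : ℝ) ^ u := by gcongr
    _ = (Fintype.card K : ℝ) ^ 2 * (Fintype.card K : ℝ) ^ ((k + u : ℕ) : ℝ) := by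
        rw [Real.rpow_natCast]
        ring
    _ ≤ _ := by
        gcongr
        push_cast
        linarith

lemma CubicSymbolLaws.norm_sum_latticeBox_le_of_isExtremalVector (S : CubicSymbolLaws br ω)
    (hB : B ≠ 0) (hm : m ≠ 0) (hc : c ≠ 0) (hM : M ≤ c.natDegree + N)
    (hv : IsExtremalVector B t m c N M u v) :
    ‖∑ w ∈ latticeBox B t m c N M, br w.2 w.1‖ ≤ (Fintype.card K : ℝ) +
      (Fintype.card K : ℝ) ^ 2 * (Fintype.card K : ℝ) ^
        (((N : ℝ) + M - B.natDegree - m.natDegree + 2 * u) / 3) := by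
  let Y := (latticeBox B t m c N M).image (wedge v)
  rw [← Finset.sum_fiberwise_of_maps_to (t := Y) fun w hw => Finset.mem_image_of_mem (wedge v) hw]
  have hfiber : ∀ y ∈ Y, ‖∑ w ∈ latticeBox B t m c N M with wedge v w = y, br w.2 w.1‖ ≤
      (if y = 0 then (Fintype.card K : ℝ) else 0) +
      if y ≠ 0 ∧ IsConstMulCube y then (Fintype.card K : ℝ) ^ u else 0 :=
    Finset.forall_mem_image.mpr fun w hw => S.norm_sum_latticeBox_filter_le hB hm hc hM hv hw
  refine (norm_sum_le_of_le _ hfiber).trans ?_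
  rw [Finset.sum_add_distrib, ← Finset.sum_filter (fun y => y ≠ 0 ∧ IsConstMulCube y),
    Finset.sum_const, nsmul_eq_mul, Finset.sum_ite_eq']
  refine add_le_add (by split_ifs <;> simp) ?_
  refine (card_isConstMulCube_mul_le (N := N + M) _ (B.natDegree + m.natDegree) ?_).trans_eq ?_
  · intro y hy
    obtain ⟨hyY, hy0, hcube⟩ := Finset.mem_filter.mp hy
    obtain ⟨w, hw, rfl⟩ := Finset.mem_image.mp hyY
    exact ⟨hy0, hcube, hv.natDegree_wedge_add_le hB hm hw hy0⟩
  · push_cast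
    ring_nf

theorem CubicSymbolLaws.exists_norm_sum_latticeBox_le (S : CubicSymbolLaws br ω) (hB : B ≠ 0)
    (hm : m ≠ 0) (hc : c ≠ 0) (t : K[X]) (hM : M ≤ c.natDegree + N) :
    ∃ u : ℕ, ‖∑ w ∈ latticeBox B t m c N M, br w.2 w.1‖ ≤ (Fintype.card K : ℝ) +
        (Fintype.card K : ℝ) ^ 2 * (Fintype.card K : ℝ) ^
          (((N : ℝ) + M - B.natDegree - m.natDegree + 2 * u) / 3) ∧
      (u ≤ N ∨ ∃ E : K[X], E.Monic ∧ E ∣ B ∧ E ∣ t ∧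
        u + m.natDegree + B.natDegree ≤ M + E.natDegree) := by
  rcases (latticeBox B t m c N M).eq_empty_or_nonempty with hempty | ⟨w, hw⟩
  · refine ⟨0, ?_, Or.inl (Nat.zero_le _)⟩
    rw [hempty, Finset.sum_empty, norm_zero]
    positivity
  rw [mem_latticeBox hB hm, mem_monics] at hw
  obtain ⟨u, v, hv⟩ := exists_isExtremalVector (N := N) (M := M) hB hm t c
    ⟨w, fun h0 => hw.1.1.ne_zero (by rw [h0, map_zero]),
      mem_degreeLT_iff_natDegree_lt.mpr (Or.inr (by omega)), degreeLT_mono (Nat.le_succ _) hw.2⟩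
  exact ⟨u, S.norm_sum_latticeBox_le_of_isExtremalVector hB hm hc hM hv,
    hv.le_or_exists_common_divisor hB hm⟩

end LatticeSumBound

/-! ### Möbius sums over monic polynomials -/

section Moebius

open UniqueFactorizationMonoid

variable {K : Type*} [Field K]

lemma norm_moebius_le_one (B : K[X]) : ‖(moebius B : ℂ)‖ ≤ 1 := by
  by_cases h : Squarefree B
  · simp [h.moebius_eq]
  · simp [moebius_of_not_squarefree h]

lemma moebius_irreducible_mul {P B : K[X]} (hP : Irreducible P) (h : ¬ P ∣ B) :
    moebius (P * B) = -moebius B := by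
  rw [(hP.isRelPrime_iff_not_dvd.mpr h).moebius_mul, hP.moebius_eq, neg_one_mul]

lemma exists_irreducible_monic_pow_dvd {P F : K[X]} {k : ℕ} (hP : Irreducible P) (h : P ^ k ∣ F) :
    ∃ Q : K[X], Irreducible Q ∧ Q.Monic ∧ Q ^ k ∣ F :=
  ⟨normalize P, (normalize_associated P).symm.irreducible hP, monic_normalize hP.ne_zero,
    (normalize_associated P).pow_pow.dvd_iff_dvd_left.mpr h⟩

/-- Pairing the divisors `B` and `P * B` shows that Möbius sums over monic `B` with `B ^ k ∣ F`
cancel as soon as an irreducible `P` satisfies `P ^ k ∣ F`. -/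
lemma sum_moebius_eq_zero_of_irreducible_pow_dvd {F P : K[X]} {k : ℕ} (hP : Irreducible P)
    (hPm : P.Monic) (hd : P ^ k ∣ F) {s : Finset K[X]}
    (hs : ∀ B, B ∈ s ↔ B.Monic ∧ B ^ k ∣ F) : ∑ B ∈ s, moebius B = 0 := by
  have hsub : (s.filter (¬ P ∣ ·)).image (P * ·) ⊆ s.filter (P ∣ ·) := fun B hB => by
    obtain ⟨A, hA, rfl⟩ := Finset.mem_image.mp hB
    rw [Finset.mem_filter, hs] at hA ⊢
    refine ⟨⟨hPm.mul hA.1.1, ?_⟩, dvd_mul_right _ _⟩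
    rw [mul_pow]
    exact ((hP.coprime_iff_not_dvd).mpr hA.2).pow.mul_dvd hd hA.1.2
  have hsdiff : ∀ B ∈ s.filter (P ∣ ·) \ (s.filter (¬ P ∣ ·)).image (P * ·), moebius B = 0 := by
    intro B hB
    rw [Finset.mem_sdiff, Finset.mem_filter, hs] at hB
    obtain ⟨⟨⟨hBm, hBd⟩, A, rfl⟩, hA⟩ := hB
    refine moebius_of_not_squarefree fun hsq => hA (Finset.mem_image.mpr ⟨A, ?_, rfl⟩)
    rw [Finset.mem_filter, hs]
    exact ⟨⟨hPm.of_mul_monic_left hBm, (pow_dvd_pow_of_dvd (dvd_mul_left _ _) k).trans hBd⟩,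
      hP.isRelPrime_iff_not_dvd.mp (squarefree_mul_iff.mp hsq).1⟩
  rw [← Finset.sum_filter_add_sum_filter_not s (P ∣ ·),
    ← Finset.sum_subset_zero_on_sdiff hsub hsdiff fun _ _ => rfl,
    Finset.sum_image fun _ _ _ _ h => mul_left_cancel₀ hP.ne_zero h, ← Finset.sum_add_distrib]
  refine Finset.sum_eq_zero fun B hB => ?_
  rw [moebius_irreducible_mul hP (Finset.mem_filter.mp hB).2, neg_add_cancel]

lemma eq_one_of_pow_dvd_of_irreducible {F B : K[X]} {k : ℕ}
    (hF : ∀ P : K[X], Irreducible P → ¬ P ^ k ∣ F) (hB : B.Monic) (h : B ^ k ∣ F) : B = 1 := by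
  by_contra hne
  obtain ⟨P, hP, hPB⟩ := WfDvdMonoid.exists_irreducible_factor
    (fun hu => hne (hB.eq_one_of_isUnit hu)) hB.ne_zero
  exact hF P hP ((pow_dvd_pow_of_dvd hPB k).trans h)

section Finite

variable [Finite K]

lemma sum_moebius_of_pow_dvd {F : K[X]} (hF : F ≠ 0) {k n : ℕ} (hk : k ≠ 0)
    (hn : F.natDegree ≤ n) :
    ∑ b ∈ Finset.range (n + 1), ∑ B ∈ monics K b, (if B ^ k ∣ F then moebius B else 0) =
      if ∃ P : K[X], Irreducible P ∧ P ^ k ∣ F then 0 else 1 := by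
  let s := (Finset.range (n + 1)).biUnion fun b => (monics K b).filter (· ^ k ∣ F)
  have hs : ∀ B, B ∈ s ↔ B.Monic ∧ B ^ k ∣ F := fun B => by
    simp only [s, Finset.mem_biUnion, Finset.mem_range, Finset.mem_filter, mem_monics]
    refine ⟨fun ⟨b, _, hb, hd⟩ => ⟨hb.1, hd⟩, fun ⟨hm, hd⟩ => ?_⟩
    have hdeg := natDegree_le_of_dvd ((dvd_pow_self B hk).trans hd) hF
    exact ⟨B.natDegree, by omega, ⟨hm, rfl⟩, hd⟩
  have hdisj : Set.PairwiseDisjoint (Finset.range (n + 1) : Set ℕ)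
      fun b => (monics K b).filter (· ^ k ∣ F) := fun b _ b' _ hne =>
    Finset.disjoint_left.mpr fun B hB hB' => hne <|
      (mem_monics.mp (Finset.mem_filter.mp hB).1).2.symm.trans
        (mem_monics.mp (Finset.mem_filter.mp hB').1).2
  simp only [← Finset.sum_filter]
  rw [← Finset.sum_biUnion hdisj]
  split_ifs with hex
  · obtain ⟨P, hP, hPF⟩ := hex
    obtain ⟨Q, hQ, hQm, hQF⟩ := exists_irreducible_monic_pow_dvd hP hPF
    exact sum_moebius_eq_zero_of_irreducible_pow_dvd hQ hQm hQF hs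
  · have hsingle : s = {1} := Finset.ext fun B => by
      rw [hs, Finset.mem_singleton]
      refine ⟨fun ⟨hB, hd⟩ => eq_one_of_pow_dvd_of_irreducible
        (fun P hP hPF => hex ⟨P, hP, hPF⟩) hB hd, ?_⟩
      rintro rfl
      exact ⟨monic_one, by simp⟩
    change ∑ B ∈ s, moebius B = 1
    rw [hsingle, Finset.sum_singleton, moebius_one]

lemma sum_moebius_of_sq_dvd {F : K[X]} (hF : F ≠ 0) {n : ℕ} (hn : F.natDegree ≤ n) :
    ∑ b ∈ Finset.range (n + 1), ∑ B ∈ monics K b, (if B ^ 2 ∣ F then moebius B else 0) =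
      if Squarefree F then 1 else 0 := by
  rw [sum_moebius_of_pow_dvd hF two_ne_zero hn, squarefree_iff_irreducible_sq_not_dvd_of_ne_zero hF]
  simp only [sq, ← not_exists, ← exists_prop, ite_not]

lemma sum_moebius_of_dvd {F : K[X]} (hF : F.Monic) {n : ℕ} (hn : F.natDegree ≤ n) :
    ∑ b ∈ Finset.range (n + 1), ∑ B ∈ monics K b, (if B ∣ F then moebius B else 0) =
      if F = 1 then 1 else 0 := by
  have h := sum_moebius_of_pow_dvd hF.ne_zero one_ne_zero hn
  simp only [pow_one] at h
  rw [h, ← ite_not (p := F = 1)]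
  refine if_congr ⟨?_, fun hne => ?_⟩ rfl rfl
  · rintro ⟨P, hP, hPF⟩ rfl
    exact hP.not_isUnit (isUnit_of_dvd_one hPF)
  · exact WfDvdMonoid.exists_irreducible_factor (fun hu => hne (hF.eq_one_of_isUnit hu)) hF.ne_zero

lemma sum_monics_of_dvd {A : Type*} [AddCommMonoid A] {B : K[X]} (hB : B.Monic) {N : ℕ}
    (hN : B.natDegree ≤ N) (φ : K[X] → A) :
    ∑ F ∈ monics K N, (if B ∣ F then φ F else 0) =
      ∑ G ∈ monics K (N - B.natDegree), φ (G * B) := by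
  rw [← Finset.sum_filter]
  symm
  refine Finset.sum_bij (fun G _ => G * B) (fun G hG => ?_)
    (fun _ _ _ _ h => mul_right_cancel₀ hB.ne_zero h) (fun F hF => ?_) fun _ _ => rfl
  · rw [mem_monics] at hG
    rw [Finset.mem_filter, mem_monics, hG.1.natDegree_mul hB]
    exact ⟨⟨hG.1.mul hB, by omega⟩, dvd_mul_left _ _⟩
  · rw [Finset.mem_filter, mem_monics] at hF
    obtain ⟨⟨hF, hdeg⟩, G, rfl⟩ := hF
    have hG : G.Monic := hB.of_mul_monic_left hF
    rw [hB.natDegree_mul hG] at hdeg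
    exact ⟨G, mem_monics.mpr ⟨hG, by omega⟩, mul_comm _ _⟩

lemma sum_monics_of_dvd_eq_zero {A : Type*} [AddCommMonoid A] {B : K[X]} {N : ℕ}
    (hN : N < B.natDegree) (φ : K[X] → A) :
    ∑ F ∈ monics K N, (if B ∣ F then φ F else 0) = 0 := by
  refine Finset.sum_eq_zero fun F hF => if_neg fun hd => hN.not_ge ?_
  rw [mem_monics] at hF
  exact hF.2 ▸ natDegree_le_of_dvd hd hF.1.ne_zero

end Finite

variable (K) in
/-- The squarefree monic polynomials of degree `n` over a finite field, the family `𝓗(n)`. -/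
def sqfreeMonics (n : ℕ) : Finset K[X] := (monics K n).filter Squarefree

lemma mem_sqfreeMonics [Finite K] {n : ℕ} {p : K[X]} :
    p ∈ sqfreeMonics K n ↔ (p.Monic ∧ p.natDegree = n) ∧ Squarefree p := by
  rw [sqfreeMonics, Finset.mem_filter, mem_monics]

lemma sum_sqfreeMonics [Finite K] {R : Type*} [Ring R] (N : ℕ) (φ : K[X] → R) :
    ∑ F ∈ sqfreeMonics K N, φ F = ∑ b ∈ Finset.range (N / 2 + 1), ∑ B ∈ monics K b,
      (moebius B : R) * ∑ A ∈ monics K (N - 2 * b), φ (A * B ^ 2) := by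
  have hdetect : ∀ F ∈ monics K N, (if Squarefree F then φ F else 0) =
      ∑ b ∈ Finset.range (N + 1), ∑ B ∈ monics K b,
        if B ^ 2 ∣ F then (moebius B : R) * φ F else 0 := fun F hF => by
    rw [mem_monics] at hF
    have h := congrArg (fun z : ℤ => (z : R) * φ F) (sum_moebius_of_sq_dvd hF.1.ne_zero hF.2.le)
    simpa only [Int.cast_sum, Int.cast_ite, Int.cast_one, Int.cast_zero, Finset.sum_mul, ite_mul,
      one_mul, zero_mul] using h.symm
  rw [sqfreeMonics, Finset.sum_filter, Finset.sum_congr rfl hdetect, Finset.sum_comm]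
  symm
  refine Finset.sum_subset_zero_on_sdiff (Finset.range_mono (by omega)) (fun b hb => ?_)
    fun b hb => ?_
  all_goals rw [Finset.sum_comm]
  · rw [Finset.mem_sdiff, Finset.mem_range, Finset.mem_range] at hb
    refine Finset.sum_eq_zero fun B hB => ?_
    exact sum_monics_of_dvd_eq_zero (by rw [natDegree_pow, (mem_monics.mp hB).2]; omega) _
  · rw [Finset.mem_range] at hb
    refine Finset.sum_congr rfl fun B hB => ?_
    rw [mem_monics] at hB
    have hdeg : (B ^ 2).natDegree = 2 * b := by rw [natDegree_pow, hB.2]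
    rw [sum_monics_of_dvd (hB.1.pow 2) (by omega), hdeg, Finset.mul_sum]

variable [Fintype K]

lemma sum_range_sum_moebius_mul_pow (n : ℕ) :
    ∑ b ∈ Finset.range (n + 1), (∑ B ∈ monics K b, moebius B) * (Fintype.card K : ℤ) ^ (n - b) =
      if n = 0 then 1 else 0 := by
  have hone : ∀ F ∈ monics K n, (F = 1 ↔ n = 0) := fun F hF => by
    rw [mem_monics] at hF
    rw [← hF.2, hF.1.natDegree_eq_zero]
  have hconst : (if n = 0 then (1 : ℤ) else 0) = ∑ F ∈ monics K n, if n = 0 then 1 else 0 := by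
    rw [Finset.sum_const, card_monics, nsmul_eq_mul]
    split_ifs with hn <;> simp [hn]
  rw [hconst, ← Finset.sum_congr rfl fun F hF => if_congr (hone F hF) rfl rfl,
    ← Finset.sum_congr rfl fun F hF =>
      sum_moebius_of_dvd (mem_monics.mp hF).1 (mem_monics.mp hF).2.le, Finset.sum_comm]
  refine Finset.sum_congr rfl fun b hb => ?_
  rw [Finset.mem_range] at hb
  rw [Finset.sum_comm, Finset.sum_mul]
  refine Finset.sum_congr rfl fun B hB => ?_
  rw [mem_monics] at hB
  rw [sum_monics_of_dvd hB.1 (by omega), Finset.sum_const, card_monics, hB.2, nsmul_eq_mul,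
    Nat.cast_pow, mul_comm]

lemma sum_moebius_monics (b : ℕ) : ∑ B ∈ monics K b, moebius B =
    if b = 0 then 1 else if b = 1 then -(Fintype.card K : ℤ) else 0 := by
  rcases b with _ | n
  · simpa using sum_range_sum_moebius_mul_pow (K := K) 0
  have hsucc := sum_range_sum_moebius_mul_pow (K := K) (n + 1)
  have hshift : ∑ b ∈ Finset.range (n + 1),
      (∑ B ∈ monics K b, moebius B) * (Fintype.card K : ℤ) ^ (n + 1 - b) =
        Fintype.card K * if n = 0 then 1 else 0 := by
    rw [← sum_range_sum_moebius_mul_pow (K := K) n, Finset.mul_sum]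
    refine Finset.sum_congr rfl fun b hb => ?_
    rw [Nat.sub_add_comm (Finset.mem_range_succ_iff.mp hb), pow_succ]
    ring
  rw [Finset.sum_range_succ, hshift, Nat.sub_self, pow_zero, mul_one, if_neg n.succ_ne_zero]
    at hsucc
  rw [if_neg n.succ_ne_zero, eq_neg_of_add_eq_zero_right hsucc]
  simp only [add_eq_right]
  split_ifs <;> simp

lemma card_sqfreeMonics {N : ℕ} (hN : 2 ≤ N) :
    ((sqfreeMonics K N).card : ℤ) = (Fintype.card K : ℤ) ^ N - (Fintype.card K : ℤ) ^ (N - 1) := by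
  have h := sum_sqfreeMonics (K := K) N fun _ => (1 : ℤ)
  simp only [Finset.sum_const, nsmul_eq_mul, mul_one, card_monics, ← Finset.sum_mul,
    Int.cast_id, sum_moebius_monics, Nat.cast_pow] at h
  rw [h, ← Finset.sum_subset (s₁ := Finset.range 2) (Finset.range_mono (by omega))]
  · obtain ⟨n, rfl⟩ := Nat.exists_eq_add_of_le hN
    rw [Finset.sum_range_succ, Finset.sum_range_one, if_pos rfl, if_neg one_ne_zero, if_pos rfl,
      Nat.mul_one, Nat.mul_zero, Nat.sub_zero, Nat.add_sub_cancel_left,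
      show 2 + n - 1 = n + 1 by omega]
    ring
  · intro b _ hb
    rw [Finset.mem_range] at hb
    rw [if_neg (by omega), if_neg (by omega), zero_mul]

end Moebius

/-! ### Congruence sums of a cubic symbol -/

section CongruenceSum

variable {K : Type*} [Field K] {br : K[X] → K[X] → ℂ} {ω : K → ℂ}

lemma exists_monic_eq_mul_and_eq_mul_and_isCoprime (f : K[X]) {B : K[X]} (hB : B ≠ 0) :
    ∃ D f₁ B₁ : K[X], D.Monic ∧ f = D * f₁ ∧ B = D * B₁ ∧ IsCoprime f₁ B₁ := by
  set E := EuclideanDomain.gcd f B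
  have hE0 : E ≠ 0 := fun h => hB (EuclideanDomain.gcd_eq_zero_iff.mp h).2
  obtain ⟨f₁, hf₁⟩ := normalize_dvd_iff.mpr (EuclideanDomain.gcd_dvd_left f B)
  obtain ⟨B₁, hB₁⟩ := normalize_dvd_iff.mpr (EuclideanDomain.gcd_dvd_right f B)
  refine ⟨normalize E, f₁, B₁, monic_normalize hE0, hf₁, hB₁, ?_⟩
  obtain ⟨u, hu⟩ := normalize_associated E
  have hbezout : E = f * EuclideanDomain.gcdA f B + B * EuclideanDomain.gcdB f B :=
    EuclideanDomain.gcd_eq_gcd_ab f B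
  have hcomb : f₁ * EuclideanDomain.gcdA f B + B₁ * EuclideanDomain.gcdB f B = u := by
    refine mul_left_cancel₀ (monic_normalize hE0).ne_zero ?_
    rw [hu, mul_add, ← mul_assoc, ← mul_assoc, ← hf₁, ← hB₁, ← hbezout]
  refine ⟨EuclideanDomain.gcdA f B * ↑u⁻¹, EuclideanDomain.gcdB f B * ↑u⁻¹, ?_⟩
  linear_combination ↑u⁻¹ * hcomb + u.mul_inv

lemma exists_mem_degreeLT_dvd_sub_mul {B f : K[X]} (hB : B ≠ 0) (hfB : IsCoprime f B)
    (A : K[X]) : ∃ t ∈ degreeLT K B.natDegree, B ∣ A - t * f := by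
  obtain ⟨h, k, hhk⟩ := hfB
  refine ⟨A * h % B, mod_mem_degreeLT hB _, ?_⟩
  have hsplit : A - A * h % B * f = B * (A * k) + f * (A * h - A * h % B) := by
    linear_combination -A * hhk
  rw [hsplit]
  exact dvd_add (dvd_mul_right _ _) ((dvd_sub_mod B (A * h)).mul_left f)

lemma CubicSymbolLaws.eq_mul_sq_of_mul_eq (S : CubicSymbolLaws br ω) {f g A B : K[X]} (hf : f ≠ 0)
    (hfB : IsCoprime f B) (h : br f (B * g) = br f A) : br f g = br f (A * B ^ 2) := by
  rw [S.mul_right _ _ _ hf] at h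
  rw [sq, S.mul_right _ _ _ hf, S.mul_right _ _ _ hf, ← h]
  linear_combination -br f g * S.cube f B hf hfB

/-- The sum of the symbols `(A - t * f) / B` modulo `f` over all residues `t` modulo `B` for which
the quotient is a polynomial. -/
def congruenceSum (br : K[X] → K[X] → ℂ) (B A f : K[X]) : ℂ :=
  ∑ t ∈ lowDegree K B.natDegree, if B ∣ A - t * f then br f ((A - t * f) / B) else 0

lemma congruenceSum_eq_zero_of_not_dvd {D B A f : K[X]} (hB : D ∣ B) (hf : D ∣ f)
    (hA : ¬ D ∣ A) : congruenceSum br B A f = 0 :=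
  Finset.sum_eq_zero fun t _ => if_neg fun h => hA <| by
    simpa using dvd_add (hB.trans h) (hf.mul_left t)

/-- The contribution of a divisor `D` of `B` to the congruence sum of `A` and `f` modulo `B`, up
to the factor `|D|` and a cube root of unity. Meaningful for `D ∣ B` only. -/
def splitTerm (br : K[X] → K[X] → ℂ) (B A f D : K[X]) : ℂ :=
  if D ∣ A ∧ D ^ 2 ∣ f then br (A / D * (B / D) ^ 2) f else 0

lemma CubicSymbolLaws.splitTerm_eq_zero (S : CubicSymbolLaws br ω) {A B₁ f₁ D D' : K[X]}
    (hB₁ : B₁ ≠ 0) (hD : D.Monic) (hcop : IsCoprime f₁ B₁) (hD' : D'.Monic)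
    (hne : D' ≠ D) (hdvd : D' ∣ D * B₁) : splitTerm br (D * B₁) A (D * f₁) D' = 0 := by
  rw [splitTerm, ite_eq_right_iff]
  rintro ⟨-, hDf⟩
  obtain ⟨x, y, hxy⟩ := hcop
  obtain ⟨Q, rfl⟩ : D' ∣ D := by
    rw [show D = D * f₁ * x + D * B₁ * y by linear_combination -D * hxy]
    exact dvd_add (((dvd_pow_self D' two_ne_zero).trans hDf).mul_right x) (hdvd.mul_right y)
  have hQ : ¬ IsUnit Q := fun hu =>
    hne (by rw [(hD'.of_mul_monic_left hD).eq_one_of_isUnit hu, mul_one])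
  have hQ0 : Q ≠ 0 := right_ne_zero_of_mul hD.ne_zero
  have hzero : br (Q * B₁) (D' * Q * f₁) = 0 := by
    rw [S.eq_zero_iff _ _ (mul_ne_zero hQ0 hB₁)]
    exact fun hc => hQ (hc.isUnit_of_dvd' (dvd_mul_right _ _) ((dvd_mul_left _ _).mul_right _))
  rw [mul_assoc D' Q B₁, mul_div_cancel_left₀ _ hD'.ne_zero, S.mul_left, S.pow_left, hzero]
  ring

lemma CubicSymbolLaws.omega_pow_mul_eq_of_monic (S : CubicSymbolLaws br ω) {f g : K[X]}
    (hf : f ≠ 0) (hg : g.Monic) {N : ℕ} (hN : N % 3 = g.natDegree % 3) :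
    ω f.leadingCoeff ^ N * br f g = br g f := by
  have hrec := S.reciprocity f g hf hg.ne_zero
  rw [hg.leadingCoeff, S.omega_one, one_pow, mul_one] at hrec
  rw [← hrec, pow_eq_pow_mod N (S.omega_cube _ (leadingCoeff_ne_zero.mpr hf)), hN,
    ← pow_eq_pow_mod _ (S.omega_cube _ (leadingCoeff_ne_zero.mpr hf)), mul_comm]

section Finite

variable [Finite K]

lemma sum_lowDegree_filter_dvd_sub_mul {A : Type*} [AddCommMonoid A] {B f a t₁ : K[X]}
    (hB : B ≠ 0) (hfB : IsCoprime f B) (ht₁ : t₁ ∈ degreeLT K B.natDegree)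
    (hd : B ∣ a - t₁ * f) (d : ℕ) (φ : K[X] → A) :
    ∑ t ∈ lowDegree K (d + B.natDegree) with B ∣ a - t * f, φ t =
      ∑ τ ∈ lowDegree K d, φ (t₁ + τ * B) := by
  symm
  have ht₁' := degreeLT_mono (R := K) (Nat.le_add_left B.natDegree d) ht₁
  refine Finset.sum_bij (fun τ _ => t₁ + τ * B) (fun τ hτ => ?_)
    (fun τ _ τ' _ h => mul_right_cancel₀ hB (add_left_cancel h)) (fun t ht => ?_) fun _ _ => rfl
  · rw [mem_lowDegree] at hτ
    rw [Finset.mem_filter, mem_lowDegree]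
    refine ⟨Submodule.add_mem _ ht₁' ?_, ?_⟩
    · rwa [mul_comm, mul_mem_degreeLT_iff hB, Nat.add_sub_cancel]
    · rw [show a - (t₁ + τ * B) * f = a - t₁ * f - B * (τ * f) by ring]
      exact dvd_sub hd (dvd_mul_right _ _)
  · rw [Finset.mem_filter, mem_lowDegree] at ht
    obtain ⟨τ, hτ⟩ : B ∣ t - t₁ := by
      refine hfB.symm.dvd_of_dvd_mul_right ?_
      rw [show (t - t₁) * f = a - t₁ * f - (a - t * f) by ring]
      exact dvd_sub hd ht.2
    refine ⟨τ, ?_, by linear_combination -hτ⟩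
    have hmem := Submodule.sub_mem _ ht.1 ht₁'
    rwa [hτ, mul_mem_degreeLT_iff hB, Nat.add_sub_cancel, ← mem_lowDegree] at hmem

lemma CubicSymbolLaws.sum_lowDegree_sub_mul_eq_zero (S : CubicSymbolLaws br ω) {D f : K[X]}
    (hsq : Squarefree D) (hu : ¬ IsUnit D) (hcop : IsCoprime D f) (g : K[X]) {d : ℕ}
    (hd : D.natDegree ≤ d) : ∑ τ ∈ lowDegree K d, br D (g - τ * f) = 0 := by
  obtain ⟨k, h, hkh⟩ := hcop
  have hlinear : ∀ τ ∈ lowDegree K d, br D (g - τ * f) = br D (-f) * br D (-h * g + τ) := by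
    intro τ _
    rw [← S.mul_right _ _ _ hsq.ne_zero]
    refine S.congr _ _ _ ⟨k * g, ?_⟩
    linear_combination g * (-hkh)
  rw [Finset.sum_congr rfl hlinear, ← Finset.mul_sum, S.sum_lowDegree_add_eq_zero hsq.ne_zero
    (fun hc => hu (hc.isUnit_of_squarefree hsq)) _ hd, mul_zero]

lemma congruenceSum_mul {D B f A t₁ g : K[X]} (hD : D ≠ 0) (hB : B ≠ 0)
    (hfB : IsCoprime f B) (ht₁ : t₁ ∈ degreeLT K B.natDegree) (hg : A - t₁ * f = B * g) :
    congruenceSum br (D * B) (D * A) (D * f) =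
      ∑ τ ∈ lowDegree K D.natDegree, br (D * f) (g - τ * f) := by
  have hdvd : ∀ t, D * B ∣ D * A - t * (D * f) ↔ B ∣ A - t * f := fun t => by
    rw [show D * A - t * (D * f) = D * (A - t * f) by ring]
    exact mul_dvd_mul_iff_left hD
  rw [congruenceSum, natDegree_mul hD hB]
  simp only [hdvd]
  rw [← Finset.sum_filter, sum_lowDegree_filter_dvd_sub_mul hB hfB ht₁ ⟨g, hg⟩]
  refine Finset.sum_congr rfl fun τ _ => congrArg _ ?_
  rw [show D * A - (t₁ + τ * B) * (D * f) = D * B * (g - τ * f) by linear_combination D * hg]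
  exact mul_div_cancel_left₀ _ (mul_ne_zero hD hB)

lemma CubicSymbolLaws.congruenceSum_mul_of_not_dvd (S : CubicSymbolLaws br ω) {D B f : K[X]}
    (hD : Squarefree D) (hB : B ≠ 0) (hfB : IsCoprime f B) (hDf : ¬ D ∣ f) (A : K[X]) :
    congruenceSum br (D * B) (D * A) (D * f) = 0 := by
  obtain ⟨t₁, ht₁, g, hg⟩ := exists_mem_degreeLT_dvd_sub_mul hB hfB A
  rw [congruenceSum_mul hD.ne_zero hB hfB ht₁ hg]
  obtain ⟨E, f₂, D₂, -, hf₂, rfl, hcop⟩ :=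
    exists_monic_eq_mul_and_eq_mul_and_isCoprime f hD.ne_zero
  have hEf : E ∣ f := Dvd.intro f₂ hf₂.symm
  have hunit : ¬ IsUnit D₂ := fun hu => hDf (hu.mul_right_dvd.mpr hEf)
  have hD₂f : IsCoprime D₂ f := by
    rw [hf₂]
    exact (squarefree_mul_iff.mp hD).1.isCoprime.symm.mul_right hcop.symm
  have hsplit : ∀ τ ∈ lowDegree K (E * D₂).natDegree, br (E * D₂ * f) (g - τ * f) =
      br E g * br f g * br D₂ (g - τ * f) := fun τ _ => by
    have hsub : f ∣ g - τ * f - g := ⟨-τ, by ring⟩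
    rw [S.mul_left, S.mul_left, S.congr f _ _ hsub, S.congr E _ _ (hEf.trans hsub)]
    ring
  rw [Finset.sum_congr rfl hsplit, ← Finset.mul_sum,
    S.sum_lowDegree_sub_mul_eq_zero (hD.squarefree_of_dvd (dvd_mul_left _ _)) hunit hD₂f _
      (natDegree_le_of_dvd (dvd_mul_left _ _) hD.ne_zero), mul_zero]

lemma sum_range_sum_monics_eq_single {A : Type*} [AddCommMonoid A] {D : K[X]} (hD : D.Monic)
    {n : ℕ} (hn : D.natDegree ≤ n) (Φ : K[X] → A)
    (hΦ : ∀ D' : K[X], D'.Monic → D' ≠ D → Φ D' = 0) :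
    ∑ d ∈ Finset.range (n + 1), ∑ D' ∈ monics K d, Φ D' = Φ D := by
  rw [Finset.sum_eq_single_of_mem D.natDegree (Finset.mem_range_succ_iff.mpr hn),
    Finset.sum_eq_single_of_mem D (mem_monics.mpr ⟨hD, rfl⟩)]
  · exact fun D' hD' => hΦ D' (mem_monics.mp hD').1
  · refine fun d _ hd => Finset.sum_eq_zero fun D' hD' => ?_
    rw [mem_monics] at hD'
    exact hΦ D' hD'.1 (by rintro rfl; exact hd hD'.2.symm)

end Finite

variable [Fintype K]

lemma CubicSymbolLaws.congruenceSum_mul_of_dvd (S : CubicSymbolLaws br ω) {D B f : K[X]}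
    (hB : B ≠ 0) (hf : f ≠ 0) (hDB : IsCoprime D B) (hfB : IsCoprime f B) (hDf : D ∣ f)
    (A : K[X]) :
    congruenceSum br (D * B) (D * A) (D * f) =
      (Fintype.card K : ℂ) ^ D.natDegree * br (D * f) (A * B ^ 2) := by
  have hD : D ≠ 0 := ne_zero_of_dvd_ne_zero hf hDf
  obtain ⟨t₁, ht₁, g, hg⟩ := exists_mem_degreeLT_dvd_sub_mul hB hfB A
  rw [congruenceSum_mul hD hB hfB ht₁ hg]
  have hconst : ∀ τ ∈ lowDegree K D.natDegree,
      br (D * f) (g - τ * f) = br (D * f) (A * B ^ 2) := fun τ _ => by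
    refine S.eq_mul_sq_of_mul_eq (mul_ne_zero hD hf) (hDB.mul_left hfB) ?_
    have hsub : f ∣ B * (g - τ * f) - A := ⟨-t₁ - B * τ, by linear_combination -hg⟩
    rw [S.mul_left, S.mul_left, S.congr D _ _ (hDf.trans hsub), S.congr f _ _ hsub]
  rw [Finset.sum_congr rfl hconst, Finset.sum_const, card_lowDegree, nsmul_eq_mul, Nat.cast_pow]

/-- Only `D = gcd f B` contributes to the right-hand side, and reciprocity turns its contribution
into the left-hand side. -/
lemma CubicSymbolLaws.omega_pow_mul_congruenceSum (S : CubicSymbolLaws br ω) {B f A : K[X]}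
    (hB : B.Monic) (hsq : Squarefree B) (hf : f ≠ 0) (hA : A.Monic) {N : ℕ}
    (hN : N % 3 = (A.natDegree + 2 * B.natDegree) % 3) :
    ω f.leadingCoeff ^ N * congruenceSum br B A f =
      ∑ d ∈ Finset.range (B.natDegree + 1), ∑ D ∈ monics K d, (if D ∣ B then
        (Fintype.card K : ℂ) ^ D.natDegree * splitTerm br B A f D else 0) := by
  obtain ⟨D, f₁, B₁, hD, rfl, rfl, hcop⟩ :=
    exists_monic_eq_mul_and_eq_mul_and_isCoprime f hB.ne_zero
  have hB₁ : B₁.Monic := hD.of_mul_monic_left hB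
  rw [sum_range_sum_monics_eq_single hD
    (natDegree_le_of_dvd (dvd_mul_right _ _) hB.ne_zero) _ fun D' hD' hne =>
      ite_eq_right_iff.mpr fun hd => by
        rw [S.splitTerm_eq_zero hB₁.ne_zero hD hcop hD' hne hd, mul_zero],
    if_pos (dvd_mul_right _ _), splitTerm, mul_div_cancel_left₀ _ hD.ne_zero]
  by_cases hDA : D ∣ A
  swap
  · rw [congruenceSum_eq_zero_of_not_dvd (dvd_mul_right _ _) (dvd_mul_right _ _) hDA,
      if_neg fun h => hDA h.1, mul_zero, mul_zero]
  obtain ⟨A₁, rfl⟩ := hDA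
  have hA₁ : A₁.Monic := hD.of_mul_monic_left hA
  simp only [mul_div_cancel_left₀ _ hD.ne_zero, dvd_mul_right, true_and, sq D,
    mul_dvd_mul_iff_left hD.ne_zero]
  split_ifs with hDf
  · rw [S.congruenceSum_mul_of_dvd hB₁.ne_zero (right_ne_zero_of_mul hf)
      (squarefree_mul_iff.mp hsq).1.isCoprime hcop hDf,
      ← S.omega_pow_mul_eq_of_monic hf (hA₁.mul (hB₁.pow 2)) (N := N), mul_left_comm]
    rw [hN, hA₁.natDegree_mul (hB₁.pow 2), hD.natDegree_mul hA₁, hD.natDegree_mul hB₁,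
      hB₁.natDegree_pow]
    omega
  · rw [S.congruenceSum_mul_of_not_dvd (hsq.squarefree_of_dvd (dvd_mul_right _ _))
      hB₁.ne_zero hcop hDf, mul_zero, mul_zero]

end CongruenceSum

/-! ### Sums over balls -/

section ApproxBall

variable {K : Type*} [Field K] [Finite K] {A : Type*} [AddCommMonoid A]

lemma sum_approxBall_eq_sum_lowDegree {m c z : K[X]} (hm : m ≠ 0) {M : ℕ}
    (hz : z ∈ approxBall m c M) (φ : K[X] → A) :
    ∑ f ∈ approxBall m c M, φ f = ∑ r ∈ lowDegree K (M - m.natDegree), φ (z + r) := by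
  rw [mem_approxBall hm] at hz
  have hshift : ∀ r, z + r ∈ approxBall m c M ↔ r ∈ lowDegree K (M - m.natDegree) := fun r => by
    rw [mem_approxBall hm, mem_lowDegree, ← mul_mem_degreeLT_iff hm,
      show m * (z + r) - c = (m * z - c) + m * r by ring, Submodule.add_mem_iff_right _ hz]
  refine Finset.sum_bij' (fun f _ => f - z) (fun r _ => z + r) (fun f hf => ?_)
    (fun r hr => (hshift r).mpr hr) (fun f _ => add_sub_cancel z f)
    (fun r _ => add_sub_cancel_left z r) fun f _ => by rw [add_sub_cancel]
  rwa [← hshift, add_sub_cancel]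

lemma sum_approxBall_of_dvd {m c E : K[X]} (hm : m ≠ 0) (hE : E ≠ 0) {M : ℕ} (φ : K[X] → A) :
    ∑ f ∈ approxBall m (E * c) M, (if E ∣ f then φ f else 0) =
      ∑ h ∈ approxBall m c (M - E.natDegree), φ (E * h) := by
  have hscale : ∀ h, h ∈ approxBall m c (M - E.natDegree) ↔ E * h ∈ approxBall m (E * c) M := by
    intro h
    rw [mem_approxBall hm, mem_approxBall hm, ← mul_mem_degreeLT_iff hE, mul_sub,
      mul_left_comm]
  rw [← Finset.sum_filter]
  symm
  refine Finset.sum_bij (fun h _ => E * h) (fun h hh => ?_)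
    (fun _ _ _ _ e => mul_left_cancel₀ hE e) (fun f hf => ?_) fun _ _ => rfl
  · rw [Finset.mem_filter, ← hscale]
    exact ⟨hh, dvd_mul_right _ _⟩
  · rw [Finset.mem_filter] at hf
    obtain ⟨hf, h, rfl⟩ := hf
    exact ⟨h, (hscale h).mpr hf, rfl⟩

lemma sum_approxBall_of_dvd_sub {m c D : K[X]} (hm : m ≠ 0) (hD : D ≠ 0) (z : K[X]) {M : ℕ}
    (φ : K[X] → A) :
    ∑ f ∈ approxBall m c M, (if D ∣ f - z then φ ((f - z) / D) else 0) =
      ∑ h ∈ approxBall (m * D) (c - m * z) M, φ h := by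
  have hscale : ∀ h, h ∈ approxBall (m * D) (c - m * z) M ↔ z + D * h ∈ approxBall m c M := by
    intro h
    rw [mem_approxBall hm, mem_approxBall (mul_ne_zero hm hD)]
    congr! 1
    ring
  rw [← Finset.sum_filter]
  symm
  refine Finset.sum_bij (fun h _ => z + D * h) (fun h hh => ?_)
    (fun _ _ _ _ e => mul_left_cancel₀ hD (add_left_cancel e)) (fun f hf => ?_) fun h _ => by
      rw [add_sub_cancel_left, mul_div_cancel_left₀ _ hD]
  · rw [Finset.mem_filter, ← hscale]
    exact ⟨hh, h, add_sub_cancel_left _ _⟩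
  · rw [Finset.mem_filter] at hf
    obtain ⟨hf, h, hh⟩ := hf
    have hfh : z + D * h = f := by rw [← hh, add_sub_cancel]
    exact ⟨h, (hscale h).mpr (by rwa [hfh]), hfh⟩

lemma sum_monics_sum_of_dvd (b : ℕ) (Φ : K[X] → K[X] → A) :
    ∑ B ∈ monics K b, ∑ d ∈ Finset.range (b + 1), ∑ D ∈ monics K d,
      (if D ∣ B then Φ D (B / D) else 0) =
    ∑ d ∈ Finset.range (b + 1), ∑ D ∈ monics K d, ∑ B ∈ monics K (b - d), Φ D B := by
  rw [Finset.sum_comm]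
  refine Finset.sum_congr rfl fun d hd => ?_
  rw [Finset.sum_comm]
  refine Finset.sum_congr rfl fun D hD => ?_
  rw [mem_monics] at hD
  rw [sum_monics_of_dvd hD.1 (hD.2.trans_le (Finset.mem_range_succ_iff.mp hd))
    fun F => Φ D (F / D), hD.2]
  simp only [mul_div_cancel_right₀ _ hD.1.ne_zero]

end ApproxBall

section BallSum

open UniqueFactorizationMonoid

variable {K : Type*} [Field K] {br : K[X] → K[X] → ℂ} {ω : K → ℂ}

/-- The sum of the symbols of `f` modulo `A` over squarefree monic `A` of degree `N` and `f` in
the ball around `a * A / m` whose radius is `ρ` below the degree of `A`. -/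
def ballSum (br : K[X] → K[X] → ℂ) (N : ℕ) (a m : K[X]) (ρ : ℕ) : ℂ :=
  ∑ A ∈ sqfreeMonics K N, ∑ f ∈ approxBall m (a * A) (N + m.natDegree - ρ), br A f

/-- The total of the congruence sums modulo `B` over monic `A` and `f` in balls; after the
substitution `A - t * f = B * g` it becomes a sum over points of a two-dimensional lattice. -/
def latticeSum (br : K[X] → K[X] → ℂ) (ω : K → ℂ) (N : ℕ) (a m : K[X]) (M : ℕ) (B : K[X]) : ℂ :=
  ∑ A ∈ monics K (N - 2 * B.natDegree), ∑ f ∈ approxBall m (a * B ^ 2 * A) M,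
    ω f.leadingCoeff ^ N * congruenceSum br B A f

/-- The contribution to `latticeSum` of the factorization `D * B` of the modulus. -/
def splitSum (br : K[X] → K[X] → ℂ) (N : ℕ) (a m : K[X]) (M : ℕ) (D B : K[X]) : ℂ :=
  if 3 * D.natDegree + 2 * B.natDegree ≤ N then
    ∑ A ∈ monics K (N - 3 * D.natDegree - 2 * B.natDegree),
      ∑ f ∈ approxBall m (a * D * (A * B ^ 2)) (M - 2 * D.natDegree), br (A * B ^ 2) (D ^ 2 * f)
  else 0

lemma CubicSymbolLaws.moebius_mul_splitSum (S : CubicSymbolLaws br ω) (N : ℕ) (a m : K[X])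
    (M : ℕ) {D B : K[X]} (hB : B ≠ 0) :
    (moebius (D * B) : ℂ) * splitSum br N a m M D B =
      moebius D * moebius B * splitSum br N a m M D B := by
  by_cases hDB : IsRelPrime D B
  · rw [hDB.moebius_mul, Int.cast_mul]
  suffices splitSum br N a m M D B = 0 by rw [this, mul_zero, mul_zero]
  have hzero : ∀ f, br B (D ^ 2 * f) = 0 := fun f => by
    rw [S.eq_zero_iff _ _ hB]
    exact fun h => hDB (h.of_isCoprime_of_dvd_right
      ((dvd_pow_self D two_ne_zero).mul_right f)).symm.isRelPrime
  rw [splitSum, ite_eq_right_iff]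
  refine fun _ => Finset.sum_eq_zero fun A _ => Finset.sum_eq_zero fun f _ => ?_
  rw [S.mul_left, S.pow_left, hzero, zero_pow two_ne_zero, mul_zero]

lemma sum_triangle_eq {A : Type*} [AddCommMonoid A] (N ρ : ℕ) (T : ℕ → ℕ → A)
    (hT : ∀ d b, N < 3 * d + 2 * b ∨ ρ ≤ d + b → T d b = 0) :
    ∑ b ∈ Finset.range (N / 2 + 1) with b < ρ, ∑ d ∈ Finset.range (b + 1), T d (b - d) =
      ∑ d ∈ Finset.range (N / 3 + 1), ∑ b ∈ Finset.range ((N - 3 * d) / 2 + 1), T d b := by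
  rw [Finset.sum_sigma', Finset.sum_sigma']
  refine Finset.sum_bij_ne_zero (fun x _ _ => ⟨x.2, x.1 - x.2⟩) ?_ ?_ ?_ fun _ _ _ => rfl
  · rintro ⟨b, d⟩ h hne
    simp only [Finset.mem_sigma, Finset.mem_filter, Finset.mem_range] at h hne ⊢
    have := mt (hT d (b - d)) hne
    omega
  · rintro ⟨b, d⟩ h _ ⟨b', d'⟩ h' _ e
    simp only [Finset.mem_sigma, Finset.mem_filter, Finset.mem_range] at h h' e
    simp only [Sigma.mk.injEq, heq_eq_eq] at e ⊢
    omega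
  · rintro ⟨d, b⟩ h hne
    simp only [Finset.mem_sigma, Finset.mem_range] at h hne
    have := mt (hT d b) hne
    refine ⟨⟨d + b, d⟩, ?_, by simpa using hne, by simp⟩
    simp only [Finset.mem_sigma, Finset.mem_filter, Finset.mem_range]
    omega

section Finite

variable [Finite K]

lemma CubicSymbolLaws.sum_approxBall_eq_zero (S : CubicSymbolLaws br ω) {A B m : K[X]}
    (hA : A ≠ 0) (hB : B ≠ 0) (hc : ¬ IsConstMulCube (A * B ^ 2)) (hm : m ≠ 0) (c : K[X]) {M : ℕ}
    (hM : (A * B).natDegree ≤ M - m.natDegree) :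
    ∑ f ∈ approxBall m c M, br (A * B ^ 2) f = 0 := by
  let _ := Fintype.ofFinite K
  rcases (approxBall m c M).eq_empty_or_nonempty with he | ⟨z, hz⟩
  · rw [he, Finset.sum_empty]
  have hAB : A * B ≠ 0 := mul_ne_zero hA hB
  have hAB2 : A * B ^ 2 ≠ 0 := mul_ne_zero hA (pow_ne_zero 2 hB)
  have hperiodic : ∀ g h, A * B ∣ g - h → br (A * B ^ 2) g = br (A * B ^ 2) h := by
    intro g h hd
    rw [sq, ← mul_assoc, S.mul_left (A * B), S.mul_left (A * B), S.congr _ _ _ hd,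
      S.congr B _ _ ((dvd_mul_left B A).trans hd)]
  have hfull := S.sum_lowDegree_natDegree_eq_zero hAB2 hc
  have hle : (A * B).natDegree ≤ (A * B ^ 2).natDegree :=
    natDegree_le_of_dvd ⟨B, by ring⟩ hAB2
  have hq : (Fintype.card K : ℂ) ≠ 0 := Nat.cast_ne_zero.mpr Fintype.card_ne_zero
  have hperiod : ∑ r ∈ lowDegree K (A * B).natDegree, br (A * B ^ 2) r = 0 := by
    have h := sum_lowDegree_of_periodic hAB (br (A * B ^ 2)) hperiodic 0 hle
    simp only [zero_add] at h
    rw [hfull] at h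
    exact (mul_eq_zero.mp h.symm).resolve_left (pow_ne_zero _ hq)
  rw [sum_approxBall_eq_sum_lowDegree hm hz,
    sum_lowDegree_of_periodic hAB _ hperiodic z hM, hperiod, mul_zero]

lemma CubicSymbolLaws.splitSum_eq_zero (S : CubicSymbolLaws br ω) {N : ℕ} (hN : N % 3 = 1)
    {a m : K[X]} (hm : m ≠ 0) {ρ : ℕ} {D B : K[X]} (hB : B.Monic)
    (h : ρ ≤ D.natDegree + B.natDegree) :
    splitSum br N a m (N + m.natDegree - ρ) D B = 0 := by
  rw [splitSum, ite_eq_right_iff]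
  refine fun hdb => Finset.sum_eq_zero fun A hA => ?_
  rw [mem_monics] at hA
  simp only [S.mul_right _ _ _ (hA.1.mul (hB.pow 2)).ne_zero]
  rw [← Finset.mul_sum, S.sum_approxBall_eq_zero hA.1.ne_zero hB.ne_zero ?_ hm, mul_zero]
  · rw [hA.1.natDegree_mul hB, hA.2]
    omega
  · intro hc
    have hdvd := hc.three_dvd_natDegree
    rw [hA.1.natDegree_mul (hB.pow 2), hB.natDegree_pow, hA.2] at hdvd
    omega

lemma sum_monics_sum_approxBall_splitTerm {N : ℕ} {a m : K[X]} (hm : m ≠ 0) {M : ℕ}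
    {D B : K[X]} (hD : D.Monic) (hB : B.Monic) (hN : 2 * (D * B).natDegree ≤ N) :
    ∑ A ∈ monics K (N - 2 * (D * B).natDegree), ∑ f ∈ approxBall m (a * (D * B) ^ 2 * A) M,
      splitTerm br (D * B) A f D = splitSum br N a m M D B := by
  have hfactor : ∀ A ∈ monics K (N - 2 * (D * B).natDegree),
      ∑ f ∈ approxBall m (a * (D * B) ^ 2 * A) M, splitTerm br (D * B) A f D =
        if D ∣ A then ∑ f ∈ approxBall m (a * (D * B) ^ 2 * A) M,
          (if D ^ 2 ∣ f then br (A / D * B ^ 2) f else 0) else 0 := fun A _ => by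
    by_cases hDA : D ∣ A <;> simp [splitTerm, hDA, mul_div_cancel_left₀ B hD.ne_zero]
  rw [Finset.sum_congr rfl hfactor, splitSum]
  rw [hD.natDegree_mul hB] at hN ⊢
  split_ifs with hdb
  · rw [sum_monics_of_dvd hD (by omega), show N - 2 * (D.natDegree + B.natDegree) - D.natDegree =
      N - 3 * D.natDegree - 2 * B.natDegree by omega]
    refine Finset.sum_congr rfl fun A _ => ?_
    rw [mul_div_cancel_right₀ _ hD.ne_zero,
      show a * (D * B) ^ 2 * (A * D) = D ^ 2 * (a * D * (A * B ^ 2)) by ring,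
      sum_approxBall_of_dvd hm (pow_ne_zero 2 hD.ne_zero), natDegree_pow]
  · exact sum_monics_of_dvd_eq_zero (by omega) _

lemma ne_zero_of_mem_approxBall {a m A f : K[X]} (ha : a ≠ 0) (hm : m ≠ 0) (hA : A.Monic) {M : ℕ}
    (hM : M ≤ a.natDegree + A.natDegree) (hf : f ∈ approxBall m (a * A) M) : f ≠ 0 := by
  rw [mem_approxBall hm] at hf
  have hlead := (natDegree_eq_and_leadingCoeff_eq_of_mul_sub_mem hm ha hM hA hf).2
  rintro rfl
  rw [leadingCoeff_zero] at hlead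
  exact div_ne_zero (leadingCoeff_ne_zero.mpr ha) (leadingCoeff_ne_zero.mpr hm) hlead.symm

/-- Twisting by the square of a squarefree polynomial is averaging over a congruence class. -/
lemma CubicSymbolLaws.sq_mul_eq_congruenceSum (S : CubicSymbolLaws br ω) {A D : K[X]}
    (hA : Squarefree A) (hD : Squarefree D) (h : K[X]) :
    br A (D ^ 2 * h) = congruenceSum br D h A := by
  let _ := Fintype.ofFinite K
  obtain ⟨E, A₁, D₁, hE, rfl, rfl, hcop⟩ :=
    exists_monic_eq_mul_and_eq_mul_and_isCoprime A hD.ne_zero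
  have hA₁ : A₁ ≠ 0 := right_ne_zero_of_mul hA.ne_zero
  have hD₁ : D₁ ≠ 0 := right_ne_zero_of_mul hD.ne_zero
  by_cases hu : IsUnit E
  · obtain rfl := hE.eq_one_of_isUnit hu
    have hsum := S.congruenceSum_mul_of_dvd hD₁ hA₁ isCoprime_one_left hcop (one_dvd _) h
    simp only [one_mul, natDegree_one, pow_zero] at hsum ⊢
    rw [hsum, mul_comm]
  have hzero : br (E * A₁) ((E * D₁) ^ 2 * h) = 0 := by
    rw [S.eq_zero_iff _ _ hA.ne_zero]
    exact fun hc => hu (hc.isUnit_of_dvd' (dvd_mul_right _ _)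
      (((dvd_mul_right _ _).trans (dvd_pow_self _ two_ne_zero)).mul_right h))
  rw [hzero]
  symm
  by_cases hEh : E ∣ h
  · obtain ⟨h₁, rfl⟩ := hEh
    refine S.congruenceSum_mul_of_not_dvd (hD.squarefree_of_dvd (dvd_mul_right _ _)) hD₁ hcop ?_ _
    exact fun hEA => hu (hA E (mul_dvd_mul_left E hEA))
  · exact congruenceSum_eq_zero_of_not_dvd (dvd_mul_right _ _) (dvd_mul_right _ _) hEh

lemma CubicSymbolLaws.sum_sqfreeMonics_sq_mul (S : CubicSymbolLaws br ω) {N : ℕ} {a m D : K[X]}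
    (hm : m ≠ 0) (hD : D.Monic) (hsq : Squarefree D) (hN : 3 * D.natDegree ≤ N) (ρ : ℕ) :
    ∑ A ∈ sqfreeMonics K (N - 3 * D.natDegree),
      ∑ f ∈ approxBall m (a * D * A) (N + m.natDegree - ρ - 2 * D.natDegree), br A (D ^ 2 * f) =
    ∑ t ∈ lowDegree K D.natDegree,
      ballSum br (N - 3 * D.natDegree) (a * D - m * t) (m * D) ρ := by
  simp only [ballSum]
  rw [Finset.sum_comm]
  refine Finset.sum_congr rfl fun A hA => ?_
  rw [mem_sqfreeMonics] at hA
  simp only [S.sq_mul_eq_congruenceSum hA.2 hsq, congruenceSum]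
  rw [Finset.sum_comm]
  refine Finset.sum_congr rfl fun t _ => ?_
  rw [sum_approxBall_of_dvd_sub hm hD.ne_zero (t * A) (br A), natDegree_mul hm hD.ne_zero]
  congr 2
  · ring
  · omega

end Finite

variable [Fintype K]

lemma CubicSymbolLaws.latticeSum_eq_sum_splitSum (S : CubicSymbolLaws br ω) {N : ℕ} {a m : K[X]}
    (ha : a ≠ 0) (hm : m ≠ 0) {M : ℕ} (hM : M ≤ a.natDegree + N) {B : K[X]} (hB : B.Monic)
    (hsq : Squarefree B) (hN : 2 * B.natDegree ≤ N) :
    latticeSum br ω N a m M B =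
      ∑ d ∈ Finset.range (B.natDegree + 1), ∑ D ∈ monics K d, (if D ∣ B then
        (Fintype.card K : ℂ) ^ D.natDegree * splitSum br N a m M D (B / D) else 0) := by
  have hB2 : B ^ 2 ≠ 0 := pow_ne_zero 2 hB.ne_zero
  have hexpand : latticeSum br ω N a m M B = ∑ A ∈ monics K (N - 2 * B.natDegree),
      ∑ f ∈ approxBall m (a * B ^ 2 * A) M, ∑ d ∈ Finset.range (B.natDegree + 1),
        ∑ D ∈ monics K d, (if D ∣ B then
          (Fintype.card K : ℂ) ^ D.natDegree * splitTerm br B A f D else 0) := by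
    refine Finset.sum_congr rfl fun A hA => Finset.sum_congr rfl fun f hf => ?_
    rw [mem_monics] at hA
    refine S.omega_pow_mul_congruenceSum hB hsq ?_ hA.1 (by omega)
    refine ne_zero_of_mem_approxBall (mul_ne_zero ha hB2) hm hA.1 ?_ hf
    rw [natDegree_mul ha hB2, natDegree_pow]
    omega
  rw [hexpand]
  simp only [Finset.sum_comm (s := approxBall _ _ _) (t := Finset.range _)]
  rw [Finset.sum_comm]
  refine Finset.sum_congr rfl fun d _ => ?_
  simp only [Finset.sum_comm (s := approxBall _ _ _) (t := monics K d)]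
  rw [Finset.sum_comm]
  refine Finset.sum_congr rfl fun D hD => ?_
  rw [mem_monics] at hD
  split_ifs with hd
  · obtain ⟨B₁, rfl⟩ := hd
    rw [mul_div_cancel_left₀ _ hD.1.ne_zero,
      ← sum_monics_sum_approxBall_splitTerm hm hD.1 (hD.1.of_mul_monic_left hB) hN]
    simp only [Finset.mul_sum]
  · simp only [Finset.sum_const_zero]

/-- The Möbius-weighted total of the split sums over monic `D` of degree `d` and monic `B` of
degree `b`. -/
def weightedSplitSum (br : K[X] → K[X] → ℂ) (N : ℕ) (a m : K[X]) (M d b : ℕ) : ℂ :=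
  ∑ D ∈ monics K d, ∑ B ∈ monics K b,
    moebius D * moebius B * ((Fintype.card K : ℂ) ^ D.natDegree * splitSum br N a m M D B)

lemma CubicSymbolLaws.sum_moebius_mul_latticeSum (S : CubicSymbolLaws br ω) {N : ℕ} {a m : K[X]}
    (ha : a ≠ 0) (hm : m ≠ 0) {M : ℕ} (hM : M ≤ a.natDegree + N) {b : ℕ} (hb : 2 * b ≤ N) :
    ∑ B ∈ monics K b, moebius B * latticeSum br ω N a m M B =
      ∑ d ∈ Finset.range (b + 1), weightedSplitSum br N a m M d (b - d) := by
  have hsplit : ∀ B ∈ monics K b, moebius B * latticeSum br ω N a m M B =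
      ∑ d ∈ Finset.range (b + 1), ∑ D ∈ monics K d, (if D ∣ B then moebius (D * (B / D)) *
        ((Fintype.card K : ℂ) ^ D.natDegree * splitSum br N a m M D (B / D)) else 0) := by
    intro B hB
    rw [mem_monics] at hB
    have hdiv : ∀ d, ∀ D ∈ monics K d, ∀ z : ℂ, (if D ∣ B then moebius (D * (B / D)) * z else 0) =
        moebius B * if D ∣ B then z else 0 := fun d D hD z => by
      split_ifs with hd
      · rw [EuclideanDomain.mul_div_cancel' (mem_monics.mp hD).1.ne_zero hd]
      · rw [mul_zero]
    rw [Finset.sum_congr rfl fun d _ => Finset.sum_congr rfl fun D hD => hdiv d D hD _]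
    simp only [← Finset.mul_sum]
    by_cases hsq : Squarefree B
    · rw [S.latticeSum_eq_sum_splitSum ha hm hM hB.1 hsq (by omega), hB.2]
    · rw [moebius_of_not_squarefree hsq, Int.cast_zero, zero_mul, zero_mul]
  rw [Finset.sum_congr rfl hsplit, sum_monics_sum_of_dvd b fun D B =>
    moebius (D * B) * ((Fintype.card K : ℂ) ^ D.natDegree * splitSum br N a m M D B)]
  refine Finset.sum_congr rfl fun d _ => Finset.sum_congr rfl fun D _ =>
    Finset.sum_congr rfl fun B hB => ?_
  linear_combination (Fintype.card K : ℂ) ^ D.natDegree *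
    S.moebius_mul_splitSum N a m M (D := D) (mem_monics.mp hB).1.ne_zero

lemma CubicSymbolLaws.weightedSplitSum_eq_zero (S : CubicSymbolLaws br ω) {N : ℕ}
    (hN : N % 3 = 1) {a m : K[X]} (hm : m ≠ 0) {ρ d b : ℕ}
    (h : N < 3 * d + 2 * b ∨ ρ ≤ d + b) :
    weightedSplitSum br N a m (N + m.natDegree - ρ) d b = 0 := by
  refine Finset.sum_eq_zero fun D hD => Finset.sum_eq_zero fun B hB => ?_
  rw [mem_monics] at hD hB
  have hzero : splitSum br N a m (N + m.natDegree - ρ) D B = 0 := by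
    rcases h with h | h
    · rw [splitSum, if_neg (by omega)]
    · exact S.splitSum_eq_zero hN hm hB.1 (by omega)
  rw [hzero, mul_zero, mul_zero]

lemma CubicSymbolLaws.sum_weightedSplitSum (S : CubicSymbolLaws br ω) {N : ℕ} {a m : K[X]}
    (hm : m ≠ 0) (ρ : ℕ) {d : ℕ} (hd : 3 * d ≤ N) :
    ∑ b ∈ Finset.range ((N - 3 * d) / 2 + 1),
      weightedSplitSum br N a m (N + m.natDegree - ρ) d b =
    ∑ D ∈ monics K d, moebius D * (Fintype.card K : ℂ) ^ d *
      ∑ t ∈ lowDegree K d, ballSum br (N - 3 * d) (a * D - m * t) (m * D) ρ := by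
  simp only [weightedSplitSum]
  rw [Finset.sum_comm]
  refine Finset.sum_congr rfl fun D hD => ?_
  rw [mem_monics] at hD
  obtain ⟨hDm, rfl⟩ := hD
  by_cases hsq : Squarefree D
  swap
  · simp [moebius_of_not_squarefree hsq]
  rw [← S.sum_sqfreeMonics_sq_mul hm hDm hsq hd, sum_sqfreeMonics, Finset.mul_sum]
  refine Finset.sum_congr rfl fun b hb => ?_
  rw [Finset.mem_range] at hb
  rw [Finset.mul_sum]
  refine Finset.sum_congr rfl fun B hB => ?_
  rw [mem_monics] at hB
  rw [splitSum, if_pos (by omega), hB.2]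
  ring

/-- The term `d = 0` on the right is the ball sum itself, which is thereby reduced to lattice sums
and ball sums of smaller degree. -/
lemma CubicSymbolLaws.sum_latticeSum_eq_sum_ballSum (S : CubicSymbolLaws br ω) {N : ℕ}
    (hN : N % 3 = 1) {a m : K[X]} (ha : a ≠ 0) (hm : m ≠ 0) {ρ : ℕ}
    (hM : N + m.natDegree - ρ ≤ a.natDegree + N) :
    ∑ b ∈ Finset.range (N / 2 + 1) with b < ρ, ∑ B ∈ monics K b,
        moebius B * latticeSum br ω N a m (N + m.natDegree - ρ) B =
      ∑ d ∈ Finset.range (N / 3 + 1), ∑ D ∈ monics K d, moebius D * (Fintype.card K : ℂ) ^ d *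
        ∑ t ∈ lowDegree K d, ballSum br (N - 3 * d) (a * D - m * t) (m * D) ρ := by
  rw [Finset.sum_congr rfl fun b hb => S.sum_moebius_mul_latticeSum ha hm hM (b := b) ?_,
    sum_triangle_eq N ρ _ fun d b h => S.weightedSplitSum_eq_zero hN hm h]
  · refine Finset.sum_congr rfl fun d hd => S.sum_weightedSplitSum hm ρ ?_
    rw [Finset.mem_range] at hd
    omega
  · rw [Finset.mem_filter, Finset.mem_range] at hb
    omega

end BallSum

section LatticeSumBound

variable {K : Type*} [Field K] {br : K[X] → K[X] → ℂ} {ω : K → ℂ}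

lemma le_sum_commonDivisors [Finite K] {B t E : K[X]} (hB : B ≠ 0) (hE : E.Monic) (hEB : E ∣ B)
    (hEt : E ∣ t) {φ : ℕ → ℝ} (hφ : ∀ e, 0 ≤ φ e) :
    φ E.natDegree ≤ ∑ e ∈ Finset.range (B.natDegree + 1),
      ∑ F ∈ monics K e with F ∣ B ∧ F ∣ t, φ e := by
  have hdeg : E.natDegree ∈ Finset.range (B.natDegree + 1) :=
    Finset.mem_range_succ_iff.mpr (natDegree_le_of_dvd hEB hB)
  have hmem : E ∈ {F ∈ monics K E.natDegree | F ∣ B ∧ F ∣ t} :=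
    Finset.mem_filter.mpr ⟨mem_monics.mpr ⟨hE, rfl⟩, hEB, hEt⟩
  calc φ E.natDegree
      ≤ ∑ F ∈ monics K E.natDegree with F ∣ B ∧ F ∣ t, φ E.natDegree :=
        Finset.single_le_sum (f := fun _ => φ E.natDegree) (fun _ _ => hφ _) hmem
    _ ≤ _ := Finset.single_le_sum
        (f := fun e => ∑ F ∈ monics K e with F ∣ B ∧ F ∣ t, φ e)
        (fun e _ => Finset.sum_nonneg fun _ _ => hφ e) hdeg

lemma sum_latticeBox [Finite K] {A : Type*} [AddCommMonoid A] {B m : K[X]} (hB : B ≠ 0)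
    (hm : m ≠ 0) (t c : K[X]) {N M : ℕ} (φ : K[X] → K[X] → A) :
    ∑ w ∈ latticeBox B t m c N M, φ w.2 w.1 = ∑ a ∈ monics K N, ∑ f ∈ approxBall m (c * a) M,
      (if B ∣ a - t * f then φ f ((a - t * f) / B) else 0) := by
  simp only [← Finset.sum_filter]
  rw [Finset.sum_sigma']
  refine Finset.sum_bij (fun w _ => ⟨valueForm B t w, w.2⟩) (fun w hw => ?_)
    (fun w _ w' _ h => ?_) ?_ fun w _ => ?_
  · rw [mem_latticeBox hB hm] at hw
    rw [Finset.mem_sigma, Finset.mem_filter, mem_approxBall hm]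
    exact ⟨hw.1, hw.2, w.1, by rw [valueForm_apply]; ring⟩
  · simp only [valueForm_apply, Sigma.mk.injEq, heq_eq_eq] at h
    have hvalue := h.1
    rw [h.2] at hvalue
    exact Prod.ext (mul_left_cancel₀ hB (add_right_cancel hvalue)) h.2
  · rintro ⟨a, f⟩ h
    rw [Finset.mem_sigma, Finset.mem_filter, mem_approxBall hm] at h
    obtain ⟨ha, hf, g, hg⟩ := h
    have hvalue : valueForm B t (g, f) = a := by
      rw [valueForm_apply]
      linear_combination -hg
    refine ⟨(g, f), ?_, by rw [hvalue]⟩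
    rw [mem_latticeBox hB hm, errorForm_apply, hvalue]
    exact ⟨ha, hf⟩
  · rw [valueForm_apply, add_sub_cancel_right, mul_div_cancel_left₀ _ hB]

lemma CubicSymbolLaws.norm_latticeSum_le [Finite K] (S : CubicSymbolLaws br ω) {N : ℕ}
    {a m B : K[X]} (ha : a ≠ 0) (hm : m ≠ 0) (hB : B.Monic) {M : ℕ} (hM : M ≤ a.natDegree + N)
    (hBN : 2 * B.natDegree ≤ N) :
    ‖latticeSum br ω N a m M B‖ ≤ ∑ t ∈ lowDegree K B.natDegree,
      ‖∑ w ∈ latticeBox B t m (a * B ^ 2) (N - 2 * B.natDegree) M, br w.2 w.1‖ := by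
  have hB2 : B ^ 2 ≠ 0 := pow_ne_zero 2 hB.ne_zero
  have hc : a * B ^ 2 ≠ 0 := mul_ne_zero ha hB2
  let l := (a * B ^ 2).leadingCoeff / m.leadingCoeff
  have hl : l ≠ 0 := div_ne_zero (leadingCoeff_ne_zero.mpr hc) (leadingCoeff_ne_zero.mpr hm)
  have hfactor : latticeSum br ω N a m M B = ω l ^ N * ∑ t ∈ lowDegree K B.natDegree,
      ∑ w ∈ latticeBox B t m (a * B ^ 2) (N - 2 * B.natDegree) M, br w.2 w.1 := by
    simp only [sum_latticeBox hB.ne_zero hm _ _ br]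
    rw [Finset.sum_comm, Finset.mul_sum, latticeSum]
    refine Finset.sum_congr rfl fun A hA => ?_
    rw [mem_monics] at hA
    rw [Finset.sum_comm, Finset.mul_sum]
    refine Finset.sum_congr rfl fun f hf => ?_
    have hdeg : M ≤ (a * B ^ 2).natDegree + A.natDegree := by
      rw [natDegree_mul ha hB2, natDegree_pow, hA.2]
      omega
    rw [(natDegree_eq_and_leadingCoeff_eq_of_mul_sub_mem hm hc hdeg hA.1
      ((mem_approxBall hm).mp hf)).2, congruenceSum]
  rw [hfactor, norm_mul, norm_pow, S.norm_omega hl, one_pow, one_mul]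
  exact norm_sum_le _ _

variable [Fintype K]

lemma card_monics_filter_dvd {E : K[X]} (hE : E.Monic) {b : ℕ} (h : E.natDegree ≤ b) :
    {F ∈ monics K b | E ∣ F}.card = Fintype.card K ^ (b - E.natDegree) := by
  rw [Finset.card_filter, sum_monics_of_dvd hE h fun _ => 1, ← Finset.card_eq_sum_ones,
    card_monics]

lemma card_lowDegree_filter_dvd {E : K[X]} (hE : E ≠ 0) (b : ℕ) :
    {F ∈ lowDegree K b | E ∣ F}.card = Fintype.card K ^ (b - E.natDegree) := by
  have himage : {F ∈ lowDegree K b | E ∣ F} =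
      (lowDegree K (b - E.natDegree)).image (E * ·) := by
    ext F
    rw [Finset.mem_filter, Finset.mem_image, mem_lowDegree]
    constructor
    · rintro ⟨hF, A, rfl⟩
      exact ⟨A, mem_lowDegree.mpr ((mul_mem_degreeLT_iff hE).mp hF), rfl⟩
    · rintro ⟨A, hA, rfl⟩
      exact ⟨(mul_mem_degreeLT_iff hE).mpr (mem_lowDegree.mp hA), dvd_mul_right E A⟩
  rw [himage, Finset.card_image_of_injective _ (mul_right_injective₀ hE), card_lowDegree]

lemma sum_commonDivisors {R : Type*} [CommSemiring R] (b : ℕ) (φ : ℕ → R) :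
    ∑ B ∈ monics K b, ∑ t ∈ lowDegree K b, ∑ e ∈ Finset.range (b + 1),
      ∑ E ∈ monics K e with E ∣ B ∧ E ∣ t, φ e =
    ∑ e ∈ Finset.range (b + 1), (Fintype.card K : R) ^ (2 * b - e) * φ e := by
  have hswap : ∑ B ∈ monics K b, ∑ t ∈ lowDegree K b, ∑ e ∈ Finset.range (b + 1),
      ∑ E ∈ monics K e with E ∣ B ∧ E ∣ t, φ e =
      ∑ e ∈ Finset.range (b + 1), ∑ E ∈ monics K e, ∑ B ∈ monics K b with E ∣ B,
        ∑ t ∈ lowDegree K b with E ∣ t, φ e := by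
    simp only [Finset.sum_filter, ite_and, Finset.sum_comm (s := lowDegree K b)]
    rw [Finset.sum_comm]
    refine Finset.sum_congr rfl fun e _ => ?_
    rw [Finset.sum_comm]
    refine Finset.sum_congr rfl fun E _ => Finset.sum_congr rfl fun B _ => ?_
    split_ifs
    · rfl
    · exact Finset.sum_const_zero
  rw [hswap]
  refine Finset.sum_congr rfl fun e he => ?_
  rw [Finset.mem_range] at he
  have hE : ∀ E ∈ monics K e, ∑ B ∈ monics K b with E ∣ B, ∑ t ∈ lowDegree K b with E ∣ t, φ e =
      (Fintype.card K : R) ^ (b - e) * ((Fintype.card K : R) ^ (b - e) * φ e) := fun E hE => by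
    rw [mem_monics] at hE
    rw [Finset.sum_const, Finset.sum_const, card_monics_filter_dvd hE.1 (by omega),
      card_lowDegree_filter_dvd hE.1.ne_zero, hE.2, nsmul_eq_mul, nsmul_eq_mul, Nat.cast_pow]
  rw [Finset.sum_congr rfl hE, Finset.sum_const, card_monics, nsmul_eq_mul, Nat.cast_pow,
    ← mul_assoc, ← mul_assoc, ← pow_add, ← pow_add,
    show e + (b - e) + (b - e) = 2 * b - e by omega]

lemma CubicSymbolLaws.norm_sum_latticeBox_le (S : CubicSymbolLaws br ω) {N b ρ : ℕ}
    {a m B t : K[X]} (ha : a ≠ 0) (hm : m ≠ 0) (hB : B ∈ monics K b) (hρ : ρ ≤ N)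
    (hM : N + m.natDegree - ρ ≤ a.natDegree + N) (hBN : 2 * b ≤ N) :
    ‖∑ w ∈ latticeBox B t m (a * B ^ 2) (N - 2 * b) (N + m.natDegree - ρ), br w.2 w.1‖ ≤
      (Fintype.card K : ℝ) + (Fintype.card K : ℝ) ^ 2 *
        (Fintype.card K : ℝ) ^ ((4 * N - 7 * b - ρ : ℝ) / 3) +
      ∑ e ∈ Finset.range (b + 1), ∑ E ∈ monics K e with E ∣ B ∧ E ∣ t,
        (Fintype.card K : ℝ) ^ 2 *
          (Fintype.card K : ℝ) ^ ((4 * N - 3 * ρ - 5 * b + 2 * e : ℝ) / 3) := by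
  rw [mem_monics] at hB
  obtain ⟨hB, rfl⟩ := hB
  set q : ℝ := (Fintype.card K : ℝ)
  have hq1 : 1 ≤ q := Nat.one_le_cast.mpr Fintype.card_pos
  have hB2 := pow_ne_zero 2 hB.ne_zero
  have hN' : ((N - 2 * B.natDegree : ℕ) : ℝ) = N - 2 * B.natDegree := by
    rw [Nat.cast_sub hBN]
    push_cast
    ring
  have hM' : ((N + m.natDegree - ρ : ℕ) : ℝ) = N + m.natDegree - ρ := by
    rw [Nat.cast_sub (by omega), Nat.cast_add]
  obtain ⟨u, hu, hcase⟩ := S.exists_norm_sum_latticeBox_le (N := N - 2 * B.natDegree)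
    (M := N + m.natDegree - ρ) hB.ne_zero hm (mul_ne_zero ha hB2) t (by
      rw [natDegree_mul ha hB2, natDegree_pow]; omega)
  refine hu.trans ?_
  rw [add_assoc, hN', hM']
  refine add_le_add_right ?_ q
  rcases hcase with h | ⟨E, hEm, hEB, hEt, hEu⟩
  · refine le_add_of_le_of_nonneg (mul_le_mul_of_nonneg_left ?_ (by positivity))
      (Finset.sum_nonneg fun e _ => Finset.sum_nonneg fun E _ => by positivity)
    have hu' : (u : ℝ) ≤ N - 2 * B.natDegree := by
      rw [← hN']
      exact_mod_cast h
    exact Real.rpow_le_rpow_of_exponent_le hq1 (by linarith)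
  · refine le_add_of_nonneg_of_le (by positivity) (le_trans ?_
      (le_sum_commonDivisors hB.ne_zero hEm hEB hEt fun e => by positivity))
    refine mul_le_mul_of_nonneg_left ?_ (by positivity)
    have hu' : (u : ℝ) + m.natDegree + B.natDegree ≤ N + m.natDegree - ρ + E.natDegree := by
      rw [← hM']
      exact_mod_cast hEu
    exact Real.rpow_le_rpow_of_exponent_le hq1 (by linarith)

lemma CubicSymbolLaws.sum_norm_latticeSum_le (S : CubicSymbolLaws br ω) {N b ρ : ℕ} {a m : K[X]}
    (ha : a ≠ 0) (hm : m ≠ 0) (hρ : ρ ≤ N)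
    (hM : N + m.natDegree - ρ ≤ a.natDegree + N) (hBN : 2 * b ≤ N) :
    ∑ B ∈ monics K b, ‖latticeSum br ω N a m (N + m.natDegree - ρ) B‖ ≤
      (Fintype.card K : ℝ) ^ (2 * b) * (Fintype.card K : ℝ) + (Fintype.card K : ℝ) ^ 2 *
        (Fintype.card K : ℝ) ^ ((4 * N - b - ρ : ℝ) / 3) +
      ∑ e ∈ Finset.range (b + 1), (Fintype.card K : ℝ) ^ 2 *
        (Fintype.card K : ℝ) ^ ((4 * N - 3 * ρ + b - e : ℝ) / 3) := by
  have hlattice : ∀ B ∈ monics K b, ‖latticeSum br ω N a m (N + m.natDegree - ρ) B‖ ≤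
      ∑ t ∈ lowDegree K b, ‖∑ w ∈ latticeBox B t m (a * B ^ 2) (N - 2 * b)
        (N + m.natDegree - ρ), br w.2 w.1‖ := fun B hB => by
    rw [mem_monics] at hB
    simpa only [hB.2] using S.norm_latticeSum_le ha hm hB.1 hM (hB.2 ▸ hBN)
  refine (Finset.sum_le_sum fun B hB => (hlattice B hB).trans <| Finset.sum_le_sum fun t _ =>
    S.norm_sum_latticeBox_le ha hm hB hρ hM hBN).trans (le_of_eq ?_)
  simp only [Finset.sum_add_distrib]
  rw [sum_commonDivisors]
  simp only [Finset.sum_const, nsmul_eq_mul, card_lowDegree, card_monics, Nat.cast_pow]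
  set q : ℝ := (Fintype.card K : ℝ)
  have hq : 0 < q := Nat.cast_pos.mpr Fintype.card_pos
  have habsorb : ∀ (k : ℕ) (x : ℝ), q ^ k * (q ^ 2 * q ^ x) = q ^ 2 * q ^ (k + x) := fun k x => by
    rw [Real.rpow_add hq, Real.rpow_natCast]
    ring
  congr 1
  · rw [← mul_assoc, ← mul_assoc, ← pow_add, ← two_mul, habsorb]
    congr 4
    push_cast
    ring
  · refine Finset.sum_congr rfl fun e he => ?_
    rw [Finset.mem_range] at he
    rw [habsorb, Nat.cast_sub (by omega)]
    congr 2
    push_cast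
    ring

end LatticeSumBound

section Envelope

/-- The common ratio `q ^ (-1/3)` of the geometric series occurring in the lattice bounds. -/
def cubeRatio (q : ℝ) : ℝ := q ^ (-(1 / 3) : ℝ)

/-- The implied constant in the bound for the total of the lattice sums. -/
def latticeConst (q : ℝ) : ℝ :=
  2 * q + q ^ 2 * (1 - cubeRatio q)⁻¹ + q ^ 2 * (1 - cubeRatio q)⁻¹ * (1 - cubeRatio q)⁻¹

/-- The order of magnitude `q ^ (8N/7) + q ^ ((4N - ρ)/3)` of the bound for `ballSum`. -/
def ballEnvelope (q : ℝ) (N ρ : ℕ) : ℝ := q ^ ((8 / 7 : ℝ) * N) + q ^ ((4 * N - ρ : ℝ) / 3)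

variable {q : ℝ}

lemma cubeRatio_nonneg (hq : 0 ≤ q) : 0 ≤ cubeRatio q := Real.rpow_nonneg hq _

lemma cubeRatio_lt_one (hq : 1 < q) : cubeRatio q < 1 :=
  Real.rpow_lt_one_of_one_lt_of_neg hq (by norm_num)

lemma cubeRatio_pow (hq : 0 ≤ q) (n : ℕ) : cubeRatio q ^ n = q ^ (-(n : ℝ) / 3) := by
  rw [cubeRatio, ← Real.rpow_natCast, ← Real.rpow_mul hq]
  congr 1
  ring

lemma sum_pow_le_inv_one_sub {r : ℝ} (h0 : 0 ≤ r) (h1 : r < 1) (s : Finset ℕ) :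
    ∑ i ∈ s, r ^ i ≤ (1 - r)⁻¹ := by
  rw [← tsum_geometric_of_lt_one h0 h1]
  exact (summable_geometric_of_lt_one h0 h1).sum_le_tsum s fun i _ => pow_nonneg h0 i

lemma one_le_latticeConst (hq : 1 < q) : 1 ≤ latticeConst q := by
  have hgeo : 0 < (1 - cubeRatio q)⁻¹ := inv_pos.mpr (sub_pos.mpr (cubeRatio_lt_one hq))
  calc 1 ≤ 2 * q := by linarith
    _ ≤ 2 * q + q ^ 2 * (1 - cubeRatio q)⁻¹ := le_add_of_nonneg_right (by positivity)
    _ ≤ latticeConst q := le_add_of_nonneg_right (by positivity)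

lemma ballEnvelope_pos (hq : 0 < q) (N ρ : ℕ) : 0 < ballEnvelope q N ρ :=
  add_pos (Real.rpow_pos_of_pos hq _) (Real.rpow_pos_of_pos hq _)

lemma pow_le_rpow_eight_sevenths_mul (hq : 1 ≤ q) (N : ℕ) : q ^ N ≤ q ^ ((8 / 7 : ℝ) * N) := by
  rw [← Real.rpow_natCast q N]
  exact Real.rpow_le_rpow_of_exponent_le hq (by linarith [Nat.cast_nonneg (α := ℝ) N])

lemma sum_range_pow_le (hq : 2 ≤ q) (n : ℕ) : ∑ j ∈ Finset.range (n + 1), q ^ j ≤ 2 * q ^ n := by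
  induction n with
  | zero => simp
  | succ n ih =>
    calc ∑ j ∈ Finset.range (n + 2), q ^ j
        ≤ 2 * q ^ n + q ^ (n + 1) := by
          rw [Finset.sum_range_succ]
          exact add_le_add_left ih _
      _ ≤ q * q ^ n + q ^ (n + 1) := by gcongr
      _ = 2 * q ^ (n + 1) := by ring

lemma sum_range_pow_two_mul_le_rpow (hq : 2 ≤ q) (N : ℕ) :
    ∑ b ∈ Finset.range (N / 2 + 1), q ^ (2 * b) ≤ 2 * q ^ ((8 / 7 : ℝ) * N) := by
  have hq1 : 1 ≤ q := by linarith
  calc ∑ b ∈ Finset.range (N / 2 + 1), q ^ (2 * b)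
      ≤ 2 * q ^ (2 * (N / 2)) := by
        simp only [pow_mul]
        exact sum_range_pow_le (by nlinarith) _
    _ ≤ 2 * q ^ N := by
        gcongr
        omega
    _ ≤ 2 * q ^ ((8 / 7 : ℝ) * N) := by
        gcongr
        exact pow_le_rpow_eight_sevenths_mul hq1 N

lemma sum_rpow_le_mul_cubeRatio_pow (hq : 1 < q) (N : ℕ) {b ρ : ℕ} (hb : b ≤ ρ) :
    ∑ e ∈ Finset.range (b + 1), q ^ 2 * q ^ ((4 * N - 3 * ρ + b - e : ℝ) / 3) ≤
      q ^ 2 * q ^ ((4 * N - ρ : ℝ) / 3) * (1 - cubeRatio q)⁻¹ * cubeRatio q ^ b := by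
  have hq0 : 0 < q := by linarith
  have hr0 := cubeRatio_nonneg hq0.le
  have hb' : (b : ℝ) ≤ ρ := Nat.cast_le.mpr hb
  calc ∑ e ∈ Finset.range (b + 1), q ^ 2 * q ^ ((4 * N - 3 * ρ + b - e : ℝ) / 3)
      ≤ ∑ e ∈ Finset.range (b + 1),
          q ^ 2 * q ^ ((4 * N - ρ : ℝ) / 3) * cubeRatio q ^ b * cubeRatio q ^ e := by
        refine Finset.sum_le_sum fun e _ => ?_
        rw [mul_assoc, mul_assoc, cubeRatio_pow hq0.le, cubeRatio_pow hq0.le,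
          ← Real.rpow_add hq0, ← Real.rpow_add hq0]
        exact mul_le_mul_of_nonneg_left
          (Real.rpow_le_rpow_of_exponent_le hq.le (by linarith)) (by positivity)
    _ ≤ q ^ 2 * q ^ ((4 * N - ρ : ℝ) / 3) * cubeRatio q ^ b * (1 - cubeRatio q)⁻¹ := by
        rw [← Finset.mul_sum]
        exact mul_le_mul_of_nonneg_left
          (sum_pow_le_inv_one_sub hr0 (cubeRatio_lt_one hq) _) (by positivity)
    _ = _ := by ring

lemma sum_latticeBound_le (hq : 2 ≤ q) (N ρ : ℕ) :
    ∑ b ∈ Finset.range (N / 2 + 1) with b < ρ, (q ^ (2 * b) * q + q ^ 2 *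
        q ^ ((4 * N - b - ρ : ℝ) / 3) + ∑ e ∈ Finset.range (b + 1), q ^ 2 *
          q ^ ((4 * N - 3 * ρ + b - e : ℝ) / 3)) ≤ latticeConst q * ballEnvelope q N ρ := by
  have hq0 : 0 < q := by linarith
  have hq1 : 1 < q := by linarith
  set s := {b ∈ Finset.range (N / 2 + 1) | b < ρ}
  set r := cubeRatio q with hr
  set W := q ^ ((8 / 7 : ℝ) * N) with hW
  set Q := q ^ ((4 * N - ρ : ℝ) / 3) with hQ
  have hr0 : 0 ≤ r := cubeRatio_nonneg hq0.le
  have hinv : 0 < (1 - r)⁻¹ := inv_pos.mpr (sub_pos.mpr (cubeRatio_lt_one hq1))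
  have hgeo : ∑ b ∈ s, r ^ b ≤ (1 - r)⁻¹ := sum_pow_le_inv_one_sub hr0 (cubeRatio_lt_one hq1) s
  have hsquares : ∑ b ∈ s, q ^ (2 * b) ≤ 2 * W :=
    (Finset.sum_le_sum_of_subset_of_nonneg (Finset.filter_subset _ _)
      fun _ _ _ => by positivity).trans (sum_range_pow_two_mul_le_rpow hq N)
  calc _ ≤ ∑ b ∈ s, (q ^ (2 * b) * q + q ^ 2 * Q * r ^ b + q ^ 2 * Q * (1 - r)⁻¹ * r ^ b) := by
        refine Finset.sum_le_sum fun b hb => add_le_add (add_le_add_right (le_of_eq ?_) _)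
          (sum_rpow_le_mul_cubeRatio_pow hq1 N (Finset.mem_filter.mp hb).2.le)
        rw [hr, cubeRatio_pow hq0.le, hQ, mul_assoc, ← Real.rpow_add hq0]
        congr 2
        ring
    _ = (∑ b ∈ s, q ^ (2 * b)) * q + q ^ 2 * Q * (∑ b ∈ s, r ^ b) +
          q ^ 2 * Q * (1 - r)⁻¹ * ∑ b ∈ s, r ^ b := by
        rw [Finset.sum_add_distrib, Finset.sum_add_distrib, ← Finset.mul_sum, ← Finset.mul_sum,
          ← Finset.sum_mul]
    _ ≤ 2 * W * q + q ^ 2 * Q * (1 - r)⁻¹ + q ^ 2 * Q * (1 - r)⁻¹ * (1 - r)⁻¹ := by gcongr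
    _ ≤ 2 * W * q + q ^ 2 * Q * (1 - r)⁻¹ + q ^ 2 * Q * (1 - r)⁻¹ * (1 - r)⁻¹ +
          (2 * q * Q + (q ^ 2 * (1 - r)⁻¹ + q ^ 2 * (1 - r)⁻¹ * (1 - r)⁻¹) * W) :=
        le_add_of_nonneg_right (by positivity)
    _ = latticeConst q * ballEnvelope q N ρ := by
        rw [latticeConst, ballEnvelope, ← hr, ← hW, ← hQ]
        ring

lemma rpow_neg_three_sevenths_le (hq : 7 ≤ q) : q ^ (-(3 / 7) : ℝ) ≤ 4 / 9 := by
  have hq0 : 0 < q := by linarith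
  rw [← pow_le_pow_iff_left₀ (Real.rpow_nonneg hq0.le _) (by norm_num) (show 7 ≠ 0 by norm_num),
    ← Real.rpow_natCast, ← Real.rpow_mul hq0.le,
    show (-(3 / 7) : ℝ) * ((7 : ℕ) : ℝ) = -((3 : ℕ) : ℝ) by norm_num, Real.rpow_neg hq0.le,
    Real.rpow_natCast, inv_le_comm₀ (by positivity) (by positivity)]
  calc ((4 / 9 : ℝ) ^ 7)⁻¹ ≤ 7 ^ 3 := by norm_num
    _ ≤ q ^ 3 := pow_le_pow_left₀ (by norm_num) hq 3

lemma pow_mul_ballEnvelope_sub_le (hq : 7 ≤ q) {N d : ℕ} (hd : 3 * d ≤ N) (ρ : ℕ) :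
    q ^ (3 * d) * ballEnvelope q (N - 3 * d) ρ ≤ (4 / 9) ^ d * ballEnvelope q N ρ := by
  have hq0 : 0 < q := by linarith
  have hfirst : q ^ (3 * d) * q ^ ((8 / 7 : ℝ) * (N - 3 * d)) =
      (q ^ (-(3 / 7) : ℝ)) ^ d * q ^ ((8 / 7 : ℝ) * N) := by
    rw [← Real.rpow_natCast, ← Real.rpow_natCast, ← Real.rpow_mul hq0.le, ← Real.rpow_add hq0,
      ← Real.rpow_add hq0]
    congr 1
    push_cast
    ring
  have hsecond : q ^ (3 * d) * q ^ ((4 * (N - 3 * d) - ρ : ℝ) / 3) =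
      q⁻¹ ^ d * q ^ ((4 * N - ρ : ℝ) / 3) := by
    rw [← Real.rpow_neg_one, ← Real.rpow_natCast, ← Real.rpow_natCast, ← Real.rpow_mul hq0.le,
      ← Real.rpow_add hq0, ← Real.rpow_add hq0]
    congr 1
    push_cast
    ring
  have hinv : q⁻¹ ≤ 4 / 9 := by
    rw [inv_le_comm₀ hq0 (by norm_num)]
    linarith
  rw [ballEnvelope, Nat.cast_sub hd, Nat.cast_mul, Nat.cast_ofNat, mul_add, hfirst, hsecond,
    ballEnvelope, mul_add]
  gcongr
  exact rpow_neg_three_sevenths_le hq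

end Envelope

section BallBound

open UniqueFactorizationMonoid

lemma norm_sum_le_card_mul {ι E : Type*} [SeminormedAddCommGroup E] {s : Finset ι} {f : ι → E}
    {c : ℝ} (h : ∀ i ∈ s, ‖f i‖ ≤ c) : ‖∑ i ∈ s, f i‖ ≤ #s * c :=
  (norm_sum_le s f).trans ((Finset.sum_le_card_nsmul s _ c h).trans_eq (nsmul_eq_mul _ _))

variable {K : Type*} [Field K] {br : K[X] → K[X] → ℂ} {ω : K → ℂ}

lemma approxBall_of_mem_degreeLT [Finite K] {m c : K[X]} (hm : m ≠ 0) {M : ℕ}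
    (hc : c ∈ degreeLT K M) : approxBall m c M = approxBall m 0 M :=
  Finset.ext fun f => by
    rw [mem_approxBall hm, mem_approxBall hm, sub_zero, Submodule.sub_mem_iff_left _ hc]

lemma sum_approxBall_zero_C_mul [Finite K] {A : Type*} [AddCommMonoid A] {m : K[X]} (hm : m ≠ 0)
    (M : ℕ) {c : K} (hc : c ≠ 0) (φ : K[X] → A) :
    ∑ f ∈ approxBall m 0 M, φ (C c * f) = ∑ f ∈ approxBall m 0 M, φ f := by
  have hmem : ∀ (b : K) (f : K[X]), f ∈ approxBall m 0 M → C b * f ∈ approxBall m 0 M :=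
    fun b f hf => by
      rw [mem_approxBall hm, sub_zero] at hf ⊢
      rw [mul_left_comm, ← smul_eq_C_mul]
      exact Submodule.smul_mem _ b hf
  refine Finset.sum_bij' (fun f _ => C c * f) (fun f _ => C c⁻¹ * f) (hmem c) (hmem c⁻¹)
    (fun f _ => ?_) (fun f _ => ?_) fun _ _ => rfl
  · rw [← mul_assoc, ← C_mul, inv_mul_cancel₀ hc, C_1, one_mul]
  · rw [← mul_assoc, ← C_mul, mul_inv_cancel₀ hc, C_1, one_mul]

/-- The balls are centred at `0`, hence stable under scaling by constants, which multiplies the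
sum by a nontrivial character value because `N ≡ 1 (mod 3)`. -/
lemma CubicSymbolLaws.ballSum_eq_zero [Finite K] (S : CubicSymbolLaws br ω) {N : ℕ}
    (hN : N % 3 = 1) {a m : K[X]} (hm : m ≠ 0) {ρ : ℕ}
    (h : a = 0 ∨ a.natDegree + N < N + m.natDegree - ρ) : ballSum br N a m ρ = 0 := by
  refine Finset.sum_eq_zero fun A hA => ?_
  rw [mem_sqfreeMonics] at hA
  have hA0 : A ≠ 0 := hA.1.1.ne_zero
  have hcentre : a * A ∈ degreeLT K (N + m.natDegree - ρ) := by
    rw [mem_degreeLT_iff_natDegree_lt, mul_eq_zero]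
    exact h.imp Or.inl fun h => natDegree_mul_le.trans_lt (hA.1.2.symm ▸ h)
  rw [approxBall_of_mem_degreeLT hm hcentre]
  obtain ⟨c, hc, hc1⟩ := S.omega_nontrivial
  have hω : br A (C c) = ω c := by
    rw [S.C_right hA0 hc, hA.1.2, ← Nat.div_add_mod N 3, hN, pow_add, pow_mul,
      S.omega_cube c hc, one_pow, one_mul, pow_one]
  have hscale := sum_approxBall_zero_C_mul hm (N + m.natDegree - ρ) hc (br A)
  simp only [S.mul_right A _ _ hA0, hω, ← Finset.mul_sum] at hscale
  exact (mul_left_eq_self₀.mp hscale).resolve_left hc1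

variable [Fintype K]

lemma card_sqfreeMonics_le (N : ℕ) : (sqfreeMonics K N).card ≤ Fintype.card K ^ N :=
  (Finset.card_filter_le _ _).trans_eq (card_monics N)

lemma CubicSymbolLaws.norm_ballSum_le_of_le (S : CubicSymbolLaws br ω) {N ρ : ℕ} {a m : K[X]}
    (hm : m ≠ 0) (hρ : N ≤ ρ) : ‖ballSum br N a m ρ‖ ≤ (Fintype.card K : ℝ) ^ N := by
  have hpoint : ∀ A, ‖∑ f ∈ approxBall m (a * A) (N + m.natDegree - ρ), br A f‖ ≤ 1 := fun A => by
    rcases (approxBall m (a * A) (N + m.natDegree - ρ)).eq_empty_or_nonempty with he | ⟨z, hz⟩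
    · rw [he, Finset.sum_empty, norm_zero]
      exact zero_le_one
    · rw [sum_approxBall_eq_sum_lowDegree hm hz,
        show N + m.natDegree - ρ - m.natDegree = 0 by omega, lowDegree_zero, Finset.sum_singleton]
      exact S.norm_le_one _ _
  refine (norm_sum_le_card_mul fun A _ => hpoint A).trans ?_
  rw [mul_one]
  exact_mod_cast card_sqfreeMonics_le N

lemma CubicSymbolLaws.ballSum_eq_sub (S : CubicSymbolLaws br ω) {N : ℕ} (hN : N % 3 = 1)
    {a m : K[X]} (ha : a ≠ 0) (hm : m ≠ 0) {ρ : ℕ} (hM : N + m.natDegree - ρ ≤ a.natDegree + N) :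
    ballSum br N a m ρ =
      ∑ b ∈ Finset.range (N / 2 + 1) with b < ρ, ∑ B ∈ monics K b,
        moebius B * latticeSum br ω N a m (N + m.natDegree - ρ) B -
      ∑ d ∈ Finset.range (N / 3), ∑ D ∈ monics K (d + 1),
        moebius D * (Fintype.card K : ℂ) ^ (d + 1) *
          ∑ t ∈ lowDegree K (d + 1), ballSum br (N - 3 * (d + 1)) (a * D - m * t) (m * D) ρ := by
  rw [S.sum_latticeSum_eq_sum_ballSum hN ha hm hM, Finset.sum_range_succ']
  simp only [monics_zero, lowDegree_zero, Finset.sum_singleton, moebius_one, Int.cast_one, pow_zero,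
    mul_one, mul_zero, sub_zero, one_mul, Nat.sub_zero, add_sub_cancel_left]

lemma CubicSymbolLaws.norm_sum_moebius_mul_latticeSum_le (S : CubicSymbolLaws br ω)
    {N : ℕ} {a m : K[X]} (ha : a ≠ 0) (hm : m ≠ 0) {ρ : ℕ} (hρ : ρ ≤ N)
    (hM : N + m.natDegree - ρ ≤ a.natDegree + N) :
    ‖∑ b ∈ Finset.range (N / 2 + 1) with b < ρ, ∑ B ∈ monics K b,
        moebius B * latticeSum br ω N a m (N + m.natDegree - ρ) B‖ ≤
      latticeConst (Fintype.card K) * ballEnvelope (Fintype.card K) N ρ := by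
  refine le_trans ?_ (sum_latticeBound_le (by exact_mod_cast Fintype.one_lt_card (α := K)) N ρ)
  refine (norm_sum_le _ _).trans (Finset.sum_le_sum fun b hb => ?_)
  have hb' := Finset.mem_range.mp (Finset.mem_filter.mp hb).1
  refine le_trans ?_ (S.sum_norm_latticeSum_le ha hm hρ hM (by omega))
  refine (norm_sum_le _ _).trans (Finset.sum_le_sum fun B _ => ?_)
  rw [norm_mul]
  exact mul_le_of_le_one_left (norm_nonneg _) (norm_moebius_le_one B)

lemma norm_sum_moebius_mul_sum_lowDegree_le (d : ℕ) {φ : K[X] → K[X] → ℂ} {c : ℝ}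
    (hφ : ∀ D ∈ monics K d, ∀ t, ‖φ D t‖ ≤ c) :
    ‖∑ D ∈ monics K d, moebius D * (Fintype.card K : ℂ) ^ d * ∑ t ∈ lowDegree K d, φ D t‖ ≤
      (Fintype.card K : ℝ) ^ (3 * d) * c := by
  have hinner : ∀ D ∈ monics K d,
      ‖moebius D * (Fintype.card K : ℂ) ^ d * ∑ t ∈ lowDegree K d, φ D t‖ ≤
        (Fintype.card K : ℝ) ^ d * ((Fintype.card K : ℝ) ^ d * c) := fun D hD => by
    rw [norm_mul, norm_mul, norm_pow, Complex.norm_natCast]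
    refine mul_le_mul (mul_le_of_le_one_left (by positivity) (norm_moebius_le_one D)) ?_
      (norm_nonneg _) (by positivity)
    refine (norm_sum_le_card_mul fun t _ => hφ D hD t).trans_eq ?_
    rw [card_lowDegree, Nat.cast_pow]
  refine (norm_sum_le_card_mul hinner).trans_eq ?_
  rw [card_monics, Nat.cast_pow]
  ring

theorem CubicSymbolLaws.norm_ballSum_le (S : CubicSymbolLaws br ω) (hq : 7 ≤ Fintype.card K)
    {N : ℕ} (hN : N % 3 = 1) {a m : K[X]} (hm : m ≠ 0) (ρ : ℕ) :
    ‖ballSum br N a m ρ‖ ≤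
      5 * latticeConst (Fintype.card K) * ballEnvelope (Fintype.card K) N ρ := by
  have hq7 : 7 ≤ (Fintype.card K : ℝ) := by exact_mod_cast hq
  set q : ℝ := (Fintype.card K : ℝ)
  have hC : 1 ≤ latticeConst q := one_le_latticeConst (by linarith)
  induction N using Nat.strong_induction_on generalizing a m with
  | _ N ih =>
  have hE : 0 < ballEnvelope q N ρ := ballEnvelope_pos (by linarith) N ρ
  rcases le_or_gt N ρ with hρ | hρ
  · calc ‖ballSum br N a m ρ‖ ≤ q ^ N := S.norm_ballSum_le_of_le hm hρ
      _ ≤ ballEnvelope q N ρ := (pow_le_rpow_eight_sevenths_mul (by linarith) N).trans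
          (le_add_of_nonneg_right (by positivity))
      _ ≤ 5 * latticeConst q * ballEnvelope q N ρ := by nlinarith
  by_cases hz : a = 0 ∨ a.natDegree + N < N + m.natDegree - ρ
  · rw [S.ballSum_eq_zero hN hm hz, norm_zero]
    positivity
  push Not at hz
  have hdescent : ∀ d ∈ Finset.range (N / 3), ‖∑ D ∈ monics K (d + 1),
      moebius D * (Fintype.card K : ℂ) ^ (d + 1) * ∑ t ∈ lowDegree K (d + 1),
        ballSum br (N - 3 * (d + 1)) (a * D - m * t) (m * D) ρ‖ ≤
      5 * latticeConst q * ballEnvelope q N ρ * (4 / 9) * (4 / 9) ^ d := fun d hd => by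
    rw [Finset.mem_range] at hd
    have hdN : 3 * (d + 1) ≤ N := by omega
    refine (norm_sum_moebius_mul_sum_lowDegree_le (d + 1) fun D hD t =>
      ih (N - 3 * (d + 1)) (by omega) (by omega)
        (mul_ne_zero hm (mem_monics.mp hD).1.ne_zero)).trans ?_
    have hstep := mul_le_mul_of_nonneg_left (pow_mul_ballEnvelope_sub_le hq7 hdN ρ)
      (show 0 ≤ 5 * latticeConst q by positivity)
    linear_combination hstep
  rw [S.ballSum_eq_sub hN hz.1 hm hz.2]
  refine (norm_sub_le _ _).trans ?_
  have hlattice := S.norm_sum_moebius_mul_latticeSum_le hz.1 hm hρ.le hz.2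
  have hsum := (norm_sum_le _ _).trans (Finset.sum_le_sum hdescent)
  rw [← Finset.mul_sum] at hsum
  have hgeo := mul_le_mul_of_nonneg_left
    (sum_pow_le_inv_one_sub (r := 4 / 9) (by norm_num) (by norm_num) (Finset.range (N / 3)))
    (show 0 ≤ 5 * latticeConst q * ballEnvelope q N ρ * (4 / 9) by positivity)
  norm_num at hgeo
  linarith

end BallBound

/-! ### Character sums over squarefree conductors -/

section CharSum

open UniqueFactorizationMonoid

variable {K : Type*} [Field K] {br : K[X] → K[X] → ℂ} {ω : K → ℂ}

/-- The character sum `∑ F, ∑ f, br F f` over squarefree monic conductors `F` of degree `N` and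
monic arguments `f` of degree `n`: the coefficient of `u ^ n` in the sum of `L(u, χ_F)` over `F`. -/
def charSum (br : K[X] → K[X] → ℂ) (N n : ℕ) : ℂ :=
  ∑ F ∈ sqfreeMonics K N, ∑ f ∈ monics K n, br F f

/-- The number of squarefree monic polynomials of degree `N` coprime to `h`. -/
def coprimeCount (h : K[X]) (N : ℕ) : ℕ := #{F ∈ sqfreeMonics K N | IsCoprime F h}

lemma CubicSymbolLaws.eq_swap_of_monic (S : CubicSymbolLaws br ω) {f g : K[X]} (hf : f.Monic)
    (hg : g.Monic) : br f g = br g f := by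
  have h := S.omega_pow_mul_eq_of_monic hf.ne_zero hg rfl
  rwa [hf.leadingCoeff, S.omega_one, one_pow, one_mul] at h

lemma CubicSymbolLaws.pow_three_right (S : CubicSymbolLaws br ω) {F : K[X]} (hF : F ≠ 0)
    (h : K[X]) : br F (h ^ 3) = if IsCoprime F h then 1 else 0 := by
  rw [show h ^ 3 = h * (h * h) by ring, S.mul_right _ _ _ hF, S.mul_right _ _ _ hF]
  split_ifs with hc
  · rw [← S.cube F h hF hc]
    ring
  · rw [(S.eq_zero_iff F h hF).mpr hc, zero_mul]

lemma IsConstMulCube.exists_monic_eq_pow_three {f : K[X]} (hf : IsConstMulCube f) (hm : f.Monic) :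
    ∃ h : K[X], h.Monic ∧ f = h ^ 3 := by
  obtain ⟨c, e, -, rfl⟩ := hf
  have he : e ≠ 0 := by
    rintro rfl
    simp at hm
  have hce : c * e.leadingCoeff ^ 3 = 1 := by
    simpa only [Monic, leadingCoeff_mul, leadingCoeff_C, leadingCoeff_pow] using hm
  refine ⟨e * C e.leadingCoeff⁻¹, monic_mul_leadingCoeff_inv he, ?_⟩
  rw [mul_pow, ← C_pow, inv_pow, ← eq_inv_of_mul_eq_one_left hce, mul_comm]

lemma sum_range_filter_pow_le {q : ℝ} (hq : 2 ≤ q) (N n : ℕ) :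
    ∑ b ∈ Finset.range (N / 2 + 1) with N - 2 * b < n, q ^ (N - b) ≤ 2 * q ^ ((N + n) / 2) := by
  calc ∑ b ∈ Finset.range (N / 2 + 1) with N - 2 * b < n, q ^ (N - b)
      = ∑ j ∈ {b ∈ Finset.range (N / 2 + 1) | N - 2 * b < n}.image (N - ·), q ^ j := by
        refine (Finset.sum_image fun x hx y hy hxy => ?_).symm
        simp only [Finset.coe_filter, Finset.mem_range, Set.mem_ofPred_eq] at hx hy hxy
        omega
    _ ≤ ∑ j ∈ Finset.range ((N + n) / 2 + 1), q ^ j := by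
        refine Finset.sum_le_sum_of_subset_of_nonneg (fun j hj => ?_) fun _ _ _ => by positivity
        simp only [Finset.mem_image, Finset.mem_filter, Finset.mem_range] at hj ⊢
        obtain ⟨b, hb, rfl⟩ := hj
        omega
    _ ≤ 2 * q ^ ((N + n) / 2) := sum_range_pow_le hq _

section Finite

variable [Finite K]

lemma CubicSymbolLaws.sum_monics_eq_zero_of_mem_sqfreeMonics (S : CubicSymbolLaws br ω)
    {N n : ℕ} (hN : 0 < N) (hn : N ≤ n) {F : K[X]} (hF : F ∈ sqfreeMonics K N) :
    ∑ f ∈ monics K n, br F f = 0 := by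
  rw [mem_sqfreeMonics] at hF
  refine S.sum_monics_eq_zero hF.1.1.ne_zero (fun hc => ?_) (by omega)
  have := natDegree_eq_zero_of_isUnit (hc.isUnit_of_squarefree hF.2)
  omega

lemma CubicSymbolLaws.charSum_eq_zero (S : CubicSymbolLaws br ω) {N n : ℕ} (hN : 0 < N)
    (hn : N ≤ n) : charSum br N n = 0 :=
  Finset.sum_eq_zero fun _ => S.sum_monics_eq_zero_of_mem_sqfreeMonics hN hn

lemma approxBall_X_pow {N n : ℕ} (hn : n ≤ N) {A : K[X]} (hA : A ∈ monics K N) :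
    approxBall (X ^ (N - n)) A N = monics K n := by
  ext f
  rw [mem_approxBall (pow_ne_zero _ X_ne_zero), ← add_mem_monics_iff hA, add_sub_cancel,
    mem_monics, mem_monics]
  have hX : (X ^ (N - n) : K[X]).Monic := monic_X_pow _
  refine ⟨fun h => ?_, fun h => ⟨hX.mul h.1, ?_⟩⟩
  · have hf : f.Monic := hX.of_mul_monic_left h.1
    refine ⟨hf, ?_⟩
    have hdeg := h.2
    rw [hX.natDegree_mul hf, natDegree_X_pow] at hdeg
    omega
  · rw [hX.natDegree_mul h.1, natDegree_X_pow, h.2]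
    omega

lemma ballSum_one_X_pow {N n : ℕ} (hn : n ≤ N) :
    ballSum br N 1 (X ^ (N - n)) (N - n) = charSum br N n :=
  Finset.sum_congr rfl fun A hA => by
    rw [one_mul, natDegree_X_pow, Nat.add_sub_cancel,
      approxBall_X_pow hn (mem_monics.mpr (mem_sqfreeMonics.mp hA).1)]

lemma CubicSymbolLaws.sum_monics_mul_sq_eq_zero (S : CubicSymbolLaws br ω) {f B : K[X]}
    (hf : f.Monic) (hc : ¬ IsConstMulCube f) (hB : B.Monic) {k : ℕ} (hk : f.natDegree ≤ k) :
    ∑ A ∈ monics K k, br (A * B ^ 2) f = 0 := by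
  have hswap : ∀ A ∈ monics K k, br (A * B ^ 2) f = br f A * br f (B ^ 2) := fun A hA => by
    rw [S.eq_swap_of_monic ((mem_monics.mp hA).1.mul (hB.pow 2)) hf, S.mul_right _ _ _ hf.ne_zero]
  rw [Finset.sum_congr rfl hswap, ← Finset.sum_mul, S.sum_monics_eq_zero hf.ne_zero hc hk, zero_mul]

lemma sum_monics_isConstMulCube {A : Type*} [AddCommMonoid A] (n : ℕ) (φ : K[X] → A) :
    ∑ f ∈ monics K n with IsConstMulCube f, φ f =
      if 3 ∣ n then ∑ h ∈ monics K (n / 3), φ (h ^ 3) else 0 := by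
  split_ifs with hn
  · refine (Finset.sum_bij (fun h _ => h ^ 3) (fun h hh => ?_) (fun h hh k hk e => ?_)
      (fun f hf => ?_) fun _ _ => rfl).symm
    · rw [mem_monics] at hh
      rw [Finset.mem_filter, mem_monics, natDegree_pow, hh.2]
      exact ⟨⟨hh.1.pow 3, Nat.mul_div_cancel' hn⟩, 1, h, one_ne_zero, by simp⟩
    · exact eq_of_monic_of_associated (mem_monics.mp hh).1 (mem_monics.mp hk).1
        (associated_of_dvd_dvd ((IsIntegrallyClosed.pow_dvd_pow_iff three_ne_zero).mp e.dvd)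
          ((IsIntegrallyClosed.pow_dvd_pow_iff three_ne_zero).mp e.symm.dvd))
    · rw [Finset.mem_filter, mem_monics] at hf
      obtain ⟨h, hh, rfl⟩ := hf.2.exists_monic_eq_pow_three hf.1.1
      refine ⟨h, mem_monics.mpr ⟨hh, ?_⟩, rfl⟩
      rw [← hf.1.2, natDegree_pow, Nat.mul_div_cancel_left _ three_pos]
  · refine Finset.sum_eq_zero fun f hf => absurd ?_ hn
    rw [Finset.mem_filter, mem_monics] at hf
    exact hf.1.2 ▸ hf.2.three_dvd_natDegree

lemma CubicSymbolLaws.charSum_eq (S : CubicSymbolLaws br ω) (N n : ℕ) :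
    charSum br N n = (if 3 ∣ n then ∑ h ∈ monics K (n / 3), (coprimeCount h N : ℂ) else 0) +
      ∑ f ∈ monics K n with ¬ IsConstMulCube f, ∑ F ∈ sqfreeMonics K N, br F f := by
  rw [charSum, Finset.sum_comm, ← Finset.sum_filter_add_sum_filter_not _ IsConstMulCube,
    sum_monics_isConstMulCube]
  congr 1
  refine if_congr Iff.rfl (Finset.sum_congr rfl fun h _ => ?_) rfl
  rw [coprimeCount, Finset.card_filter, Nat.cast_sum]
  refine Finset.sum_congr rfl fun F hF => ?_
  rw [S.pow_three_right (mem_sqfreeMonics.mp hF).1.1.ne_zero, Nat.cast_ite, Nat.cast_one,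
    Nat.cast_zero]

end Finite

variable [Fintype K]

lemma norm_sum_moebius_mul_sum_monics_le (b k : ℕ) {φ : K[X] → K[X] → ℂ}
    (hφ : ∀ A B, ‖φ A B‖ ≤ 1) :
    ‖∑ B ∈ monics K b, (moebius B : ℂ) * ∑ A ∈ monics K k, φ A B‖ ≤
      (Fintype.card K : ℝ) ^ (b + k) := by
  have hinner : ∀ B ∈ monics K b, ‖(moebius B : ℂ) * ∑ A ∈ monics K k, φ A B‖ ≤
      (Fintype.card K : ℝ) ^ k := fun B _ => by
    rw [norm_mul]
    refine (mul_le_of_le_one_left (norm_nonneg _) (norm_moebius_le_one B)).trans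
      ((norm_sum_le_card_mul fun A _ => hφ A B).trans_eq ?_)
    rw [card_monics, mul_one, Nat.cast_pow]
  refine (norm_sum_le_card_mul hinner).trans_eq ?_
  rw [card_monics, Nat.cast_pow, ← pow_add]

lemma CubicSymbolLaws.norm_sum_sqfreeMonics_le (S : CubicSymbolLaws br ω) {f : K[X]} (hf : f.Monic)
    (hc : ¬ IsConstMulCube f) (N : ℕ) :
    ‖∑ F ∈ sqfreeMonics K N, br F f‖ ≤
      2 * (Fintype.card K : ℝ) ^ ((N + f.natDegree : ℝ) / 2) := by
  have hq : 2 ≤ (Fintype.card K : ℝ) := by exact_mod_cast Fintype.one_lt_card (α := K)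
  set q : ℝ := (Fintype.card K : ℝ)
  have hterm : ∀ b ∈ Finset.range (N / 2 + 1), ‖∑ B ∈ monics K b, (moebius B : ℂ) *
      ∑ A ∈ monics K (N - 2 * b), br (A * B ^ 2) f‖ ≤
        if N - 2 * b < f.natDegree then q ^ (N - b) else 0 := fun b hb => by
    rw [Finset.mem_range] at hb
    split_ifs with h
    · rw [show N - b = b + (N - 2 * b) by omega]
      exact norm_sum_moebius_mul_sum_monics_le b _ fun A B => S.norm_le_one _ _
    · refine (norm_eq_zero.mpr (Finset.sum_eq_zero fun B hB => ?_)).le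
      rw [S.sum_monics_mul_sq_eq_zero hf hc (mem_monics.mp hB).1 (not_lt.mp h), mul_zero]
  calc ‖∑ F ∈ sqfreeMonics K N, br F f‖
      ≤ ∑ b ∈ Finset.range (N / 2 + 1), if N - 2 * b < f.natDegree then q ^ (N - b) else 0 := by
        rw [sum_sqfreeMonics]
        exact (norm_sum_le _ _).trans (Finset.sum_le_sum hterm)
    _ ≤ 2 * q ^ ((N + f.natDegree) / 2) := by
        rw [← Finset.sum_filter]
        exact sum_range_filter_pow_le hq N _
    _ ≤ 2 * q ^ ((N + f.natDegree : ℝ) / 2) := by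
        rw [← Real.rpow_natCast]
        gcongr
        · linarith
        · exact_mod_cast Nat.cast_div_le (α := ℝ) (m := N + f.natDegree) (n := 2)

lemma CubicSymbolLaws.norm_sum_not_isConstMulCube_le (S : CubicSymbolLaws br ω) (N n : ℕ) :
    ‖∑ f ∈ monics K n with ¬ IsConstMulCube f, ∑ F ∈ sqfreeMonics K N, br F f‖ ≤
      2 * (Fintype.card K : ℝ) ^ ((N + 3 * n : ℝ) / 2) := by
  have hq0 : 0 < (Fintype.card K : ℝ) := by exact_mod_cast Fintype.card_pos (α := K)
  set q : ℝ := (Fintype.card K : ℝ) with hqdef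
  have hcard : (#{f ∈ monics K n | ¬ IsConstMulCube f} : ℝ) ≤ q ^ n := by
    rw [hqdef]
    exact_mod_cast (Finset.card_filter_le _ _).trans_eq (card_monics n)
  calc _ ≤ #{f ∈ monics K n | ¬ IsConstMulCube f} * (2 * q ^ ((N + n : ℝ) / 2)) := by
        refine norm_sum_le_card_mul fun f hf => ?_
        rw [Finset.mem_filter, mem_monics] at hf
        have := S.norm_sum_sqfreeMonics_le hf.1.1 hf.2 N
        rwa [hf.1.2] at this
    _ ≤ q ^ n * (2 * q ^ ((N + n : ℝ) / 2)) := by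
        gcongr
    _ = 2 * q ^ ((N + 3 * n : ℝ) / 2) := by
        rw [mul_left_comm, ← Real.rpow_natCast, ← Real.rpow_add hq0]
        congr 2
        ring

lemma norm_sum_coprimeCount_le (N n : ℕ) :
    ‖if 3 ∣ n then ∑ h ∈ monics K (n / 3), (coprimeCount h N : ℂ) else 0‖ ≤
      (Fintype.card K : ℝ) ^ (N + (n : ℝ) / 3) := by
  have hq0 : 0 < (Fintype.card K : ℝ) := by exact_mod_cast Fintype.card_pos (α := K)
  set q : ℝ := (Fintype.card K : ℝ) with hqdef
  split_ifs with h3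
  · have hcount : ∀ h ∈ monics K (n / 3), ‖(coprimeCount h N : ℂ)‖ ≤ q ^ N := fun h _ => by
      rw [Complex.norm_natCast, hqdef]
      exact_mod_cast (Finset.card_filter_le _ _).trans (card_sqfreeMonics_le N)
    refine (norm_sum_le_card_mul hcount).trans_eq ?_
    rw [card_monics, Nat.cast_pow, Real.rpow_add hq0, Real.rpow_natCast, mul_comm,
      ← Real.rpow_natCast q (n / 3), Nat.cast_div h3 (by norm_num), Nat.cast_ofNat]
  · rw [norm_zero]
    positivity

theorem CubicSymbolLaws.norm_charSum_le (S : CubicSymbolLaws br ω) (hq : 7 ≤ Fintype.card K)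
    {N : ℕ} (hN : N % 3 = 1) (n : ℕ) :
    ‖charSum br N n‖ ≤ 10 * latticeConst (Fintype.card K) *
      (Fintype.card K : ℝ) ^ (N + (n : ℝ) / 3) := by
  have hq1 : 1 < (Fintype.card K : ℝ) := by exact_mod_cast Fintype.one_lt_card (α := K)
  set q : ℝ := (Fintype.card K : ℝ)
  have hC := one_le_latticeConst hq1
  have hQ0 : 0 < q ^ (N + (n : ℝ) / 3) := by positivity
  rcases le_or_gt N n with hn | hn
  · rw [S.charSum_eq_zero (by omega) hn, norm_zero]
    positivity
  rcases le_or_gt (7 * n) (3 * N) with h | h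
  · have hcubes := norm_sum_coprimeCount_le (K := K) N n
    have hrest := S.norm_sum_not_isConstMulCube_le N n
    have hexp : q ^ ((N + 3 * n : ℝ) / 2) ≤ q ^ (N + (n : ℝ) / 3) := by
      refine Real.rpow_le_rpow_of_exponent_le hq1.le ?_
      have : (7 * n : ℝ) ≤ 3 * N := by exact_mod_cast h
      linarith
    rw [S.charSum_eq]
    refine (norm_add_le _ _).trans ?_
    nlinarith
  · have hball := S.norm_ballSum_le hq hN (a := 1) (pow_ne_zero (N - n) X_ne_zero) (N - n)
    rw [ballSum_one_X_pow hn.le] at hball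
    have hexp : q ^ ((8 / 7 : ℝ) * N) ≤ q ^ (N + (n : ℝ) / 3) := by
      refine Real.rpow_le_rpow_of_exponent_le hq1.le ?_
      have : (3 * N : ℝ) ≤ 7 * n := by exact_mod_cast h.le
      linarith
    have henvelope : ballEnvelope q N (N - n) ≤ 2 * q ^ (N + (n : ℝ) / 3) := by
      rw [ballEnvelope, Nat.cast_sub hn.le, show (4 * N - (N - n) : ℝ) / 3 = N + n / 3 by ring]
      linarith
    nlinarith

end CharSum

/-! ### Densities of sieved squarefree polynomials -/

section ShiftedRecursion

open scoped ENNReal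

lemma tendsto_zero_of_le_add_mul_shift {u e : ℕ → ℝ≥0∞} {r B : ℝ≥0∞} {p : ℕ} (hr : r < 1)
    (hB : B ≠ ∞) (hu : ∀ n, u n ≤ B) (hrec : ∀ n, p ≤ n → u n ≤ e n + r * u (n - p))
    (he : Tendsto e atTop (nhds 0)) : Tendsto u atTop (nhds 0) := by
  have hle : limsup u atTop ≤ r * limsup u atTop := by
    have hshift : limsup (fun n => r * u (n - p)) atTop = r * limsup u atTop := by
      rw [ENNReal.limsup_const_mul_of_ne_top hr.ne_top]
      congr 1
      exact (limsup_comp u (· - p) atTop).trans (by rw [map_sub_atTop_eq_nat])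
    refine le_of_forall_pos_le_add fun η hη => ?_
    calc limsup u atTop ≤ limsup (fun n => η + r * u (n - p)) atTop := by
          refine limsup_le_limsup ?_
          filter_upwards [eventually_ge_atTop p, he.eventually_le_const hη] with n hn hen
          exact (hrec n hn).trans (add_le_add_left hen _)
      _ = r * limsup u atTop + η := by
          rw [limsup_const_add _ _ _ (by isBoundedDefault) (by isBoundedDefault),
            hshift, add_comm]
  have hfin : limsup u atTop ≠ ∞ :=
    ne_top_of_le_ne_top hB (limsup_le_of_le (h := Eventually.of_forall hu))
  have hzero : limsup u atTop = 0 := by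
    by_contra h
    exact (ENNReal.mul_lt_of_lt_div (by rwa [ENNReal.div_self h hfin])).not_ge hle
  exact tendsto_of_le_liminf_of_limsup_le zero_le hzero.le

lemma tendsto_of_tendsto_add_shift {𝕜 : Type*} [NormedField 𝕜] {x c : ℕ → 𝕜} {r l : 𝕜} {B : ℝ}
    {p : ℕ} (hr : ‖r‖ < 1) (hB : ∀ n, ‖x n‖ ≤ B) (hx : ∀ n, p ≤ n → x n + r * x (n - p) = c n)
    (hc : Tendsto c atTop (nhds l)) : Tendsto x atTop (nhds (l / (1 + r))) := by
  have hr1 : 1 + r ≠ 0 := fun h => by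
    rw [eq_neg_of_add_eq_zero_right h, norm_neg, norm_one] at hr
    exact hr.false
  set y := l / (1 + r) with hy
  have hyl : y + r * y = l := by
    rw [hy]
    field_simp
  rw [tendsto_iff_edist_tendsto_0] at hc ⊢
  simp only [edist_eq_enorm_sub] at hc ⊢
  refine tendsto_zero_of_le_add_mul_shift (r := ‖r‖ₑ) (B := ENNReal.ofReal (B + ‖y‖)) (p := p)
    (by rwa [← ofReal_norm, ENNReal.ofReal_lt_one]) ENNReal.ofReal_ne_top (fun n => ?_)
    (fun n hn => ?_) hc
  · rw [← ofReal_norm]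
    exact ENNReal.ofReal_le_ofReal ((norm_sub_le _ _).trans (by linarith [hB n]))
  · rw [show x n - y = (c n - l) - r * (x (n - p) - y) by rw [← hx n hn, ← hyl]; ring, ← enorm_mul]
    exact enorm_sub_le

end ShiftedRecursion

section Density

variable {K : Type} [Field K]

lemma MonicIrred.dvd_iff_eq {P Q : MonicIrred K} : P.1 ∣ Q.1 ↔ P = Q :=
  ⟨fun h => Subtype.ext (eq_of_monic_of_associated P.2.1 Q.2.1 (P.2.2.associated_of_dvd Q.2.2 h)),
    fun h => h ▸ dvd_rfl⟩

lemma exists_monicIrred_dvd {h : K[X]} (hh : ¬ IsUnit h) (h0 : h ≠ 0) :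
    ∃ P : MonicIrred K, P.1 ∣ h := by
  obtain ⟨P, hP, hd⟩ := WfDvdMonoid.exists_irreducible_factor hh h0
  exact ⟨⟨normalize P, monic_normalize hP.ne_zero, (normalize_associated P).symm.irreducible hP⟩,
    (normalize_associated P).dvd.trans hd⟩

/-- The squarefree monic polynomials of degree `N` divisible by no element of `J`. -/
def sieve (J : Finset (MonicIrred K)) (N : ℕ) : Finset K[X] :=
  {F ∈ sqfreeMonics K N | ∀ P ∈ J, ¬ P.1 ∣ F}

lemma sieve_insert (P : MonicIrred K) (J : Finset (MonicIrred K)) (N : ℕ) :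
    sieve (insert P J) N = {F ∈ sieve J N | ¬ P.1 ∣ F} := by
  simp only [sieve, Finset.filter_filter, Finset.forall_mem_insert, and_comm]

/-- The monic irreducible divisors of `h`, for `h ≠ 0` over a finite field. -/
def primeDivs (h : K[X]) : Finset (MonicIrred K) := finsetOf {P : MonicIrred K | P.1 ∣ h}

section Finite

variable [Finite K]

lemma mul_mem_sieve_iff {J : Finset (MonicIrred K)} {P : MonicIrred K} (hP : P ∉ J) {N : ℕ}
    (hN : P.1.natDegree ≤ N) {G : K[X]} :
    P.1 * G ∈ sieve J N ↔ G ∈ sieve (insert P J) (N - P.1.natDegree) := by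
  have hmonic : (P.1 * G).Monic ↔ G.Monic := ⟨P.2.1.of_mul_monic_left, P.2.1.mul⟩
  have hdvd : (∀ Q ∈ J, ¬ Q.1 ∣ P.1 * G) ↔ ∀ Q ∈ J, ¬ Q.1 ∣ G := by
    refine forall₂_congr fun Q hQ => not_congr ?_
    rw [Q.2.2.prime.dvd_mul, MonicIrred.dvd_iff_eq, or_iff_right (ne_of_mem_of_not_mem hQ hP)]
  rw [sieve_insert, Finset.mem_filter, sieve, sieve, Finset.mem_filter, Finset.mem_filter,
    mem_sqfreeMonics, mem_sqfreeMonics, squarefree_mul_iff, P.2.2.isRelPrime_iff_not_dvd, hdvd,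
    hmonic]
  by_cases hG : G.Monic
  · have hdeg : (P.1 * G).natDegree = N ↔ G.natDegree = N - P.1.natDegree := by
      rw [P.2.1.natDegree_mul hG]
      omega
    rw [hdeg]
    simp only [hG, P.2.2.squarefree, true_and]
    tauto
  · simp only [hG, false_and]

lemma card_sieve_insert {J : Finset (MonicIrred K)} {P : MonicIrred K} (hP : P ∉ J) {N : ℕ}
    (hN : P.1.natDegree ≤ N) :
    #(sieve (insert P J) N) + #(sieve (insert P J) (N - P.1.natDegree)) = #(sieve J N) := by
  have hmultiples :
      {F ∈ sieve J N | P.1 ∣ F} = (sieve (insert P J) (N - P.1.natDegree)).image (P.1 * ·) := by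
    ext F
    simp only [Finset.mem_filter, Finset.mem_image]
    constructor
    · rintro ⟨hF, G, rfl⟩
      exact ⟨G, (mul_mem_sieve_iff hP hN).mp hF, rfl⟩
    · rintro ⟨G, hG, rfl⟩
      exact ⟨(mul_mem_sieve_iff hP hN).mpr hG, dvd_mul_right _ _⟩
  have hcard : #(sieve (insert P J) (N - P.1.natDegree)) = #{F ∈ sieve J N | P.1 ∣ F} := by
    rw [hmultiples, Finset.card_image_of_injective _ (mul_right_injective₀ P.2.1.ne_zero)]
  rw [hcard, sieve_insert, add_comm, Finset.card_filter_add_card_filter_not]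

lemma mem_primeDivs {h : K[X]} (hh : h ≠ 0) {P : MonicIrred K} : P ∈ primeDivs h ↔ P.1 ∣ h := by
  refine mem_finsetOf (Set.Finite.of_finite_image (f := Subtype.val) ?_
    Subtype.val_injective.injOn)
  refine (finite_degreeLT (K := K) (h.natDegree + 1)).subset ?_
  rintro _ ⟨P, hP, rfl⟩
  rw [Set.mem_ofPred_eq, mem_degreeLT_iff_natDegree_lt]
  exact Or.inr (Nat.lt_succ_of_le (natDegree_le_of_dvd hP hh))

lemma coprimeCount_eq_card_sieve {h : K[X]} (hh : h ≠ 0) (N : ℕ) :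
    coprimeCount h N = #(sieve (primeDivs h) N) := by
  rw [coprimeCount, sieve]
  congr 1
  refine Finset.filter_congr fun F _ => ⟨fun hc P hP hd => ?_, fun hall => ?_⟩
  · exact P.2.2.not_isUnit (hc.isUnit_of_dvd' hd ((mem_primeDivs hh).mp hP))
  · rw [← EuclideanDomain.gcd_isUnit_iff]
    by_contra hu
    obtain ⟨P, hP⟩ := exists_monicIrred_dvd hu
      fun h0 => hh (EuclideanDomain.gcd_eq_zero_iff.mp h0).2
    exact hall P ((mem_primeDivs hh).mpr (hP.trans (EuclideanDomain.gcd_dvd_right _ _)))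
      (hP.trans (EuclideanDomain.gcd_dvd_left _ _))

end Finite

variable [Fintype K]

lemma one_lt_normP (P : MonicIrred K) : 1 < normP (Fintype.card K) P :=
  one_lt_pow₀ (by exact_mod_cast Fintype.one_lt_card) P.2.2.natDegree_pos.ne'

lemma tendsto_card_sqfreeMonics_div :
    Tendsto (fun N => (#(sqfreeMonics K N) : ℝ) / (Fintype.card K : ℝ) ^ N) atTop
      (nhds (1 - (Fintype.card K : ℝ)⁻¹)) := by
  have hq0 : (Fintype.card K : ℝ) ≠ 0 := by exact_mod_cast Fintype.card_ne_zero
  refine tendsto_const_nhds.congr' ?_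
  filter_upwards [eventually_ge_atTop 2] with N hN
  have hcard : (#(sqfreeMonics K N) : ℝ) =
      (Fintype.card K : ℝ) ^ N - (Fintype.card K : ℝ) ^ (N - 1) := by
    exact_mod_cast card_sqfreeMonics (K := K) hN
  obtain ⟨n, rfl⟩ : ∃ n, N = n + 1 := ⟨N - 1, by omega⟩
  rw [hcard, Nat.add_sub_cancel, pow_succ]
  field_simp

lemma tendsto_card_sieve_div (J : Finset (MonicIrred K)) :
    Tendsto (fun N => (#(sieve J N) : ℝ) / (Fintype.card K : ℝ) ^ N) atTop
      (nhds ((1 - (Fintype.card K : ℝ)⁻¹) * ∏ P ∈ J, (1 - (normP (Fintype.card K) P + 1)⁻¹))) := by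
  induction J using Finset.induction_on with
  | empty => simpa [sieve] using tendsto_card_sqfreeMonics_div (K := K)
  | insert P J hP ih =>
    have hP1 := one_lt_normP P
    have hlimit := tendsto_of_tendsto_add_shift
      (x := fun N => (#(sieve (insert P J) N) : ℝ) / (Fintype.card K : ℝ) ^ N)
      (r := (normP (Fintype.card K) P)⁻¹) (B := 1) (p := P.1.natDegree) ?_ (fun N => ?_)
      (fun N hN => ?_) ih
    · rw [Finset.prod_insert hP]
      convert hlimit using 2
      field_simp
      ring
    · rw [norm_inv, Real.norm_of_nonneg (by linarith)]
      exact inv_lt_one_of_one_lt₀ hP1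
    · rw [Real.norm_of_nonneg (by positivity), div_le_one (by positivity)]
      exact_mod_cast (Finset.card_filter_le _ _).trans (card_sqfreeMonics_le N)
    · have hpow : (Fintype.card K : ℝ) ^ N =
          (Fintype.card K : ℝ) ^ P.1.natDegree * (Fintype.card K : ℝ) ^ (N - P.1.natDegree) := by
        rw [← pow_add, Nat.add_sub_cancel' hN]
      rw [← card_sieve_insert hP hN, normP, hpow, Nat.cast_add]
      field_simp

/-- The limiting proportion, among squarefree monic polynomials of large degree, of those coprime
to `h`. -/
def density (h : K[X]) : ℝ := ∏ P ∈ primeDivs h, (1 - (normP (Fintype.card K) P + 1)⁻¹)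

lemma tendsto_coprimeCount_div {h : K[X]} (hh : h ≠ 0) :
    Tendsto (fun N => (coprimeCount h N : ℝ) / (Fintype.card K : ℝ) ^ N) atTop
      (nhds ((1 - (Fintype.card K : ℝ)⁻¹) * density h)) := by
  simp only [coprimeCount_eq_card_sieve hh]
  exact tendsto_card_sieve_div _

lemma tendsto_sum_coprimeCount_div (n : ℕ) :
    Tendsto (fun N => (if 3 ∣ n then ∑ h ∈ monics K (n / 3), (coprimeCount h N : ℂ) else 0) /
        (Fintype.card K : ℂ) ^ N) atTop
      (nhds ((1 - (Fintype.card K : ℂ)⁻¹) *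
        (if 3 ∣ n then ∑ h ∈ monics K (n / 3), (density h : ℂ) else 0))) := by
  split_ifs
  · simp only [Finset.sum_div, Finset.mul_sum]
    refine tendsto_finsetSum _ fun h hh => ?_
    simpa only [Complex.ofReal_div, Complex.ofReal_mul, Complex.ofReal_sub, Complex.ofReal_inv,
      Complex.ofReal_pow, Complex.ofReal_natCast, Complex.ofReal_one] using
      (tendsto_coprimeCount_div (mem_monics.mp hh).1.ne_zero).ofReal
  · simp only [zero_div, mul_zero, tendsto_const_nhds_iff]

variable {br : K[X] → K[X] → ℂ} {ω : K → ℂ}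

lemma CubicSymbolLaws.tendsto_sum_not_isConstMulCube_div (S : CubicSymbolLaws br ω) (n : ℕ) :
    Tendsto (fun N => (∑ f ∈ monics K n with ¬ IsConstMulCube f, ∑ F ∈ sqfreeMonics K N, br F f) /
      (Fintype.card K : ℂ) ^ N) atTop (nhds 0) := by
  have hq1 : 1 < (Fintype.card K : ℝ) := by exact_mod_cast Fintype.one_lt_card (α := K)
  have hq0 : 0 < (Fintype.card K : ℝ) := by linarith
  set q : ℝ := (Fintype.card K : ℝ) with hq
  have hlim : Tendsto (fun N : ℕ => 2 * q ^ (3 * n / 2 : ℝ) * (q ^ (-(1 / 2) : ℝ)) ^ N) atTop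
      (nhds 0) := by
    simpa only [mul_zero] using (tendsto_pow_atTop_nhds_zero_of_lt_one (by positivity)
      (Real.rpow_lt_one_of_one_lt_of_neg hq1 (by norm_num))).const_mul (2 * q ^ (3 * n / 2 : ℝ))
  refine squeeze_zero_norm (fun N => ?_) hlim
  rw [norm_div, norm_pow, Complex.norm_natCast, div_le_iff₀ (by positivity)]
  refine (S.norm_sum_not_isConstMulCube_le N n).trans_eq ?_
  rw [← hq, ← Real.rpow_natCast, ← Real.rpow_natCast, ← Real.rpow_mul hq0.le, mul_assoc,
    mul_assoc, ← Real.rpow_add hq0, ← Real.rpow_add hq0]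
  congr 2
  ring

lemma CubicSymbolLaws.tendsto_charSum_div (S : CubicSymbolLaws br ω) (n : ℕ) :
    Tendsto (fun N => charSum br N n / (Fintype.card K : ℂ) ^ N) atTop
      (nhds ((1 - (Fintype.card K : ℂ)⁻¹) *
        (if 3 ∣ n then ∑ h ∈ monics K (n / 3), (density h : ℂ) else 0))) := by
  simpa only [S.charSum_eq, add_div, add_zero] using
    (tendsto_sum_coprimeCount_div n).add (S.tendsto_sum_not_isConstMulCube_div n)

end Density

/-! ### The Euler product -/

lemma hasSum_shifted_geometric {x q : ℝ} (hx : 0 ≤ x) (hq : 0 ≤ q) (hqx : q * x < 1) (c : ℝ)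
    (d : ℕ) : HasSum (fun m => x ^ m * (c * if d ≤ m then q ^ (m - d) else 0))
      (c * x ^ d * (1 - q * x)⁻¹) := by
  rw [← hasSum_nat_add_iff' d, Finset.sum_eq_zero, sub_zero]
  · refine ((hasSum_geometric_of_lt_one (mul_nonneg hq hx) hqx).mul_left (c * x ^ d)).congr_fun
      fun m => ?_
    rw [if_pos (by omega), Nat.add_sub_cancel, pow_add, mul_pow]
    ring
  · intro i hi
    rw [if_neg (Finset.mem_range.mp hi).not_ge, mul_zero, mul_zero]

section EulerProduct

variable {K : Type} [Field K]

lemma prod_dvd_iff_subset_primeDivs [Finite K] {h : K[X]} (hh : h ≠ 0)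
    (I : Finset (MonicIrred K)) : ∏ P ∈ I, P.1 ∣ h ↔ I ⊆ primeDivs h := by
  refine ⟨fun hd P hP => (mem_primeDivs hh).mpr ((Finset.dvd_prod_of_mem _ hP).trans hd),
    fun hI => Finset.prod_dvd_of_coprime ?_ fun P hP => (mem_primeDivs hh).mp (hI hP)⟩
  exact fun P _ Q _ hPQ => P.2.2.coprime_iff_not_dvd.mpr (mt MonicIrred.dvd_iff_eq.mp hPQ)

variable [Fintype K]

lemma sum_monics_ite_dvd {D : K[X]} (hD : D.Monic) (m : ℕ) :
    ∑ h ∈ monics K m, (if D ∣ h then (1 : ℝ) else 0) =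
      if D.natDegree ≤ m then (Fintype.card K : ℝ) ^ (m - D.natDegree) else 0 := by
  split_ifs with hm
  · rw [Finset.sum_boole, card_monics_filter_dvd hD hm, Nat.cast_pow]
  · exact sum_monics_of_dvd_eq_zero (not_le.mp hm) _

/-- The coefficient `∏_{P ∈ I} -1/(|P|+1)` of `∏ P ∈ I, P` in the expansion of `density` as a sum
over squarefree divisors. -/
def densityWeight (I : Finset (MonicIrred K)) : ℝ := ∏ P ∈ I, -(normP (Fintype.card K) P + 1)⁻¹

lemma density_eq_sum_powerset (h : K[X]) :
    density h = ∑ I ∈ (primeDivs h).powerset, densityWeight I := by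
  simp only [density, densityWeight, sub_eq_add_neg, Finset.prod_one_add]

lemma prod_neg_inv_mul_pow (I : Finset (MonicIrred K)) (x : ℝ) :
    ∏ P ∈ I, -(normP (Fintype.card K) P + 1)⁻¹ * x ^ P.1.natDegree =
      densityWeight I * x ^ ∑ P ∈ I, P.1.natDegree := by
  rw [Finset.prod_mul_distrib, Finset.prod_pow_eq_pow_sum, densityWeight]

lemma hasSum_density {h : K[X]} (hh : h ≠ 0) :
    HasSum (fun I : Finset (MonicIrred K) =>
      densityWeight I * if ∏ P ∈ I, P.1 ∣ h then (1 : ℝ) else 0) (density h) := by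
  simp only [prod_dvd_iff_subset_primeDivs hh, mul_ite, mul_one, mul_zero]
  rw [density_eq_sum_powerset, ← Finset.sum_congr rfl fun I hI =>
    if_pos (Finset.mem_powerset.mp hI)]
  exact hasSum_sum_of_ne_finset_zero fun I hI => if_neg (mt Finset.mem_powerset.mpr hI)

lemma hasSum_sum_density (m : ℕ) :
    HasSum (fun I : Finset (MonicIrred K) => densityWeight I *
      if ∑ P ∈ I, P.1.natDegree ≤ m then (Fintype.card K : ℝ) ^ (m - ∑ P ∈ I, P.1.natDegree) else 0)
      (∑ h ∈ monics K m, density h) := by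
  have hsum := hasSum_sum (s := monics K m) fun h hh =>
    hasSum_density (mem_monics.mp hh).1.ne_zero
  convert hsum using 2 with I
  rw [← Finset.mul_sum, sum_monics_ite_dvd (monic_prod_of_monic _ _ fun P _ => P.2.1),
    natDegree_prod_of_monic _ _ fun P _ => P.2.1]

lemma card_filter_natDegree_eq_le (u : Finset (MonicIrred K)) (d : ℕ) :
    #{P ∈ u | P.1.natDegree = d} ≤ Fintype.card K ^ d :=
  (Finset.card_le_card_of_injOn Subtype.val
    (fun P hP => mem_monics.mpr ⟨P.2.1, (Finset.mem_filter.mp hP).2⟩)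
    Subtype.val_injective.injOn).trans_eq (card_monics d)

lemma summable_norm_euler_term {x : ℝ} (hx : 0 ≤ x) (hx1 : x < 1) :
    Summable fun P : MonicIrred K =>
      ‖-(normP (Fintype.card K) P + 1)⁻¹ * x ^ P.1.natDegree‖ := by
  have hq0 : 0 < (Fintype.card K : ℝ) := by exact_mod_cast Fintype.card_pos (α := K)
  set q : ℝ := (Fintype.card K : ℝ) with hq
  have hle (P : MonicIrred K) : ‖-(normP (Fintype.card K) P + 1)⁻¹ * x ^ P.1.natDegree‖ ≤
      (q ^ P.1.natDegree)⁻¹ * x ^ P.1.natDegree := by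
    rw [normP, ← hq, norm_mul, norm_neg, norm_inv, Real.norm_of_nonneg (by positivity),
      Real.norm_of_nonneg (by positivity)]
    gcongr
    exact le_add_of_nonneg_right zero_le_one
  refine summable_of_sum_le (c := (1 - x)⁻¹) (fun _ => norm_nonneg _) fun u => ?_
  refine (Finset.sum_le_sum fun P _ => hle P).trans ?_
  rw [← Finset.sum_fiberwise_of_maps_to (t := u.image fun P => P.1.natDegree)
    fun P => Finset.mem_image_of_mem fun P : MonicIrred K => P.1.natDegree]
  refine le_trans (Finset.sum_le_sum fun d _ => ?_) (sum_pow_le_inv_one_sub hx hx1 _)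
  have hcard : (#{P ∈ u | P.1.natDegree = d} : ℝ) ≤ q ^ d := by
    rw [hq]
    exact_mod_cast card_filter_natDegree_eq_le u d
  calc ∑ P ∈ u with P.1.natDegree = d, (q ^ P.1.natDegree)⁻¹ * x ^ P.1.natDegree
      = ∑ P ∈ u with P.1.natDegree = d, (q ^ d)⁻¹ * x ^ d :=
        Finset.sum_congr rfl fun P hP => by rw [(Finset.mem_filter.mp hP).2]
    _ = #{P ∈ u | P.1.natDegree = d} * ((q ^ d)⁻¹ * x ^ d) := by
        rw [Finset.sum_const, nsmul_eq_mul]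
    _ ≤ q ^ d * ((q ^ d)⁻¹ * x ^ d) := by gcongr
    _ = x ^ d := by field_simp

lemma summable_abs_densityWeight_mul_pow {x : ℝ} (hx : 0 ≤ x) (hx1 : x < 1) :
    Summable fun I : Finset (MonicIrred K) =>
      |densityWeight I| * x ^ ∑ P ∈ I, P.1.natDegree := by
  have hprod := summable_finsetProd_of_summable_norm (R := ℝ) (f := fun P : MonicIrred K =>
    ‖-(normP (Fintype.card K) P + 1)⁻¹ * x ^ P.1.natDegree‖)
    (by simpa only [norm_norm] using summable_norm_euler_term hx hx1)
  refine hprod.congr fun I => ?_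
  rw [← norm_prod, prod_neg_inv_mul_pow, norm_mul, Real.norm_eq_abs,
    Real.norm_of_nonneg (by positivity)]

lemma summable_pow_mul_densityWeight {x : ℝ} (hx : 0 ≤ x)
    (hqx : (Fintype.card K : ℝ) * x < 1) :
    Summable (Function.uncurry fun (I : Finset (MonicIrred K)) (m : ℕ) =>
      x ^ m * (densityWeight I * if ∑ P ∈ I, P.1.natDegree ≤ m
        then (Fintype.card K : ℝ) ^ (m - ∑ P ∈ I, P.1.natDegree) else 0)) := by
  have hx1 : x < 1 := (le_mul_of_one_le_left hx
    (by exact_mod_cast Fintype.card_pos (α := K))).trans_lt hqx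
  have hnorm (I : Finset (MonicIrred K)) :=
    hasSum_shifted_geometric hx (Nat.cast_nonneg _) hqx |densityWeight I| (∑ P ∈ I, P.1.natDegree)
  refine Summable.of_norm ?_
  have hterm (I : Finset (MonicIrred K)) (m : ℕ) :
      ‖x ^ m * (densityWeight I * if ∑ P ∈ I, P.1.natDegree ≤ m
        then (Fintype.card K : ℝ) ^ (m - ∑ P ∈ I, P.1.natDegree) else 0)‖ =
      x ^ m * (|densityWeight I| * if ∑ P ∈ I, P.1.natDegree ≤ m
        then (Fintype.card K : ℝ) ^ (m - ∑ P ∈ I, P.1.natDegree) else 0) := by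
    rw [norm_mul, norm_mul, Real.norm_of_nonneg (pow_nonneg hx m), Real.norm_eq_abs,
      Real.norm_of_nonneg (by split_ifs <;> positivity)]
  rw [summable_prod_of_nonneg fun _ => norm_nonneg _]
  simp only [Function.uncurry_apply_pair, hterm]
  refine ⟨fun I => (hnorm I).summable, ?_⟩
  simp only [(hnorm _).tsum_eq]
  exact (summable_abs_densityWeight_mul_pow hx hx1).mul_right _

theorem tsum_density {x : ℝ} (hx : 0 ≤ x) (hqx : (Fintype.card K : ℝ) * x < 1) :
    ∑' m, x ^ m * ∑ h ∈ monics K m, density h = (1 - (Fintype.card K : ℝ) * x)⁻¹ *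
      ∏' P : MonicIrred K, (1 + -(normP (Fintype.card K) P + 1)⁻¹ * x ^ P.1.natDegree) := by
  have hx1 : x < 1 := (le_mul_of_one_le_left hx
    (by exact_mod_cast Fintype.card_pos (α := K))).trans_lt hqx
  have hcomm := (summable_pow_mul_densityWeight (K := K) hx hqx).tsum_comm
  simp only [((hasSum_sum_density _).mul_left _).tsum_eq,
    (hasSum_shifted_geometric hx (Nat.cast_nonneg _) hqx _ _).tsum_eq] at hcomm
  rw [hcomm, tsum_mul_right, mul_comm, tprod_one_add
    (summable_finsetProd_of_summable_norm (summable_norm_euler_term hx hx1))]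
  simp only [prod_neg_inv_mul_pow]

end EulerProduct

/-! ### The average of `L(s, χ)` -/

lemma tsum_ite_three_dvd {E : Type*} [AddCommMonoid E] [TopologicalSpace E] (a : ℕ → E) :
    ∑' n, (if 3 ∣ n then a n else 0) = ∑' m, a (3 * m) := by
  have hinj : Function.Injective fun m : ℕ => 3 * m := mul_right_injective₀ three_ne_zero
  rw [← hinj.tsum_eq]
  · simp only [dvd_mul_right, if_true]
  · intro n hn
    obtain ⟨m, rfl⟩ := not_not.mp fun h : ¬ 3 ∣ n => hn (if_neg h)
    exact ⟨m, rfl⟩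

section Average

variable {K : Type} [Field K] [Fintype K] {br : K[X] → K[X] → ℂ} {ω : K → ℂ}

lemma sumSqfree_eq_sum_sqfreeMonics (N : ℕ) (φ : K[X] → ℂ) :
    sumSqfree N φ = ∑ F ∈ sqfreeMonics K N, φ F := by
  rw [sqfreeMonics, Finset.sum_filter]
  exact sumMonic_eq_sum_monics N fun F => if Squarefree F then φ F else 0

lemma CubicSymbolLaws.sumSqfree_Lval (S : CubicSymbolLaws br ω) {chi : K[X] → K[X] → ℂ}
    (hchi : ∀ F : K[X], F.Monic → chi F = br F) (q : ℕ) (s : ℝ) {N : ℕ} (hN : 0 < N) :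
    sumSqfree N (fun F => Lval q s (chi F)) =
      ∑' n : ℕ, charSum br N n * ((q : ℝ) ^ (-s * (n : ℝ)) : ℝ) := by
  have hL (F : K[X]) (hF : F ∈ sqfreeMonics K N) : Lval q s (chi F) =
      ∑' n : ℕ, (∑ f ∈ monics K n, br F f) * ((q : ℝ) ^ (-s * (n : ℝ)) : ℝ) := by
    simp only [Lval, hchi F (mem_sqfreeMonics.mp hF).1.1, sumMonic_eq_sum_monics]
  rw [sumSqfree_eq_sum_sqfreeMonics, Finset.sum_congr rfl hL, ← Summable.tsum_finsetSum]
  · simp only [charSum, Finset.sum_mul]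
  · intro F hF
    refine summable_of_ne_finset_zero (s := Finset.range N) fun n hn => ?_
    rw [S.sum_monics_eq_zero_of_mem_sqfreeMonics hN (not_lt.mp (mt Finset.mem_range.mpr hn)) hF,
      zero_mul]

lemma Mq_eq_tsum {s : ℝ} (hs : 1 / 3 < s) :
    Mq (Fintype.card K) K s =
      ∑' m, ((Fintype.card K : ℝ) ^ (-3 * s)) ^ m * ∑ h ∈ monics K m, density h := by
  have hq1 : 1 < (Fintype.card K : ℝ) := by exact_mod_cast Fintype.one_lt_card (α := K)
  have hq0 : 0 < (Fintype.card K : ℝ) := by linarith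
  have hmul : (Fintype.card K : ℝ) * (Fintype.card K : ℝ) ^ (-3 * s) =
      (Fintype.card K : ℝ) ^ (1 - 3 * s) := by
    rw [← Real.rpow_one_add' hq0.le (by linarith)]
    ring_nf
  rw [tsum_density (Real.rpow_nonneg hq0.le _), hmul, Mq]
  · congr 2
    ext P
    rw [normP, ← Real.rpow_natCast, ← Real.rpow_natCast, ← Real.rpow_mul hq0.le,
      ← Real.rpow_mul hq0.le, mul_comm (-3 * s)]
    ring
  · rw [hmul]
    exact Real.rpow_lt_one_of_one_lt_of_neg hq1 (by linarith)

lemma ofReal_Mq_eq_tsum {s : ℝ} (hs : 1 / 3 < s) :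
    ((Mq (Fintype.card K) K s : ℝ) : ℂ) = ∑' n : ℕ,
      (if 3 ∣ n then ∑ h ∈ monics K (n / 3), (density h : ℂ) else 0) *
        ((Fintype.card K : ℝ) ^ (-s * (n : ℝ)) : ℝ) := by
  simp only [ite_mul, zero_mul]
  rw [tsum_ite_three_dvd, Mq_eq_tsum hs, Complex.ofReal_tsum]
  refine tsum_congr fun m => ?_
  rw [Nat.mul_div_cancel_left _ three_pos, ← Real.rpow_mul_natCast (Nat.cast_nonneg _), mul_comm,
    Complex.ofReal_mul, Complex.ofReal_sum, Nat.cast_mul, Nat.cast_ofNat,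
    show -3 * s * (m : ℝ) = -s * (3 * m) by ring]

lemma inv_pow_succ_sub_pow {k : Type*} [Field k] {q : k} (hq : q ≠ 0) (n : ℕ) :
    (q ^ (n + 1) - q ^ n)⁻¹ = (1 - q⁻¹)⁻¹ * (q ^ (n + 1))⁻¹ := by
  rw [← mul_inv, sub_mul, one_mul, pow_succ', inv_mul_cancel_left₀ hq]

lemma CubicSymbolLaws.norm_charSum_mul_rpow_le (S : CubicSymbolLaws br ω)
    (hq : 7 ≤ Fintype.card K) {N : ℕ} (hN : N % 3 = 1) (n : ℕ) (s : ℝ) :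
    ‖charSum br N n / (Fintype.card K : ℂ) ^ N * ((Fintype.card K : ℝ) ^ (-s * (n : ℝ)) : ℝ)‖ ≤
      10 * latticeConst (Fintype.card K) * ((Fintype.card K : ℝ) ^ (1 / 3 - s)) ^ n := by
  have hq0 : 0 < (Fintype.card K : ℝ) := by exact_mod_cast Fintype.card_pos (α := K)
  have hcharSum := S.norm_charSum_le hq hN n
  set q : ℝ := (Fintype.card K : ℝ) with hqK
  rw [Real.rpow_add hq0, Real.rpow_natCast] at hcharSum
  have hexp : (q ^ (1 / 3 - s)) ^ n = q ^ ((n : ℝ) / 3) * q ^ (-s * (n : ℝ)) := by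
    rw [← Real.rpow_mul_natCast hq0.le, ← Real.rpow_add hq0]
    ring_nf
  rw [norm_mul, norm_div, norm_pow, Complex.norm_natCast, ← hqK, Complex.norm_real,
    Real.norm_of_nonneg (by positivity), hexp, ← mul_assoc]
  gcongr
  rw [div_le_iff₀ (by positivity)]
  linarith

lemma CubicSymbolLaws.tendsto_tsum_charSum_div (S : CubicSymbolLaws br ω)
    (hq : 7 ≤ Fintype.card K) {s : ℝ} (hs : 1 / 3 < s) :
    Tendsto (fun g : ℕ => ∑' n : ℕ, charSum br (3 * g + 1) n / (Fintype.card K : ℂ) ^ (3 * g + 1) *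
        ((Fintype.card K : ℝ) ^ (-s * (n : ℝ)) : ℝ))
      atTop (nhds ((1 - (Fintype.card K : ℂ)⁻¹) * (Mq (Fintype.card K) K s : ℝ))) := by
  have hq1 : 1 < (Fintype.card K : ℝ) := by exact_mod_cast Fintype.one_lt_card (α := K)
  have hratio : (Fintype.card K : ℝ) ^ (1 / 3 - s) < 1 :=
    Real.rpow_lt_one_of_one_lt_of_neg hq1 (by linarith)
  have hdegree : Tendsto (fun g : ℕ => 3 * g + 1) atTop atTop :=
    tendsto_atTop_mono (fun g => show g ≤ 3 * g + 1 by omega) tendsto_id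
  rw [ofReal_Mq_eq_tsum hs, ← tsum_mul_left]
  refine tendsto_tsum_of_dominated_convergence
    ((summable_geometric_of_lt_one (by positivity) hratio).mul_left _) (fun n => ?_)
    (Eventually.of_forall fun g n => S.norm_charSum_mul_rpow_le hq (by omega) n s)
  rw [← mul_assoc]
  exact ((S.tendsto_charSum_div n).comp hdegree).mul_const _

theorem CubicSymbolLaws.tendsto_average (S : CubicSymbolLaws br ω) (hq : 7 ≤ Fintype.card K)
    {s : ℝ} (hs : 1 / 3 < s) :
    Tendsto (fun g : ℕ => ((Fintype.card K : ℂ) ^ (3 * g + 1) - (Fintype.card K : ℂ) ^ (3 * g))⁻¹ *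
        ∑' n : ℕ, charSum br (3 * g + 1) n * ((Fintype.card K : ℝ) ^ (-s * (n : ℝ)) : ℝ))
      atTop (nhds ((Mq (Fintype.card K) K s : ℝ) : ℂ)) := by
  have hq0 : (Fintype.card K : ℂ) ≠ 0 := by exact_mod_cast Fintype.card_ne_zero (α := K)
  have hq1 : (Fintype.card K : ℂ)⁻¹ ≠ 1 :=
    inv_ne_one.mpr (by exact_mod_cast (Fintype.one_lt_card (α := K)).ne')
  have hlimit := (S.tendsto_tsum_charSum_div hq hs).const_mul (1 - (Fintype.card K : ℂ)⁻¹)⁻¹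
  rw [inv_mul_cancel_left₀ (sub_ne_zero.mpr hq1.symm)] at hlimit
  refine hlimit.congr fun g => ?_
  rw [inv_pow_succ_sub_pow hq0, mul_assoc, ← tsum_mul_left (a := ((Fintype.card K : ℂ) ^ _)⁻¹)]
  refine congrArg _ (tsum_congr fun n => ?_)
  rw [div_mul_eq_mul_div, div_eq_inv_mul]

end Average

theorem expected_value_cubic_L_asymptotic_general
    (q : ℕ) (Fq : Type) [Field Fq] [Fintype Fq] (hq6 : q % 6 = 1) (hcard : Fintype.card Fq = q)
    (Ω : Fq → ℂ) (chi : Polynomial Fq → Polynomial Fq → ℂ) (hchi : IsCubicSymbol q Ω chi)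
    (s : ℝ) (hs : 1 / 3 < s) :
    Tendsto
      (fun g : ℕ =>
        ((q : ℂ) ^ (3 * g + 1) - (q : ℂ) ^ (3 * g))⁻¹ *
          sumSqfree (3 * g + 1) (fun F => Lval q s (chi F)))
      atTop (nhds ((Mq q Fq s : ℝ) : ℂ)) := by
  have S := hchi.cubicSymbolLaws hcard (by omega)
  subst hcard
  have hq7 : 7 ≤ Fintype.card Fq := by
    have := Fintype.one_lt_card (α := Fq)
    omega
  have hmonic (F : Fq[X]) (hF : F.Monic) : chi F = normalizedSymbol chi F :=
    funext fun g => (normalizedSymbol_of_monic chi hF g).symm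
  refine (S.tendsto_average hq7 hs).congr fun g => ?_
  rw [S.sumSqfree_Lval hmonic _ s (Nat.succ_pos _)]

/-- **Corollary 1.2 (first part).** For fixed `q ≡ 1 (mod 6)` a prime power and fixed
`1/3 < s < 1`, the expected value of `L(s,χ)` over the family `𝔥(3g)` tends to `M_q(s)`
as `g → ∞`. -/
theorem expected_value_cubic_L_asymptotic
    (q : ℕ) (Fq : Type) [Field Fq] [Fintype Fq]
    (hq : IsPrimePow q) (hq6 : q % 6 = 1) (hcard : Fintype.card Fq = q)
    (Ω : Fq → ℂ) (chi : Polynomial Fq → Polynomial Fq → ℂ)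
    (hchi : IsCubicSymbol q Ω chi)
    (s : ℝ) (hs : 1 / 3 < s) (hs1 : s < 1) :
    Filter.Tendsto
      (fun g : ℕ =>
        ((q : ℂ) ^ (3 * g + 1) - (q : ℂ) ^ (3 * g))⁻¹ *
          sumSqfree (3 * g + 1) (fun F => Lval q s (chi F)))
      Filter.atTop (nhds ((Mq q Fq s : ℝ) : ℂ)) :=
  expected_value_cubic_L_asymptotic_general q Fq hq6 hcard Ω chi hchi s hs
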